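/- arXiv:2401.14335 — 9 statements merged into one kernel-verified Lean document; each statement's English description precedes it below -/
import Mathlib

section
/- Let 1 ≤ q₁ < q₂ < ⋯ be a strictly increasing sequence of positive integers with partial sums Sₙ = q₁ + ⋯ + qₙ, and for each n let fₙ(x) = (1+x^{q₁})⋯(1+x^{qₙ}) = Σ_{m=0}^{Sₙ} γ_m(n) x^m. If there exist positive integers k₀ and n₀ such that 2k₀ + q_{n+1} ≤ Sₙ for all n ≥ n₀, and γ_m(n₀) ≥ 1 for all m with k₀ ≤ m ≤ S_{n₀} − k₀, then every integer m ≥ k₀ can be written as a sum of one or more distinct members of the sequence {q₁, q₂, …}. -/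
open Polynomial Finset

/-- **Theorem 2 (generating polynomials).**
Let `1 ≤ q 0 < q 1 < ⋯` be a strictly increasing sequence of positive integers with
partial sums `S n = ∑ i < n, q i`, and let
`f n = ∏ i < n, (1 + X ^ q i) = ∑ m, γ m n • X ^ m`.
If there are positive integers `k₀`, `n₀` with `2k₀ + q (n+1) ≤ S n` for all `n ≥ n₀`
(in `0`-indexed form: `2k₀ + q n ≤ S n`), and `γ m n₀ ≥ 1` for all `k₀ ≤ m ≤ S n₀ - k₀`,
then every integer `m ≥ k₀` is a sum of one or more distinct members of the sequence. -/
theorem stmt0 (q : ℕ → ℕ) (hpos : 1 ≤ q 0) (hmono : StrictMono q)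
    (k₀ n₀ : ℕ) (hk₀ : 0 < k₀) (hn₀ : 0 < n₀)
    (hS : ∀ n, n₀ ≤ n → 2 * k₀ + q n ≤ ∑ i ∈ Finset.range n, q i)
    (hγ : ∀ m, k₀ ≤ m → m + k₀ ≤ ∑ i ∈ Finset.range n₀, q i →
      1 ≤ (∏ i ∈ Finset.range n₀, (1 + (X : Polynomial ℕ) ^ q i)).coeff m) :
    ∀ m, k₀ ≤ m → ∃ T : Finset ℕ, T.Nonempty ∧ m = ∑ i ∈ T, q i := by
  have key : ∀ n, n₀ ≤ n → ∀ m, k₀ ≤ m → m + k₀ ≤ ∑ i ∈ Finset.range n, q i →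
      ∃ T : Finset ℕ, T ⊆ Finset.range n ∧ m = ∑ i ∈ T, q i := by
    intro n hn
    induction n, hn using Nat.le_induction with
    | base =>
      intro m h1 h2
      have h := hγ m h1 h2
      rw [Finset.prod_one_add, Polynomial.finsetSum_coeff] at h
      obtain ⟨T, hT, hne⟩ := Finset.exists_ne_zero_of_sum_ne_zero (by omega :
        (∑ t ∈ (Finset.range n₀).powerset, (∏ i ∈ t, (X : Polynomial ℕ) ^ q i).coeff m) ≠ 0)
      refine ⟨T, Finset.mem_powerset.1 hT, ?_⟩
      rw [Finset.prod_pow_eq_pow_sum, Polynomial.coeff_X_pow] at hne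
      by_contra hc
      simp [hc] at hne
    | succ n hn ih =>
      intro m h1 h2
      rw [Finset.sum_range_succ] at h2
      have h3 := hS n hn
      by_cases hm : m + k₀ ≤ ∑ i ∈ Finset.range n, q i
      · obtain ⟨T, hT, e⟩ := ih m h1 hm
        exact ⟨T, hT.trans (Finset.range_subset_range.2 (Nat.le_succ n)), e⟩
      · obtain ⟨T, hT, e⟩ := ih (m - q n) (by omega) (by omega)
        have hnT : n ∉ T := fun h => by simpa using hT h
        refine ⟨insert n T, ?_, ?_⟩
        · rw [Finset.range_add_one]
          exact Finset.insert_subset_insert n hT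
        · rw [Finset.sum_insert hnT]
          omega
  intro m hm
  have h1 := hS (m + k₀ + n₀) (by omega)
  have h2 := hmono.le_apply (x := m + k₀ + n₀)
  obtain ⟨T, -, e⟩ := key (m + k₀ + n₀) (by omega) m hm (by omega)
  refine ⟨T, ?_, e⟩
  rw [Finset.nonempty_iff_ne_empty]
  rintro rfl
  simp at e
  omega
end

section
/- Let 1 ≤ q₁ < q₂ < ⋯ be a strictly increasing sequence of positive integers satisfying q_{n+1} < 2qₙ for all n, and let k₀ ≥ 0 be a given integer. Then Sₙ − q_{n+1} ≥ 2k₀ for every n ≥ q₁ + 2k₀ + 1, where Sₙ = q₁ + ⋯ + qₙ. -/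
/-- **Lemma 3.**
Let `1 ≤ q 0 < q 1 < ⋯` be a strictly increasing sequence of positive integers with
`q (n+1) < 2 * q n` for all `n`, and let `k₀ ≥ 0` be a given integer.  Then
`S n - q (n+1) ≥ 2 * k₀` for every `n ≥ q 0 + 2 * k₀ + 1`, where
`S n = ∑ i < n, q i` (so in `0`-indexed form the term following `S n` is `q n`). -/
theorem stmt1 (q : ℕ → ℕ) (hpos : 1 ≤ q 0) (hmono : StrictMono q)
    (hgrowth : ∀ n, q (n + 1) < 2 * q n) (k₀ : ℕ) :
    ∀ n, q 0 + 2 * k₀ + 1 ≤ n →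
      (2 * k₀ : ℤ) ≤ (∑ i ∈ Finset.range n, q i : ℕ) - (q n : ℤ) := by
  have key : ∀ n, n + q n ≤ (∑ i ∈ Finset.range n, q i) + q 0 := by
    intro n
    induction n with
    | zero => simp
    | succ k ih =>
      rw [Finset.sum_range_succ]
      have := hgrowth k
      omega
  intro n hn
  have := key n
  omega
end

section
/- For every real (equivalently, integer) x ≥ 7, the half-open interval (x, 2x] contains a prime number congruent to 1 modulo 4. -/
open Finset ArithmeticFunction

namespace Bert

noncomputable def ch (n : ℕ) : ℝ := if n % 4 = 1 then 1 else if n % 4 = 3 then -1 else 0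

lemma ch_mul (a b : ℕ) : ch (a * b) = ch a * ch b := by
  unfold ch
  rw [Nat.mul_mod]
  have ha : a % 4 < 4 := Nat.mod_lt _ (by norm_num)
  have hb : b % 4 < 4 := Nat.mod_lt _ (by norm_num)
  generalize a % 4 = r at *
  generalize b % 4 = s at *
  interval_cases r <;> interval_cases s <;> norm_num

lemma key (c : ℕ → ℝ) (hc : ∀ a b, c (a * b) = c a * c b) (N : ℕ) :
    ∑ n ∈ Ioc 0 N, c n * Real.log n =
      ∑ d ∈ Ioc 0 N, (c d * vonMangoldt d) * ∑ e ∈ Ioc 0 (N / d), c e := by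
  let f : ArithmeticFunction ℝ := ⟨fun n => c n * vonMangoldt n, by simp⟩
  let g : ArithmeticFunction ℝ := ⟨fun n => if n = 0 then 0 else c n, by simp⟩
  have h := sum_Ioc_mul_eq_sum_sum f g N
  have h1 : ∑ n ∈ Ioc 0 N, (f * g) n = ∑ n ∈ Ioc 0 N, c n * Real.log n := by
    refine sum_congr rfl fun n hn => ?_
    rw [mul_apply, ← vonMangoldt_sum, mul_sum,
      ← Nat.sum_divisorsAntidiagonal (fun i _ => c n * vonMangoldt i)]
    refine sum_congr rfl fun x hx => ?_
    rw [Nat.mem_divisorsAntidiagonal] at hx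
    have h2 : x.2 ≠ 0 := by
      intro h0
      apply hx.2
      rw [← hx.1, h0, mul_zero]
    change c x.1 * vonMangoldt x.1 * (if x.2 = 0 then 0 else c x.2) = _
    rw [if_neg h2, ← hx.1, hc]
    ring
  rw [← h1, h]
  refine sum_congr rfl fun d hd => ?_
  congr 1
  refine sum_congr rfl fun e he => ?_
  change (if e = 0 then 0 else c e) = c e
  rw [if_neg]
  have := (mem_Ioc.1 he).1
  omega

lemma keyk (c : ℕ → ℝ) (hc : ∀ a b, c (a * b) = c a * c b) (N k : ℕ) :
    ∑ n ∈ Ioc 0 (N / k), c n * Real.log n =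
      ∑ d ∈ Ioc 0 N, (c d * vonMangoldt d) * ∑ e ∈ Ioc 0 (N / d / k), c e := by
  rw [key c hc]
  have hs : Ioc 0 (N / k) ⊆ Ioc 0 N := Ioc_subset_Ioc_right (Nat.div_le_self _ _)
  rw [← sum_subset hs]
  · refine sum_congr rfl fun d hd => ?_
    rw [Nat.div_div_eq_div_mul, Nat.div_div_eq_div_mul, mul_comm k d]
  · intro d hd hd'
    have : N / d / k = 0 := by
      rw [Nat.div_div_eq_div_mul, mul_comm, ← Nat.div_div_eq_div_mul]
      apply Nat.div_eq_of_lt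
      simp only [mem_Ioc] at hd hd'
      omega
    rw [this]
    simp

def S (n : ℕ) : ℤ := if n % 4 = 1 ∨ n % 4 = 2 then 1 else 0

lemma sum_ch (n : ℕ) : ∑ e ∈ Ioc 0 n, ch e = (S n : ℝ) := by
  induction n with
  | zero => simp [S]
  | succ n ih =>
    rw [sum_Ioc_succ_top (by omega), ih]
    unfold S ch
    have : n % 4 = 0 ∨ n % 4 = 1 ∨ n % 4 = 2 ∨ n % 4 = 3 := by omega
    rcases this with h | h | h | h <;> simp [Nat.add_mod, h]

noncomputable def T (n : ℕ) : ℝ := ∑ k ∈ Ioc 0 n, Real.log k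
noncomputable def L (n : ℕ) : ℝ := ∑ k ∈ Ioc 0 n, ch k * Real.log k

lemma T_eq (N k : ℕ) : T (N / k) = ∑ d ∈ Ioc 0 N, vonMangoldt d * ((N / d / k : ℕ) : ℝ) := by
  have := keyk (fun _ => 1) (by simp) N k
  simpa [T] using this

lemma L_eq (N k : ℕ) : L (N / k) =
    ∑ d ∈ Ioc 0 N, vonMangoldt d * (ch d * ((S (N / d / k) : ℤ) : ℝ)) := by
  rw [L, keyk ch ch_mul N k]
  refine sum_congr rfl fun d hd => ?_
  rw [sum_ch]
  ring

def P (n : ℕ) : ℤ := n - 2 * (n / 2 : ℕ) - (n / 3 : ℕ) - (n / 5 : ℕ) + (n / 30 : ℕ) + (n / 4 : ℕ)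
  + (n / 6 : ℕ) + (n / 10 : ℕ) - (n / 60 : ℕ)

def Q (n : ℕ) : ℤ := S n - S (n / 2) + S (n / 3) - S (n / 6)

def B (n : ℕ) : ℤ := (if 5 ≤ n then 1 else 0) + (if 11 ≤ n then 1 else 0)

lemma P_mod (n : ℕ) : P n = P (n % 120) := by
  unfold P
  omega

lemma Q_mod (n : ℕ) : Q n = Q (n % 120) := by
  have h1 : n % 4 = n % 120 % 4 := by omega
  have h2 : n / 2 % 4 = n % 120 / 2 % 4 := by omega
  have h3 : n / 3 % 4 = n % 120 / 3 % 4 := by omega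
  have h6 : n / 6 % 4 = n % 120 / 6 % 4 := by omega
  unfold Q S
  rw [h1, h2, h3, h6]

lemma PQ_small : ∀ r < 120, (2 ≤ r → r < 11 → P r + Q r ≤ B r ∧ P r - Q r ≤ B r) ∧
    P r + Q r ≤ 2 ∧ P r - Q r ≤ 2 := by
  decide +kernel

lemma PQ (n : ℕ) (hn : 2 ≤ n) : P n + Q n ≤ B n ∧ P n - Q n ≤ B n := by
  have h := PQ_small (n % 120) (Nat.mod_lt _ (by norm_num))
  by_cases h11 : n < 11
  · rw [Nat.mod_eq_of_lt (by omega)] at h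
    exact h.1 hn h11
  · have hB : B n = 2 := by
      unfold B
      rw [if_pos (by omega), if_pos (by omega)]; norm_num
    rw [P_mod, Q_mod, hB]
    exact h.2

lemma L_bd (n : ℕ) : (n % 4 = 1 ∨ n % 4 = 2 → 0 ≤ L n ∧ L n ≤ Real.log n) ∧
    (n % 4 = 3 ∨ n % 4 = 0 → -Real.log n ≤ L n ∧ L n ≤ 0) := by
  induction n with
  | zero => simp [L]
  | succ n ih =>
    have hL : L (n + 1) = L n + ch (n + 1) * Real.log (n + 1 : ℕ) := by
      unfold L
      rw [sum_Ioc_succ_top (by omega)]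
    have hm : Real.log n ≤ Real.log (n + 1 : ℕ) := by
      rcases Nat.eq_zero_or_pos n with h | h
      · simp [h]
      · exact Real.log_le_log (by exact_mod_cast h) (by push_cast; linarith)
    have : n % 4 = 0 ∨ n % 4 = 1 ∨ n % 4 = 2 ∨ n % 4 = 3 := by omega
    rw [hL]
    unfold ch
    have h' : (n + 1) % 4 = (n % 4 + 1) % 4 := by omega
    rcases this with h | h | h | h <;> rw [h] at h' <;> simp only [h', h] at ih ⊢ <;>
      norm_num at ih hm ⊢ <;> constructor <;> linarith

lemma L_abs (n : ℕ) : |L n| ≤ Real.log n := by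
  have h0 : 0 ≤ Real.log n := Real.log_natCast_nonneg n
  have h := L_bd n
  have : (n % 4 = 1 ∨ n % 4 = 2) ∨ (n % 4 = 3 ∨ n % 4 = 0) := by omega
  rw [abs_le]
  rcases this with h1 | h1
  · have := h.1 h1; constructor <;> linarith
  · have := h.2 h1; constructor <;> linarith

lemma L_abs' (N k : ℕ) (hN : k ≤ N) (hk : 0 < k) : |L (N / k)| ≤ Real.log N := by
  refine (L_abs _).trans (Real.log_le_log ?_ ?_)
  · exact_mod_cast Nat.div_pos hN hk
  · exact_mod_cast Nat.div_le_self _ _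

lemma T_bd (n : ℕ) (hn : 1 ≤ n) : n * Real.log n - n ≤ T n ∧
    T n ≤ n * Real.log n - n + 1 + Real.log n := by
  induction n, hn using Nat.le_induction with
  | base => simp [T]
  | succ n hn ih =>
    have hT : T (n + 1) = T n + Real.log (n + 1 : ℕ) := by
      unfold T
      rw [sum_Ioc_succ_top (by omega)]
    have hn0 : (1 : ℝ) ≤ n := by exact_mod_cast hn
    have e1 : Real.log ((n + 1) / n) ≤ (n + 1 : ℝ) / n - 1 :=
      Real.log_le_sub_one_of_pos (by positivity)
    have e2 : Real.log (n / (n + 1)) ≤ (n : ℝ) / (n + 1) - 1 :=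
      Real.log_le_sub_one_of_pos (by positivity)
    rw [Real.log_div (by positivity) (by positivity)] at e1 e2
    have f1 : n * (Real.log (n + 1) - Real.log n) ≤ 1 := by
      calc _ ≤ n * ((n + 1 : ℝ) / n - 1) := by gcongr
        _ = 1 := by field_simp; ring
    have f2 : (n + 1) * (Real.log n - Real.log (n + 1)) ≤ -1 := by
      calc _ ≤ (n + 1) * ((n : ℝ) / (n + 1) - 1) := by gcongr
        _ = -1 := by field_simp; ring
    rw [hT]
    push_cast
    constructor <;> nlinarith

lemma T_real (N k : ℕ) (hN : k ≤ N) (hk : 0 < k) :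
    (N / k : ℝ) * (Real.log N - Real.log k) - N / k - Real.log N ≤ T (N / k) ∧
    T (N / k) ≤ (N / k : ℝ) * (Real.log N - Real.log k) - N / k + 1 + Real.log N := by
  have hn : 1 ≤ N / k := Nat.div_pos hN hk
  have h := T_bd (N / k) hn
  have hk0 : (0 : ℝ) < k := by exact_mod_cast hk
  have hN0 : (0 : ℝ) < N := by exact_mod_cast (hk.trans_le hN)
  have hle : ((N / k : ℕ) : ℝ) ≤ N / k := Nat.cast_div_le
  have hlt : (N / k : ℝ) < (N / k : ℕ) + 1 := by
    rw [div_lt_iff₀ hk0]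
    have := Nat.lt_div_mul_add hk (a := N)
    have h2 : N < (N / k + 1) * k := by linarith
    exact_mod_cast h2
  rw [← Real.log_div (by positivity) (by positivity)]
  have hyN : Real.log (N / k : ℝ) ≤ Real.log N := by
    apply Real.log_le_log (by positivity)
    apply div_le_self hN0.le
    exact_mod_cast hk
  generalize (N / k : ℝ) = y at *
  have hn1 : (1 : ℝ) ≤ (N / k : ℕ) := by exact_mod_cast hn
  generalize ((N / k : ℕ) : ℝ) = n at *
  have hn0 : 0 < n := by linarith
  have hy0 : 0 < y := by linarith
  have e1 := Real.log_le_sub_one_of_pos (div_pos hy0 hn0)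
  have e2 := Real.log_le_sub_one_of_pos (div_pos hn0 hy0)
  rw [Real.log_div (by positivity) (by positivity)] at e1 e2
  have f1 : n * (Real.log y - Real.log n) ≤ y - n := by
    calc _ ≤ n * (y / n - 1) := by gcongr
      _ = _ := by field_simp
  have f2 : y * (Real.log n - Real.log y) ≤ n - y := by
    calc _ ≤ y * (n / y - 1) := by gcongr
      _ = _ := by field_simp
  have hl0 : 0 ≤ Real.log n := Real.log_nonneg hn1
  have hl1 : Real.log n ≤ Real.log y := Real.log_le_log hn0 hle
  constructor
  · nlinarith
  · nlinarith

lemma pointwise (d n : ℕ) (hn : 2 ≤ n) : (P n : ℝ) + ch d * (Q n : ℝ) ≤ (B n : ℝ) := by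
  obtain ⟨h1, h2⟩ := PQ n hn
  have h1' : (P n : ℝ) + Q n ≤ B n := by exact_mod_cast h1
  have h2' : (P n : ℝ) - Q n ≤ B n := by exact_mod_cast h2
  unfold ch
  split_ifs <;> linarith

lemma psi_as (N k : ℕ) (hk : 0 < k) : Chebyshev.psi ((N / k : ℕ) : ℝ) =
    ∑ d ∈ Ioc 0 N, vonMangoldt d * (if k ≤ N / d then 1 else 0) := by
  unfold Chebyshev.psi
  rw [Nat.floor_natCast]
  have hs : Ioc 0 (N / k) ⊆ Ioc 0 N := Ioc_subset_Ioc_right (Nat.div_le_self _ _)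
  rw [← sum_subset hs]
  · refine sum_congr rfl fun d hd => ?_
    rw [mem_Ioc] at hd
    rw [if_pos, mul_one]
    rw [Nat.le_div_iff_mul_le hd.1]
    have := (Nat.le_div_iff_mul_le hk).1 hd.2
    linarith
  · intro d hd hd'
    rw [mem_Ioc] at hd hd'
    rw [if_neg, mul_zero]
    intro h
    apply hd'
    refine ⟨hd.1, ?_⟩
    rw [Nat.le_div_iff_mul_le hd.1] at h
    rw [Nat.le_div_iff_mul_le hk]
    linarith

lemma upper (N : ℕ) (hN : 4 ≤ N) (hno : ∀ p : ℕ, p.Prime → p % 4 = 1 → N / p ≠ 1) :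
    ∑ d ∈ Ioc 0 N, vonMangoldt d * ((P (N / d) : ℝ) + ch d * (Q (N / d) : ℝ)) ≤
      Chebyshev.psi ((N / 5 : ℕ) : ℝ) + Chebyshev.psi ((N / 11 : ℕ) : ℝ) +
        2 * (Chebyshev.psi N - Chebyshev.theta N) := by
  rw [Chebyshev.psi_sub_theta_eq_sum_not_prime, psi_as N 5 (by norm_num),
    psi_as N 11 (by norm_num), Nat.floor_natCast, sum_filter, mul_sum, ← sum_add_distrib,
    ← sum_add_distrib]
  refine sum_le_sum fun d hd => ?_
  rw [mem_Ioc] at hd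
  have hL : 0 ≤ vonMangoldt d := vonMangoldt_nonneg
  have hn1 : 1 ≤ N / d := Nat.div_pos hd.2 hd.1
  have hrest : (0 : ℝ) ≤ 2 * (if ¬ d.Prime then vonMangoldt d else 0) := by
    split_ifs <;> positivity
  rw [← mul_add]
  have hB : ((if 5 ≤ N / d then 1 else 0) + (if 11 ≤ N / d then 1 else 0) : ℝ) = (B (N / d) : ℝ) := by
    unfold B
    push_cast
    rfl
  rw [hB]
  rcases Nat.lt_or_ge 1 (N / d) with h2 | h2
  · have := mul_le_mul_of_nonneg_left (pointwise d (N / d) h2) hL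
    linarith
  · have h1 : N / d = 1 := by omega
    have hP1 : P 1 = 1 := by decide
    have hQ1 : Q 1 = 1 := by decide
    have hB1 : B 1 = 0 := by decide
    rw [h1, hP1, hQ1, hB1]
    by_cases hp : d.Prime
    · have h41 : d % 4 ≠ 1 := fun h => hno d hp h h1
      have h43 : d % 4 = 3 := by
        rcases hp.eq_two_or_odd with h | h
        · subst h
          omega
        · omega
      rw [if_neg (by simpa using hp)]
      unfold ch
      rw [if_neg h41, if_pos h43]
      norm_num
    · rw [if_pos hp]
      have : ch d ≤ 1 := by
        unfold ch
        split_ifs <;> norm_num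
      push_cast
      nlinarith

lemma sum_eq (N : ℕ) :
    ∑ d ∈ Ioc 0 N, vonMangoldt d * ((P (N / d) : ℝ) + ch d * (Q (N / d) : ℝ)) =
      T (N / 1) - 2 * T (N / 2) - T (N / 3) - T (N / 5) + T (N / 30) + T (N / 4) + T (N / 6)
        + T (N / 10) - T (N / 60) + (L (N / 1) - L (N / 2) + L (N / 3) - L (N / 6)) := by
  simp only [T_eq, L_eq, mul_sum, ← sum_add_distrib, ← sum_sub_distrib]
  refine sum_congr rfl fun d hd => ?_
  unfold P Q
  rw [Nat.div_one]
  simp only [Int.cast_add, Int.cast_sub, Int.cast_mul, Int.cast_natCast, Int.cast_ofNat]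
  ring

lemma lower (N : ℕ) (hN : 60 ≤ N) :
    (N : ℝ) * (7 / 30 * Real.log 2 + 3 / 20 * Real.log 3 + 1 / 12 * Real.log 5)
      - 14 * Real.log N - 10 ≤
    ∑ d ∈ Ioc 0 N, vonMangoldt d * ((P (N / d) : ℝ) + ch d * (Q (N / d) : ℝ)) := by
  rw [sum_eq]
  have t1 := T_real N 1 (by omega) (by norm_num)
  have t2 := T_real N 2 (by omega) (by norm_num)
  have t3 := T_real N 3 (by omega) (by norm_num)
  have t4 := T_real N 4 (by omega) (by norm_num)
  have t5 := T_real N 5 (by omega) (by norm_num)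
  have t6 := T_real N 6 (by omega) (by norm_num)
  have t10 := T_real N 10 (by omega) (by norm_num)
  have t30 := T_real N 30 (by omega) (by norm_num)
  have t60 := T_real N 60 (by omega) (by norm_num)
  have l1 := abs_le.1 (L_abs' N 1 (by omega) (by norm_num))
  have l2 := abs_le.1 (L_abs' N 2 (by omega) (by norm_num))
  have l3 := abs_le.1 (L_abs' N 3 (by omega) (by norm_num))
  have l6 := abs_le.1 (L_abs' N 6 (by omega) (by norm_num))
  have h4 : Real.log 4 = 2 * Real.log 2 := by
    rw [show (4 : ℝ) = 2 ^ 2 by norm_num, Real.log_pow]; norm_num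
  have h6 : Real.log 6 = Real.log 2 + Real.log 3 := by
    rw [← Real.log_mul (by norm_num) (by norm_num)]; norm_num
  have h10 : Real.log 10 = Real.log 2 + Real.log 5 := by
    rw [← Real.log_mul (by norm_num) (by norm_num)]; norm_num
  have h30 : Real.log 30 = Real.log 2 + Real.log 3 + Real.log 5 := by
    rw [← Real.log_mul (by norm_num) (by norm_num), ← Real.log_mul (by norm_num) (by norm_num)]
    norm_num
  have h60 : Real.log 60 = 2 * Real.log 2 + Real.log 3 + Real.log 5 := by
    rw [← h4, ← Real.log_mul (by norm_num) (by norm_num), ← Real.log_mul (by norm_num) (by norm_num)]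
    norm_num
  push_cast at t1 t2 t3 t4 t5 t6 t10 t30 t60
  rw [Real.log_one] at t1
  rw [h4] at t4
  rw [h6] at t6
  rw [h10] at t10
  rw [h30] at t30
  rw [h60] at t60
  obtain ⟨t1, -⟩ := t1
  obtain ⟨-, t2⟩ := t2
  obtain ⟨-, t3⟩ := t3
  obtain ⟨t4, -⟩ := t4
  obtain ⟨-, t5⟩ := t5
  obtain ⟨t6, -⟩ := t6
  obtain ⟨t10, -⟩ := t10
  obtain ⟨t30, -⟩ := t30
  obtain ⟨-, t60⟩ := t60
  have hl : 0 ≤ Real.log N := Real.log_natCast_nonneg N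
  ring_nf at t1 t2 t3 t4 t5 t6 t10 t30 t60 ⊢
  simp only [Nat.div_one] at *
  linarith

lemma psi_up (N k : ℕ) (hN : k ≤ N) (hk : 0 < k) : Chebyshev.psi ((N / k : ℕ) : ℝ) ≤
    2 * Real.log 2 * (N / k) + 2 * √N * Real.log N := by
  have hn : 1 ≤ N / k := Nat.div_pos hN hk
  have hn1 : (1 : ℝ) ≤ (N / k : ℕ) := by exact_mod_cast hn
  have h := Chebyshev.psi_le hn1
  have h4 : Real.log 4 = 2 * Real.log 2 := by
    rw [show (4 : ℝ) = 2 ^ 2 by norm_num, Real.log_pow]; norm_num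
  rw [h4] at h
  have hle : ((N / k : ℕ) : ℝ) ≤ N / k := Nat.cast_div_le
  have hle' : ((N / k : ℕ) : ℝ) ≤ N := by exact_mod_cast Nat.div_le_self _ _
  have h2 : 0 < Real.log 2 := Real.log_pos (by norm_num)
  have hl0 : 0 ≤ Real.log ((N / k : ℕ) : ℝ) := Real.log_nonneg hn1
  refine h.trans ?_
  gcongr

lemma large (N : ℕ) (hN : 2 ^ 24 ≤ N) : ∃ p : ℕ, p.Prime ∧ p % 4 = 1 ∧ N / p = 1 := by
  by_contra! hno
  have hu := upper N (by omega) hno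
  have hlo := lower N (by omega)
  have p5 := psi_up N 5 (by omega) (by norm_num)
  have p11 := psi_up N 11 (by omega) (by norm_num)
  have hNr : (2 : ℝ) ^ 24 ≤ N := by exact_mod_cast hN
  have pt := Chebyshev.psi_sub_theta_le (x := N) (by linarith)
  have h2 := Real.log_two_gt_d9
  have h2' := Real.log_two_lt_d9
  have h3 : 19 * Real.log 2 ≤ 12 * Real.log 3 := by
    have := Real.log_le_log (by norm_num) (show (2 : ℝ) ^ 19 ≤ 3 ^ 12 by norm_num)
    rw [Real.log_pow, Real.log_pow] at this
    exact_mod_cast this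
  have h5 : 16 * Real.log 2 ≤ 7 * Real.log 5 := by
    have := Real.log_le_log (by norm_num) (show (2 : ℝ) ^ 16 ≤ 5 ^ 7 by norm_num)
    rw [Real.log_pow, Real.log_pow] at this
    exact_mod_cast this
  push_cast at p5 p11
  set s := √(N : ℝ) with hs
  have hss : s * s = N := Real.mul_self_sqrt (by positivity)
  have hs0 : 2 ^ 12 ≤ s := by
    apply Real.le_sqrt_of_sq_le
    linarith
  have hlog : Real.log N ≤ s * (17 / 4096) := by
    have e := Real.log_le_sub_one_of_pos (show 0 < s / 2 ^ 12 by positivity)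
    rw [Real.log_div (by positivity) (by positivity), Real.log_pow] at e
    have : Real.log N = 2 * Real.log s := by
      rw [← hss, Real.log_mul (by positivity) (by positivity)]; ring
    rw [this]
    push_cast at e
    linarith
  have hsl : s * Real.log N ≤ N * (17 / 4096) := by
    rw [← hss]
    nlinarith
  have hsN : s * 4096 ≤ N := by
    rw [← hss]
    nlinarith
  have hm : (N : ℝ) * (Real.log 2 * (661 / 1000)) ≤
      N * (7 / 30 * Real.log 2 + 3 / 20 * Real.log 3 + 1 / 12 * Real.log 5) := by
    gcongr
    linarith
  have hm2 : (N : ℝ) * 0.69 ≤ N * Real.log 2 := by gcongr; linarith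
  linarith

lemma nat_large (m : ℕ) (hm : 2 ^ 23 ≤ m) : ∃ p : ℕ, p.Prime ∧ p % 4 = 1 ∧ m < p ∧ p ≤ 2 * m := by
  obtain ⟨p, hp, h4, h1⟩ := large (2 * m) (by omega)
  refine ⟨p, hp, h4, ?_, ?_⟩
  · have := Nat.lt_mul_div_succ (2 * m) hp.pos
    rw [h1] at this
    omega
  · by_contra h
    rw [Nat.div_eq_of_lt (by omega)] at h1
    omega

lemma step (m q : ℕ) (p : ℕ) (hp : p.Prime) (h4 : p % 4 = 1) (hq : p ≤ 2 * q) (hm : q ≤ m)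
    (h : p ≤ m → ∃ p : ℕ, p.Prime ∧ p % 4 = 1 ∧ m < p ∧ p ≤ 2 * m) :
    ∃ p : ℕ, p.Prime ∧ p % 4 = 1 ∧ m < p ∧ p ≤ 2 * m := by
  rcases Nat.lt_or_ge m p with h1 | h1
  · exact ⟨p, hp, h4, h1, by omega⟩
  · exact h h1

lemma nat_all (m : ℕ) (hm : 7 ≤ m) : ∃ p : ℕ, p.Prime ∧ p % 4 = 1 ∧ m < p ∧ p ≤ 2 * m := by
  refine step m 7 13 (by norm_num) (by norm_num) (by norm_num) hm fun hm => ?_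
  refine step m 13 17 (by norm_num) (by norm_num) (by norm_num) hm fun hm => ?_
  refine step m 17 29 (by norm_num) (by norm_num) (by norm_num) hm fun hm => ?_
  refine step m 29 53 (by norm_num) (by norm_num) (by norm_num) hm fun hm => ?_
  refine step m 53 101 (by norm_num) (by norm_num) (by norm_num) hm fun hm => ?_
  refine step m 101 197 (by norm_num) (by norm_num) (by norm_num) hm fun hm => ?_
  refine step m 197 389 (by norm_num) (by norm_num) (by norm_num) hm fun hm => ?_
  refine step m 389 773 (by norm_num) (by norm_num) (by norm_num) hm fun hm => ?_
  refine step m 773 1493 (by norm_num) (by norm_num) (by norm_num) hm fun hm => ?_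
  refine step m 1493 2969 (by norm_num) (by norm_num) (by norm_num) hm fun hm => ?_
  refine step m 2969 5897 (by norm_num) (by norm_num) (by norm_num) hm fun hm => ?_
  refine step m 5897 11789 (by norm_num) (by norm_num) (by norm_num) hm fun hm => ?_
  refine step m 11789 23561 (by norm_num) (by norm_num) (by norm_num) hm fun hm => ?_
  refine step m 23561 47093 (by norm_num) (by norm_num) (by norm_num) hm fun hm => ?_
  refine step m 47093 94169 (by norm_num) (by norm_num) (by norm_num) hm fun hm => ?_
  refine step m 94169 188333 (by norm_num) (by norm_num) (by norm_num) hm fun hm => ?_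
  refine step m 188333 376657 (by norm_num) (by norm_num) (by norm_num) hm fun hm => ?_
  refine step m 376657 753257 (by norm_num) (by norm_num) (by norm_num) hm fun hm => ?_
  refine step m 753257 1506509 (by norm_num) (by norm_num) (by norm_num) hm fun hm => ?_
  refine step m 1506509 3012949 (by norm_num) (by norm_num) (by norm_num) hm fun hm => ?_
  refine step m 3012949 6025889 (by norm_num) (by norm_num) (by norm_num) hm fun hm => ?_
  refine step m 6025889 12051769 (by norm_num) (by norm_num) (by norm_num) hm fun hm => ?_
  exact nat_large m (by omega)

end Bert

/-- **Lemma 1 (first half).**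
For every real `x ≥ 7`, the half-open interval `(x, 2x]` contains a prime number
congruent to `1` modulo `4`. -/
theorem stmt2 (x : ℝ) (hx : 7 ≤ x) :
    ∃ p : ℕ, p.Prime ∧ p % 4 = 1 ∧ x < p ∧ (p : ℝ) ≤ 2 * x := by
  obtain ⟨p, hp, h4, h1, h2⟩ := Bert.nat_all ⌊x⌋₊ (Nat.le_floor (by exact_mod_cast hx))
  refine ⟨p, hp, h4, (Nat.floor_lt (by linarith)).1 h1, ?_⟩
  have h3 : (⌊x⌋₊ : ℝ) ≤ x := Nat.floor_le (by linarith)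
  have h5 : (p : ℝ) ≤ 2 * (⌊x⌋₊ : ℝ) := by exact_mod_cast h2
  linarith
end

section
/- For every real (equivalently, integer) x ≥ 7, the half-open interval (x, 2x] contains a prime number congruent to 3 modulo 4. -/
theorem aux_w3 (q : ℕ) : (q+3)/4 + q/8 + q/12 + q/68 ≤ q/4 + (q/2+3)/4 + (q/3+1)/4 + (q/17+3)/4 + (if q = 1 ∨ 73 ≤ q then 1 else 0) := by
  have key : ∀ r < 408, (r+3)/4 + r/8 + r/12 + r/68 ≤ r/4 + (r/2+3)/4 + (r/3+1)/4 + (r/17+3)/4 + (if r = 1 ∨ 73 ≤ r then 1 else 0) := by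
    decide +kernel
  obtain ⟨t, r, hr, rfl⟩ : ∃ t r, r < 408 ∧ q = 408 * t + r := ⟨q / 408, q % 408, by omega, by omega⟩
  have h := key r hr
  clear key
  revert h
  have e1 : (408*t+r+3)/4 = 102*t + (r+3)/4 := by clear * -; omega
  have e2 : (408*t+r)/8 = 51*t + r/8 := by clear * -; omega
  have e3 : (408*t+r)/12 = 34*t + r/12 := by clear * -; omega
  have e4 : (408*t+r)/68 = 6*t + r/68 := by clear * -; omega
  have e5 : (408*t+r)/4 = 102*t + r/4 := by clear * -; omega
  have e6 : ((408*t+r)/2+3)/4 = 51*t + (r/2+3)/4 := by clear * -; omega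
  have e7 : ((408*t+r)/3+1)/4 = 34*t + (r/3+1)/4 := by clear * -; omega
  have e8 : ((408*t+r)/17+3)/4 = 6*t + (r/17+3)/4 := by clear * -; omega
  rw [e1, e2, e3, e4, e5, e6, e7, e8]
  have hi : (if r = 1 ∨ 73 ≤ r then 1 else 0) ≤ (if 408*t+r = 1 ∨ 73 ≤ 408*t+r then 1 else 0) := by
    clear * -
    split_ifs <;> omega
  clear e1 e2 e3 e4 e5 e6 e7 e8
  intro h
  generalize (r+3)/4 = x1 at *
  generalize r/8 = x2 at *
  generalize r/12 = x3 at *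
  generalize r/68 = x4 at *
  generalize r/4 = x5 at *
  generalize (r/2+3)/4 = x6 at *
  generalize (r/3+1)/4 = x7 at *
  generalize (r/17+3)/4 = x8 at *
  generalize (if r = 1 ∨ 73 ≤ r then 1 else 0) = a at *
  generalize (if 408*t+r = 1 ∨ 73 ≤ 408*t+r then 1 else 0) = b at *
  omega

theorem aux_w1 (q : ℕ) : (q+1)/4 + q/8 + q/12 + q/68 ≤ q/4 + (q/2+1)/4 + (q/3+3)/4 + (q/17+1)/4 := by
  have key : ∀ r < 408, (r+1)/4 + r/8 + r/12 + r/68 ≤ r/4 + (r/2+1)/4 + (r/3+3)/4 + (r/17+1)/4 := by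
    decide +kernel
  obtain ⟨t, r, hr, rfl⟩ : ∃ t r, r < 408 ∧ q = 408 * t + r := ⟨q / 408, q % 408, by omega, by omega⟩
  have h := key r hr
  clear key
  revert h
  have e1 : (408*t+r+1)/4 = 102*t + (r+1)/4 := by clear * -; omega
  have e2 : (408*t+r)/8 = 51*t + r/8 := by clear * -; omega
  have e3 : (408*t+r)/12 = 34*t + r/12 := by clear * -; omega
  have e4 : (408*t+r)/68 = 6*t + r/68 := by clear * -; omega
  have e5 : (408*t+r)/4 = 102*t + r/4 := by clear * -; omega
  have e6 : ((408*t+r)/2+1)/4 = 51*t + (r/2+1)/4 := by clear * -; omega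
  have e7 : ((408*t+r)/3+3)/4 = 34*t + (r/3+3)/4 := by clear * -; omega
  have e8 : ((408*t+r)/17+1)/4 = 6*t + (r/17+1)/4 := by clear * -; omega
  rw [e1, e2, e3, e4, e5, e6, e7, e8]
  clear e1 e2 e3 e4 e5 e6 e7 e8
  intro h
  generalize (r+1)/4 = x1 at *
  generalize r/8 = x2 at *
  generalize r/12 = x3 at *
  generalize r/68 = x4 at *
  generalize r/4 = x5 at *
  generalize (r/2+1)/4 = x6 at *
  generalize (r/3+3)/4 = x7 at *
  generalize (r/17+1)/4 = x8 at *
  omega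

theorem aux_w0 (q : ℕ) : q/8 + q/12 + q/68 ≤ q/4 := by
  have e1 : q/8 = q/4/2 := by rw [Nat.div_div_eq_div_mul]
  have e2 : q/12 = q/4/3 := by rw [Nat.div_div_eq_div_mul]
  have e3 : q/68 = q/4/17 := by rw [Nat.div_div_eq_div_mul]
  rw [e1, e2, e3]
  clear e1 e2 e3
  generalize q/4 = t
  omega

/-- sum of logs over a residue class -/
noncomputable def AA (a M : ℕ) : ℝ := ∑ n ∈ Finset.range (M+1), if n % 4 = a then Real.log n else 0
noncomputable def FF (M : ℕ) : ℝ := ∑ n ∈ Finset.range (M+1), Real.log n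

theorem decomp (P : ℕ → Prop) [DecidablePred P] (N M : ℕ) (h : M ≤ N) :
    ∑ n ∈ Finset.range (M+1), (if P n then Real.log n else 0) =
    ∑ d ∈ Finset.Ioc 0 N, ArithmeticFunction.vonMangoldt d * ((Finset.Ioc 0 (M/d)).filter (fun m => P (d*m))).card := by
  have h1 : ∑ n ∈ Finset.range (M+1), (if P n then Real.log n else 0) =
      ∑ n ∈ Finset.Ioc 0 M, ∑ d ∈ Finset.Ioc 0 N, if d ∣ n ∧ P n then ArithmeticFunction.vonMangoldt d else 0 := by
    rw [Finset.sum_range_succ']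
    simp only [Nat.cast_zero, Real.log_zero, ite_self, add_zero]
    rw [Finset.range_eq_Ico, Finset.sum_Ico_add' (fun n => if P n then Real.log n else 0) 0 M 1]
    have : Finset.Ico (0+1) (M+1) = Finset.Ioc 0 M := by ext; simp; omega
    rw [this]
    refine Finset.sum_congr rfl fun n hn => ?_
    rw [Finset.mem_Ioc] at hn
    by_cases hP : P n
    · simp only [hP, and_true, if_true]
      rw [← ArithmeticFunction.vonMangoldt_sum, ← Finset.sum_filter]
      refine Finset.sum_congr ?_ fun _ _ => rfl
      ext d
      simp only [Nat.mem_divisors, Finset.mem_filter, Finset.mem_Ioc]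
      constructor
      · rintro ⟨h1, h2⟩
        exact ⟨⟨Nat.pos_of_dvd_of_pos h1 hn.1, (Nat.le_of_dvd hn.1 h1).trans (hn.2.trans h)⟩, h1⟩
      · rintro ⟨_, h2⟩
        exact ⟨h2, by omega⟩
    · simp [hP]
  rw [h1, Finset.sum_comm]
  refine Finset.sum_congr rfl fun d hd => ?_
  rw [Finset.mem_Ioc] at hd
  rw [← Finset.sum_filter, Finset.sum_const, nsmul_eq_mul, mul_comm]
  congr 2
  symm
  refine Finset.card_bij (fun m _ => d * m) ?_ ?_ ?_
  · intro m hm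
    simp only [Finset.mem_filter, Finset.mem_Ioc] at hm ⊢
    refine ⟨⟨Nat.mul_pos hd.1 hm.1.1, ?_⟩, dvd_mul_right _ _, hm.2⟩
    rw [mul_comm]; exact (Nat.le_div_iff_mul_le hd.1).1 hm.1.2
  · intro a _ b _ hab
    exact Nat.eq_of_mul_eq_mul_left hd.1 hab
  · intro n hn
    simp only [Finset.mem_filter, Finset.mem_Ioc] at hn
    obtain ⟨⟨h3, h4⟩, ⟨m, rfl⟩, h5⟩ := hn
    refine ⟨m, ?_, rfl⟩
    simp only [Finset.mem_filter, Finset.mem_Ioc]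
    refine ⟨⟨Nat.pos_of_mul_pos_left h3, ?_⟩, h5⟩
    rw [Nat.le_div_iff_mul_le hd.1, mul_comm]; exact h4

theorem cnt (a : ℕ) (ha : 1 ≤ a) (ha' : a ≤ 3) (K : ℕ) :
    ((Finset.Ioc 0 K).filter (fun m => m % 4 = a)).card = (K + 4 - a) / 4 := by
  induction K with
  | zero => simp; omega
  | succ K ih =>
    rw [← Finset.insert_Ioc_right_eq_Ioc_add_one (by omega), Finset.filter_insert]
    split_ifs with h
    · rw [Finset.card_insert_of_notMem (by simp), ih]; omega
    · rw [ih]; omega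

/-- the coefficients -/
def cA (a d K : ℕ) : ℕ := ((Finset.Ioc 0 K).filter (fun m => (d * m) % 4 = a)).card

theorem cA_1 (a d K : ℕ) (ha : 1 ≤ a) (ha' : a ≤ 3) (hd : d % 4 = 1) : cA a d K = (K+4-a)/4 := by
  rw [← cnt a ha ha', cA]
  congr 1
  refine Finset.filter_congr fun m _ => ?_
  rw [Nat.mul_mod, hd]; omega

theorem cA_3 (a d K : ℕ) (ha : a = 1 ∨ a = 3) (hd : d % 4 = 3) : cA a d K = (K+a)/4 := by
  have := cnt (4-a) (by omega) (by omega) K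
  rw [show K + 4 - (4-a) = K + a by omega] at this
  rw [← this, cA]
  congr 1
  refine Finset.filter_congr fun m _ => ?_
  rw [Nat.mul_mod, hd]; omega

theorem cA_even (a d K : ℕ) (ha : a = 1 ∨ a = 3) (hd : d % 2 = 0) : cA a d K = 0 := by
  rw [cA, Finset.card_eq_zero, Finset.filter_eq_empty_iff]
  intro m _ h
  have : (d * m) % 2 = 0 := by rw [Nat.mul_mod, hd]; simp
  omega

theorem AA_decomp (a N M : ℕ) (h : M ≤ N) : AA a M = ∑ d ∈ Finset.Ioc 0 N, ArithmeticFunction.vonMangoldt d * cA a d (M/d) :=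
  decomp (fun n => n % 4 = a) N M h

theorem FF_decomp (N M : ℕ) (h : M ≤ N) : FF M = ∑ d ∈ Finset.Ioc 0 N, ArithmeticFunction.vonMangoldt d * ((M/d : ℕ) : ℝ) := by
  have := decomp (fun n => True) N M h
  simpa [FF] using this

noncomputable def EE (N : ℕ) : ℝ := AA 3 N - FF (N/4) - (AA 3 (N/2) - FF (N/8)) - (AA 1 (N/3) - FF (N/12))
  - (AA 3 (N/17) - FF (N/68))

theorem EE_le (N : ℕ) : EE N ≤ ∑ d ∈ Finset.Ioc 0 N, ArithmeticFunction.vonMangoldt d *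
    (if d % 4 = 3 ∧ (N/d = 1 ∨ 73 ≤ N / d) then 1 else 0) := by
  rw [EE, AA_decomp 3 N N le_rfl, AA_decomp 3 N (N/2) (Nat.div_le_self _ _), AA_decomp 1 N (N/3) (Nat.div_le_self _ _),
    AA_decomp 3 N (N/17) (Nat.div_le_self _ _), FF_decomp N (N/4) (Nat.div_le_self _ _), FF_decomp N (N/8) (Nat.div_le_self _ _),
    FF_decomp N (N/12) (Nat.div_le_self _ _), FF_decomp N (N/68) (Nat.div_le_self _ _)]
  simp only [← Finset.sum_sub_distrib, ← mul_sub]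
  refine Finset.sum_le_sum fun d hd => ?_
  refine mul_le_mul_of_nonneg_left ?_ ArithmeticFunction.vonMangoldt_nonneg
  simp only [Nat.div_right_comm N _ d]
  generalize N / d = q
  have key : cA 3 d q + q/8 + q/12 + q/68 ≤ q/4 + cA 3 d (q/2) + cA 1 d (q/3) + cA 3 d (q/17) +
     (if d % 4 = 3 ∧ (q = 1 ∨ 73 ≤ q) then 1 else 0) := by
    rcases (show d % 2 = 0 ∨ d % 4 = 1 ∨ d % 4 = 3 by omega) with h | h | h
    · rw [cA_even _ _ _ (by simp) h, cA_even _ _ _ (by simp) h, cA_even _ _ _ (by simp) h, cA_even _ _ _ (by simp) h]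
      have := aux_w0 q
      simp only [Nat.zero_add, Nat.add_zero]
      exact this.trans (Nat.le_add_right _ _)
    · simp only [cA_1 3 _ _ (by norm_num) (by norm_num) h, cA_1 1 _ _ (by norm_num) (by norm_num) h]
      exact (aux_w1 q).trans (Nat.le_add_right _ _)
    · simp only [cA_3 _ _ _ (Or.inl rfl) h, cA_3 _ _ _ (Or.inr rfl) h, h, true_and]
      exact aux_w3 q
  have key' : ((cA 3 d q + q/8 + q/12 + q/68 : ℕ) : ℝ) ≤ (q/4 + cA 3 d (q/2) + cA 1 d (q/3) + cA 3 d (q/17) +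
     (if d % 4 = 3 ∧ (q = 1 ∨ 73 ≤ q) then 1 else 0) : ℕ) := by exact_mod_cast key
  push_cast [-Nat.cast_div_charZero] at key'
  linarith

theorem AA_four (a n : ℕ) (ha : 1 ≤ a) (ha' : a ≤ 3) : AA a (4*n) = ∑ k ∈ Finset.range n, Real.log (4*k+a) := by
  induction n with
  | zero => simp [AA]
  | succ n ih =>
    rw [Finset.sum_range_succ, ← ih, AA, AA, show 4*(n+1)+1 = 4*n+1+1+1+1+1 by ring]
    simp only [Finset.sum_range_succ _ (4*n+1+1+1+1), Finset.sum_range_succ _ (4*n+1+1+1), Finset.sum_range_succ _ (4*n+1+1), Finset.sum_range_succ _ (4*n+1)]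
    interval_cases a <;> simp [Nat.add_mod, add_assoc]

theorem FF_eq (n : ℕ) : FF n = ∑ k ∈ Finset.range n, Real.log (k+1) := by
  rw [FF, Finset.sum_range_succ']; simp

theorem AA_mono (a M M' : ℕ) (h : M ≤ M') : AA a M ≤ AA a M' := by
  refine Finset.sum_le_sum_of_subset_of_nonneg (by intro x; simp; omega) fun i _ _ => ?_
  split_ifs
  · exact Real.log_natCast_nonneg i
  · exact le_rfl

theorem AA_lower (M : ℕ) (hM : 4 ≤ M) : (M/4 : ℕ) * Real.log 4 - Real.log M - 1 ≤ AA 3 M - FF (M/4) := by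
  have h := AA_mono 3 (4*(M/4)) M (by omega)
  rw [AA_four 3 _ (by norm_num) (by norm_num)] at h
  have hlog : Real.log (M/4 : ℕ) ≤ Real.log M := Real.log_le_log (by norm_cast; omega) (by norm_cast; omega)
  generalize hn : M / 4 = n at *
  obtain ⟨n, rfl⟩ : ∃ m, n = m + 1 := ⟨n - 1, by omega⟩
  rw [FF_eq, Finset.sum_range_succ]
  rw [Finset.sum_range_succ'] at h
  have h2 : ∑ k ∈ Finset.range n, (Real.log 4 + Real.log (k+1)) ≤ ∑ k ∈ Finset.range n, Real.log (4 * ((k+1:ℕ):ℝ) + (3:ℕ)) := by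
    refine Finset.sum_le_sum fun k _ => ?_
    rw [← Real.log_mul (by norm_num) (by positivity)]
    refine Real.log_le_log (by positivity) ?_
    push_cast; linarith
  rw [Finset.sum_add_distrib, Finset.sum_const, nsmul_eq_mul, Finset.card_range] at h2
  push_cast at *
  have h3 : Real.log 4 ≤ 1 + Real.log 3 := by
    have : Real.log 4 = Real.log 3 + Real.log (4/3) := by rw [← Real.log_mul] <;> norm_num
    have h' := Real.log_le_sub_one_of_pos (show (0:ℝ) < 4/3 by norm_num)
    linarith
  norm_num at h
  linarith

theorem AA_upper (a M : ℕ) (ha : 1 ≤ a) (ha' : a ≤ 3) (hM : 1 ≤ M) :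
    AA a M - FF (M/4) ≤ (M/4 : ℕ) * Real.log 4 + Real.log M := by
  have h : AA a M ≤ AA a (4*(M/4)) + Real.log M := by
    have hl0 : 0 ≤ Real.log M := Real.log_natCast_nonneg M
    obtain ⟨n, r, hr, rfl⟩ : ∃ n r, r < 4 ∧ M = 4 * n + r := ⟨M / 4, M % 4, by omega, by omega⟩
    rw [show (4*n+r)/4 = n by omega]
    have hl : ∀ b, 1 ≤ b → b ≤ r → Real.log (4*n+b) ≤ Real.log (4*n+r:ℕ) := by
      intro b hb hbr
      have hb1 : (1:ℝ) ≤ b := by exact_mod_cast hb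
      have hb2 : (b:ℝ) ≤ r := by exact_mod_cast hbr
      push_cast
      exact Real.log_le_log (by positivity) (by linarith)
    have h1 := hl 1
    have h2 := hl 2
    have h3 := hl 3
    clear hl
    unfold AA
    interval_cases r <;> simp only [Finset.sum_range_succ _ (4*n+1), Finset.sum_range_succ _ (4*n+2), Finset.sum_range_succ _ (4*n+3), Nat.add_zero, show 4*n+3+1 = (4*n+1+1+1)+1 by ring, show 4*n+2+1 = (4*n+1+1)+1 by ring, Finset.sum_range_succ _ (4*n+1+1), Finset.sum_range_succ _ (4*n+1+1+1)] <;> interval_cases a <;> simp [Nat.add_mod, add_assoc] at * <;> norm_num at * <;> linarith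
  rw [AA_four a _ ha ha'] at h
  rw [FF_eq]
  have h2 : ∑ k ∈ Finset.range (M/4), Real.log (4 * (k:ℝ) + a) ≤ ∑ k ∈ Finset.range (M/4), (Real.log 4 + Real.log (k+1)) := by
    refine Finset.sum_le_sum fun k _ => ?_
    have ha3 : (a:ℝ) ≤ 3 := by exact_mod_cast ha'
    have ha1 : (1:ℝ) ≤ a := by exact_mod_cast ha
    rw [← Real.log_mul (by norm_num) (by positivity)]
    refine Real.log_le_log (by positivity) ?_
    linarith
  rw [Finset.sum_add_distrib, Finset.sum_const, nsmul_eq_mul, Finset.card_range] at h2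
  linarith

theorem EE_ge (N : ℕ) (hN : 100 ≤ N) :
    Real.log 4 * (11/408 * N - 3/4) - 4 * Real.log N - 1 ≤ EE N := by
  have h1 := AA_lower N (by omega)
  have h2 := AA_upper 3 (N/2) (by norm_num) (by norm_num) (by omega)
  have h3 := AA_upper 1 (N/3) (by norm_num) (by norm_num) (by omega)
  have h4 := AA_upper 3 (N/17) (by norm_num) (by norm_num) (by omega)
  rw [Nat.div_div_eq_div_mul] at h2 h3 h4
  norm_num only at h2 h3 h4
  have hl : ∀ k, 0 < N / k → Real.log (N/k : ℕ) ≤ Real.log N := fun k hk =>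
    Real.log_le_log (by exact_mod_cast hk) (by exact_mod_cast Nat.div_le_self N k)
  have l2 := hl 2 (by omega)
  have l3 := hl 3 (by omega)
  have l4 := hl 17 (by omega)
  have g1 : ((N:ℝ) - 3) / 4 ≤ (N/4 : ℕ) := by
    have : N ≤ 4 * (N/4) + 3 := by omega
    have : (N:ℝ) ≤ 4 * (N/4 : ℕ) + 3 := by exact_mod_cast this
    linarith
  have g2 : ((N/8 : ℕ) : ℝ) ≤ N / 8 := Nat.cast_div_le
  have g3 : ((N/12 : ℕ) : ℝ) ≤ N / 12 := Nat.cast_div_le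
  have g4 : ((N/68 : ℕ) : ℝ) ≤ N / 68 := Nat.cast_div_le
  have hp : 0 ≤ Real.log 4 := Real.log_nonneg (by norm_num)
  have g : (11/408 * (N:ℝ) - 3/4) ≤ (N/4 : ℕ) - (N/8 : ℕ) - (N/12 : ℕ) - (N/68 : ℕ) := by linarith
  have := mul_le_mul_of_nonneg_left g hp
  unfold EE
  linarith

theorem sum_split (N : ℕ) (hno : ∀ p : ℕ, p.Prime → p % 4 = 3 → p ≤ N → 2 * p ≤ N) :
    EE N ≤ (Chebyshev.psi N - Chebyshev.theta N) + Chebyshev.psi (N/73 : ℕ) := by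
  refine (EE_le N).trans ?_
  rw [Chebyshev.psi_sub_theta_eq_sum_not_prime, Chebyshev.psi, Nat.floor_natCast, Nat.floor_natCast, Finset.sum_filter]
  have : Finset.Ioc 0 (N/73) = (Finset.Ioc 0 N).filter (fun d => d ≤ N/73) := by
    ext d; simp only [Finset.mem_Ioc, Finset.mem_filter]; omega
  rw [this, Finset.sum_filter, ← Finset.sum_add_distrib]
  refine Finset.sum_le_sum fun d hd => ?_
  rw [Finset.mem_Ioc] at hd
  have h0 : 0 ≤ ArithmeticFunction.vonMangoldt d := ArithmeticFunction.vonMangoldt_nonneg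
  by_cases hc : d % 4 = 3 ∧ (N/d = 1 ∨ 73 ≤ N / d)
  · rw [if_pos hc, mul_one]
    rcases hc.2 with h | h
    · have hnp : ¬ d.Prime := by
        intro hp
        have := hno d hp hc.1 hd.2
        have : 2 ≤ N / d := (Nat.le_div_iff_mul_le hd.1).2 this
        omega
      rw [if_pos hnp]
      split_ifs <;> linarith
    · have : d ≤ N / 73 := by
        rw [Nat.le_div_iff_mul_le hd.1] at h
        omega
      rw [if_pos this]
      split_ifs <;> linarith
  · rw [if_neg hc, mul_zero]
    split_ifs <;> linarith

theorem main_large (N : ℕ) (hN : 100000000 ≤ N) :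
    ∃ p : ℕ, p.Prime ∧ p % 4 = 3 ∧ p ≤ N ∧ N < 2 * p := by
  by_contra hcon
  have h1 := sum_split N (fun p hp h3 hle => by
    by_contra h; exact hcon ⟨p, hp, h3, hle, by omega⟩)
  have h2 := EE_ge N (by omega)
  have hNr : (100000000:ℝ) ≤ N := by exact_mod_cast hN
  have h3 := Chebyshev.psi_sub_theta_le (x := (N:ℝ)) (by linarith)
  have h4 : Chebyshev.psi (N/73 : ℕ) ≤ Chebyshev.psi ((N:ℝ)/73) := Chebyshev.psi_mono (by exact_mod_cast Nat.cast_div_le)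
  have h5 := Chebyshev.psi_le (x := (N:ℝ)/73) (by linarith)
  have h6 : √((N:ℝ)/73) ≤ √N / 8 := by
    rw [Real.sqrt_le_left (by positivity), div_pow, Real.sq_sqrt (by positivity)]
    linarith
  have h7 : Real.log ((N:ℝ)/73) ≤ Real.log N := Real.log_le_log (by positivity) (by linarith)
  have h70 : 0 ≤ Real.log ((N:ℝ)/73) := Real.log_nonneg (by linarith)
  have h8 : √((N:ℝ)/73) * Real.log ((N:ℝ)/73) ≤ √N / 8 * Real.log N :=
    mul_le_mul h6 h7 h70 (by positivity)
  obtain ⟨s, hs⟩ : ∃ s, s = √(N:ℝ) := ⟨_, rfl⟩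
  have hsq : (N:ℝ) = s ^ 2 := by rw [hs, Real.sq_sqrt (by positivity)]
  have hs4 : 10000 ≤ s := by
    rw [hs]; apply Real.le_sqrt_of_sq_le; linarith
  have hlog : Real.log N = 2 * Real.log s := by rw [hsq, Real.log_pow]; norm_num
  have hls : Real.log s ≤ s / 8192 + 8.1 := by
    have e : Real.log s = Real.log (s/8192) + 13 * Real.log 2 := by
      rw [show (13:ℝ) * Real.log 2 = Real.log (2^13) by rw [Real.log_pow]; norm_num, ← Real.log_mul (by positivity) (by positivity)]
      congr 1; ring
    have := Real.log_le_sub_one_of_pos (show 0 < s/8192 by positivity)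
    have := Real.log_two_lt_d9
    linarith
  have hl4 : Real.log 4 = 2 * Real.log 2 := by
    rw [show (4:ℝ) = 2^2 by norm_num, Real.log_pow]; norm_num
  have l2a := Real.log_two_gt_d9
  have l2b := Real.log_two_lt_d9
  rw [← hs] at h3 h8
  have hA : Real.log 4 * ((11/408 - 1/73) * N - 3/4) ≤ 9/4 * s * Real.log N + 4 * Real.log N + 1 := by
    linarith
  rw [hlog, hl4, hsq] at hA
  have hB : s * Real.log s ≤ s * (s / 8192 + 8.1) := mul_le_mul_of_nonneg_left hls (by linarith)
  have hC : 0 ≤ (11/408 - 1/73) * s^2 - 3/4 := by nlinarith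
  have hD : 1.386 * ((11/408 - 1/73) * s^2 - 3/4) ≤ 2 * Real.log 2 * ((11/408 - 1/73) * s^2 - 3/4) :=
    mul_le_mul_of_nonneg_right (by linarith) hC
  nlinarith

theorem stepp (x : ℝ) (a p : ℕ) (h : (a:ℝ) ≤ x) (hp : p.Prime) (h3 : p % 4 = 3) (hle : p ≤ 2 * a)
    (hx : ¬ ∃ p : ℕ, p.Prime ∧ p % 4 = 3 ∧ x < p ∧ (p : ℝ) ≤ 2 * x) : (p:ℝ) ≤ x := by
  by_contra hc
  refine hx ⟨p, hp, h3, not_le.1 hc, ?_⟩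
  have : (p:ℝ) ≤ 2 * a := by exact_mod_cast hle
  linarith

/-- **Lemma 1 (second half).**
For every real `x ≥ 7`, the half-open interval `(x, 2x]` contains a prime number
congruent to `3` modulo `4`. -/
theorem stmt3 (x : ℝ) (hx : 7 ≤ x) :
    ∃ p : ℕ, p.Prime ∧ p % 4 = 3 ∧ x < p ∧ (p : ℝ) ≤ 2 * x := by
  by_contra hcon
  have h : ((7:ℕ):ℝ) ≤ x := by exact_mod_cast hx
  replace h := stepp x _ 11 h (by norm_num) (by norm_num) (by norm_num) hcon
  replace h := stepp x _ 19 h (by norm_num) (by norm_num) (by norm_num) hcon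
  replace h := stepp x _ 31 h (by norm_num) (by norm_num) (by norm_num) hcon
  replace h := stepp x _ 59 h (by norm_num) (by norm_num) (by norm_num) hcon
  replace h := stepp x _ 107 h (by norm_num) (by norm_num) (by norm_num) hcon
  replace h := stepp x _ 211 h (by norm_num) (by norm_num) (by norm_num) hcon
  replace h := stepp x _ 419 h (by norm_num) (by norm_num) (by norm_num) hcon
  replace h := stepp x _ 827 h (by norm_num) (by norm_num) (by norm_num) hcon
  replace h := stepp x _ 1627 h (by norm_num) (by norm_num) (by norm_num) hcon
  replace h := stepp x _ 3251 h (by norm_num) (by norm_num) (by norm_num) hcon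
  replace h := stepp x _ 6491 h (by norm_num) (by norm_num) (by norm_num) hcon
  replace h := stepp x _ 12979 h (by norm_num) (by norm_num) (by norm_num) hcon
  replace h := stepp x _ 25951 h (by norm_num) (by norm_num) (by norm_num) hcon
  replace h := stepp x _ 51899 h (by norm_num) (by norm_num) (by norm_num) hcon
  replace h := stepp x _ 103787 h (by norm_num) (by norm_num) (by norm_num) hcon
  replace h := stepp x _ 207563 h (by norm_num) (by norm_num) (by norm_num) hcon
  replace h := stepp x _ 415111 h (by norm_num) (by norm_num) (by norm_num) hcon
  replace h := stepp x _ 830191 h (by norm_num) (by norm_num) (by norm_num) hcon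
  replace h := stepp x _ 1660367 h (by norm_num) (by norm_num) (by norm_num) hcon
  replace h := stepp x _ 3320699 h (by norm_num) (by norm_num) (by norm_num) hcon
  replace h := stepp x _ 6641387 h (by norm_num) (by norm_num) (by norm_num) hcon
  replace h := stepp x _ 13282747 h (by norm_num) (by norm_num) (by norm_num) hcon
  replace h := stepp x _ 26565491 h (by norm_num) (by norm_num) (by norm_num) hcon
  replace h := stepp x _ 53130971 h (by norm_num) (by norm_num) (by norm_num) hcon
  obtain ⟨p, hp, h3, hle, hlt⟩ := main_large ⌊2 * x⌋₊ (Nat.le_floor (by push_cast at h ⊢; linarith))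
  refine hcon ⟨p, hp, h3, ?_, ?_⟩
  · have := (Nat.floor_lt (by linarith)).1 hlt
    push_cast at this
    linarith
  · exact (Nat.le_floor_iff (by linarith)).1 hle
end

section
/- For every n ≥ 10, one has S_{4,1}(n) − q_{4,1}(n+1) ≥ 244, where q_{4,1}(1) < q_{4,1}(2) < ⋯ is the increasing enumeration of all primes congruent to 1 modulo 4 and S_{4,1}(n) = q_{4,1}(1) + ⋯ + q_{4,1}(n). -/
/-- `q41 k` is the `(k+1)`-st prime congruent to `1` modulo `4`, i.e. the increasing
enumeration `q41 0 = 5, q41 1 = 13, …` of the set `𝒫(4,1)` of primes `≡ 1 (mod 4)`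
(this set is infinite by Dirichlet's theorem, so `Nat.nth` is its enumeration). -/
noncomputable def q41 : ℕ → ℕ := Nat.nth (fun p => p.Prime ∧ p % 4 = 1)

/-- `S41 n` is the sum of the first `n` primes congruent to `1` modulo `4`. -/
noncomputable def S41 (n : ℕ) : ℕ := ∑ i ∈ Finset.range n, q41 i

/-- character mod 4 as a real function -/
noncomputable def ch (n : ℕ) : ℝ := ((ZMod.χ₄ (n : ZMod 4) : ℤ) : ℝ)

theorem ch_eq (n : ℕ) : ch n = if n % 2 = 0 then 0 else if n % 4 = 1 then 1 else -1 := by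
  unfold ch
  rw [ZMod.χ₄_nat_eq_if_mod_four]
  split_ifs <;> simp

theorem ch_mul (m n : ℕ) : ch (m * n) = ch m * ch n := by
  unfold ch
  push_cast
  rw [map_mul]
  push_cast
  rfl

theorem ch_abs (n : ℕ) : |ch n| ≤ 1 := by
  rw [ch_eq]; split_ifs <;> simp

/-- partial sums of the character -/
def px (n : ℕ) : ℝ := if n % 4 = 1 ∨ n % 4 = 2 then 1 else 0

theorem px_succ (n : ℕ) : px (n + 1) = px n + ch (n + 1) := by
  rw [ch_eq]; unfold px
  have : n % 4 = 0 ∨ n % 4 = 1 ∨ n % 4 = 2 ∨ n % 4 = 3 := by omega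
  rcases this with h | h | h | h
  · have h1 : (n + 1) % 4 = 1 := by omega
    have h2 : ¬ (n + 1) % 2 = 0 := by omega
    simp [h, h1, h2]
  · have h1 : (n + 1) % 4 = 2 := by omega
    have h2 : (n + 1) % 2 = 0 := by omega
    simp [h, h1, h2]
  · have h1 : (n + 1) % 4 = 3 := by omega
    have h2 : ¬ (n + 1) % 2 = 0 := by omega
    simp [h, h1, h2]
  · have h1 : (n + 1) % 4 = 0 := by omega
    have h2 : (n + 1) % 2 = 0 := by omega
    simp [h, h1, h2]

theorem px_mem (n : ℕ) : 0 ≤ px n ∧ px n ≤ 1 := by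
  unfold px; split_ifs <;> norm_num

theorem alt_bound (f : ℕ → ℝ) (a : ℕ) (hf : ∀ n, a < n → f (n + 1) ≤ f n)
    (h0 : ∀ n, a < n → 0 ≤ f n) (b : ℕ) (hab : a ≤ b) :
    |∑ n ∈ Finset.Ioc a b, ch n * f n| ≤ f (a + 1) := by
  have key : px a * (-f (a + 1)) ≤ ∑ n ∈ Finset.Ioc a b, ch n * f n - px b * f (b + 1) ∧
      ∑ n ∈ Finset.Ioc a b, ch n * f n - px b * f (b + 1) + f (b + 1)
        ≤ px a * (-f (a + 1)) + f (a + 1) := by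
    induction b, hab using Nat.le_induction with
    | base => simp
    | succ b hb ih =>
      rw [Finset.sum_Ioc_succ_top hb]
      have h1 := px_succ b
      have h2 := px_mem (b + 1)
      have h3 := hf (b + 1) (by omega)
      have h4 : ch (b + 1) = px (b + 1) - px b := by linarith
      rw [h4]
      constructor <;> nlinarith [ih.1, ih.2]
  have h1 := px_mem a
  have h2 := px_mem b
  have h3 := h0 (a + 1) (by omega)
  have h4 := h0 (b + 1) (by omega)
  rw [abs_le]
  constructor <;> nlinarith [key.1, key.2]

/-- partial sums of `L(1,χ)` -/
noncomputable def dd (n : ℕ) : ℝ := ∑ k ∈ Finset.Ioc 0 n, ch k * (1 / (k : ℝ))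

theorem dd_sub (a b : ℕ) (h : a ≤ b) : |dd b - dd a| ≤ 1 / ((a : ℝ) + 1) := by
  have := alt_bound (fun n => 1 / (n : ℝ)) a (fun n hn => by
    have : (0 : ℝ) < n := by exact_mod_cast (by omega : 0 < n)
    push_cast
    exact one_div_le_one_div_of_le this (by linarith)) (fun n _ => by positivity) b h
  have e : dd b - dd a = ∑ n ∈ Finset.Ioc a b, ch n * (1 / (n : ℝ)) := by
    unfold dd
    rw [← Finset.sum_Ioc_consecutive _ (Nat.zero_le a) h]; ring
  rw [e]
  simpa using this

theorem dd_lower (b : ℕ) (h : 2 ≤ b) : 2 / 3 ≤ dd b := by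
  have h1 := dd_sub 2 b h
  have h2 : dd 2 = 1 := by
    unfold dd
    rw [show Finset.Ioc 0 2 = {1, 2} by rfl]
    simp [ch_eq]
  rw [h2, abs_le] at h1
  have := h1.1
  norm_num at this
  linarith

theorem logsum_bound (N : ℕ) (hN : 2 ≤ N) :
    |∑ n ∈ Finset.Ioc 0 N, ch n * (Real.log n / n)| ≤ 0.4 := by
  have h := alt_bound (fun n => Real.log n / (n : ℝ)) 2 (fun n hn => by
    have he : Real.exp 1 ≤ 3 := by linarith [Real.exp_one_lt_d9]
    have hn' : (3 : ℝ) ≤ n := by exact_mod_cast hn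
    apply Real.log_div_self_antitoneOn
    · simp only [Set.mem_Ici]; linarith
    · simp only [Set.mem_Ici]; push_cast; linarith
    · push_cast; linarith) (fun n _ => div_nonneg (Real.log_natCast_nonneg n) (by positivity)) N hN
  rw [← Finset.sum_Ioc_consecutive _ (Nat.zero_le 2) hN]
  have h2 : ∑ n ∈ Finset.Ioc 0 2, ch n * (Real.log n / n) = 0 := by
    rw [show Finset.Ioc 0 2 = {1, 2} by rfl]
    simp [ch_eq]
  rw [h2, zero_add]
  refine h.trans ?_
  have : Real.log 3 ≤ 1.2 := by
    rw [Real.log_le_iff_le_exp (by norm_num)]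
    have := Real.quadratic_le_exp_of_nonneg (show (0 : ℝ) ≤ 0.6 by norm_num)
    have h3 : Real.exp 1.2 = Real.exp 0.6 * Real.exp 0.6 := by
      rw [← Real.exp_add]; norm_num
    rw [h3]; nlinarith
  norm_num
  linarith

open ArithmeticFunction in
theorem chi_identity (N : ℕ) :
    ∑ n ∈ Finset.Ioc 0 N, ch n * (Real.log n / n)
      = ∑ m ∈ Finset.Ioc 0 N, ch m * (Λ m / m) * dd (N / m) := by
  let f : ArithmeticFunction ℝ := ⟨fun n => ch n * (Λ n / n), by simp⟩
  let g : ArithmeticFunction ℝ := ⟨fun n => ch n * (1 / (n : ℝ)), by simp⟩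
  have := sum_Ioc_mul_eq_sum_sum f g N
  have e : ∀ n ∈ Finset.Ioc 0 N, (f * g) n = ch n * (Real.log n / n) := by
    intro n hn
    rw [mul_apply, ← vonMangoldt_sum, ← Nat.sum_divisorsAntidiagonal (fun x _ => Λ x),
      Finset.sum_div, Finset.mul_sum]
    refine Finset.sum_congr rfl fun x hx => ?_
    have hx1 := (Nat.mem_divisorsAntidiagonal.mp hx).1
    change ch x.1 * (Λ x.1 / x.1) * (ch x.2 * (1 / (x.2 : ℝ))) = _
    rw [← hx1, ch_mul]
    push_cast
    rw [div_mul_eq_div_div, div_eq_mul_one_div (Λ x.1 / x.1) (x.2 : ℝ)]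
    ring
  rw [Finset.sum_congr rfl e] at this
  exact this

open ArithmeticFunction in
theorem psi_nat (N : ℕ) : ∑ m ∈ Finset.Ioc 0 N, Λ m ≤ 5.4 * N := by
  have h := Chebyshev.psi_le_const_mul_self (x := N) (by positivity)
  have h4 : Real.log 4 ≤ 1.4 := by
    rw [show (4 : ℝ) = 2 ^ 2 by norm_num, Real.log_pow]
    push_cast
    linarith [Real.log_two_lt_d9]
  unfold Chebyshev.psi at h
  rw [Nat.floor_natCast] at h
  have : (0 : ℝ) ≤ N := by positivity
  nlinarith

open ArithmeticFunction in
theorem chi_bound (N : ℕ) (hN : 2 ≤ N) :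
    |∑ m ∈ Finset.Ioc 0 N, ch m * (Λ m / m)| ≤ 8.7 := by
  have h1 := logsum_bound N hN
  rw [chi_identity] at h1
  have hNp : (0 : ℝ) < N := by exact_mod_cast (by omega : 0 < N)
  have h2 : |∑ m ∈ Finset.Ioc 0 N, ch m * (Λ m / m) * (dd N - dd (N / m))| ≤ 5.4 := by
    refine (Finset.abs_sum_le_sum_abs _ _).trans ?_
    have : ∀ m ∈ Finset.Ioc 0 N, |ch m * (Λ m / m) * (dd N - dd (N / m))| ≤ Λ m / N := by
      intro m hm
      rw [Finset.mem_Ioc] at hm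
      have hm0 : (0 : ℝ) < m := by exact_mod_cast hm.1
      rw [abs_mul, abs_mul]
      have a1 := ch_abs m
      have a2 : |Λ m / m| = Λ m / m := abs_of_nonneg (div_nonneg vonMangoldt_nonneg hm0.le)
      have a3 := dd_sub (N / m) N (Nat.div_le_self _ _)
      have a4 : 1 / (((N / m : ℕ) : ℝ) + 1) ≤ m / N := by
        rw [div_le_div_iff₀ (by positivity) hNp]
        have := Nat.lt_mul_div_succ N hm.1
        have : (N : ℝ) < m * ((N / m : ℕ) + 1) := by exact_mod_cast this
        linarith
      have hL : 0 ≤ Λ m / m := (div_nonneg vonMangoldt_nonneg hm0.le)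
      rw [a2]
      calc |ch m| * (Λ m / m) * |dd N - dd (N / m)| ≤ 1 * (Λ m / m) * (m / N) := by
            gcongr
            exact a3.trans a4
        _ = Λ m / N := by field_simp
    refine (Finset.sum_le_sum this).trans ?_
    rw [← Finset.sum_div, div_le_iff₀ hNp]
    exact psi_nat N
  have h3 : (∑ m ∈ Finset.Ioc 0 N, ch m * (Λ m / m)) * dd N
      = ∑ m ∈ Finset.Ioc 0 N, ch m * (Λ m / m) * dd (N / m)
        + ∑ m ∈ Finset.Ioc 0 N, ch m * (Λ m / m) * (dd N - dd (N / m)) := by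
    rw [Finset.sum_mul, ← Finset.sum_add_distrib]
    refine Finset.sum_congr rfl fun m _ => by ring
  have h4 := dd_lower N hN
  have h5 : |∑ m ∈ Finset.Ioc 0 N, ch m * (Λ m / m)| * dd N ≤ 5.8 := by
    rw [← abs_of_nonneg (by linarith : 0 ≤ dd N), ← abs_mul, h3]
    refine (abs_add_le _ _).trans ?_
    linarith
  nlinarith [abs_nonneg (∑ m ∈ Finset.Ioc 0 N, ch m * (Λ m / m))]

open ArithmeticFunction in
theorem log_fact (N : ℕ) :
    Real.log (N.factorial) = ∑ m ∈ Finset.Ioc 0 N, Λ m * ((N / m : ℕ) : ℝ) := by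
  rw [← sum_Ioc_mul_zeta_eq_sum, vonMangoldt_mul_zeta]
  induction N with
  | zero => simp
  | succ n ih =>
    rw [Finset.sum_Ioc_succ_top (Nat.zero_le n), ← ih, Nat.factorial_succ]
    push_cast
    rw [Real.log_mul (by positivity) (by positivity), log_apply]
    push_cast
    ring

open ArithmeticFunction in
theorem mertens_lower (N : ℕ) (hN : 1 ≤ N) :
    Real.log N - 1 ≤ ∑ m ∈ Finset.Ioc 0 N, Λ m / m := by
  have hNp : (0 : ℝ) < N := by exact_mod_cast hN
  have h1 := Stirling.le_log_factorial_stirling (n := N) (by omega)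
  have h2 : 0 ≤ Real.log (2 * Real.pi) :=
    Real.log_nonneg (by linarith [Real.pi_gt_three])
  have h2' : 0 ≤ Real.log N := Real.log_natCast_nonneg N
  have h3 : Real.log (N.factorial) ≤ N * ∑ m ∈ Finset.Ioc 0 N, Λ m / m := by
    rw [log_fact, Finset.mul_sum]
    refine Finset.sum_le_sum fun m _ => ?_
    have : ((N / m : ℕ) : ℝ) ≤ N / m := Nat.cast_div_le
    calc _ ≤ Λ m * (N / m) := mul_le_mul_of_nonneg_left this vonMangoldt_nonneg
      _ = _ := by ring
  have h4 : N * (Real.log N - 1) ≤ N * ∑ m ∈ Finset.Ioc 0 N, Λ m / m := by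
    linarith
  exact le_of_mul_le_mul_left h4 hNp

open ArithmeticFunction in
theorem mertens_upper (N : ℕ) (hN : 1 ≤ N) :
    ∑ m ∈ Finset.Ioc 0 N, Λ m / m ≤ Real.log N + 5.4 := by
  have hNp : (0 : ℝ) < N := by exact_mod_cast hN
  have h1 : Real.log (N.factorial) ≤ N * Real.log N := by
    rw [← Real.log_pow]
    apply Real.log_le_log (by positivity)
    exact_mod_cast Nat.factorial_le_pow N
  have h3 : N * ∑ m ∈ Finset.Ioc 0 N, Λ m / m ≤ Real.log (N.factorial)
      + ∑ m ∈ Finset.Ioc 0 N, Λ m := by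
    rw [log_fact, Finset.mul_sum, ← Finset.sum_add_distrib]
    refine Finset.sum_le_sum fun m hm => ?_
    rw [Finset.mem_Ioc] at hm
    have hm0 : (0 : ℝ) < m := by exact_mod_cast hm.1
    have : (N : ℝ) / m ≤ (N / m : ℕ) + 1 := by
      rw [div_le_iff₀ hm0]
      have := Nat.lt_mul_div_succ N hm.1
      have : (N : ℝ) < m * ((N / m : ℕ) + 1) := by exact_mod_cast this
      linarith
    calc _ = Λ m * (N / m) := by ring
      _ ≤ Λ m * ((N / m : ℕ) + 1) := mul_le_mul_of_nonneg_left this vonMangoldt_nonneg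
      _ = _ := by ring
  have := psi_nat N
  have h4 : N * ∑ m ∈ Finset.Ioc 0 N, Λ m / m ≤ N * (Real.log N + 5.4) := by
    linarith
  exact le_of_mul_le_mul_left h4 hNp

open ArithmeticFunction in
theorem weight_le (n : ℕ) (hn : 2 < n) :
    (1 + ch n) * (Λ n / n) ≤ 2 * (if n.Prime ∧ n % 4 = 1 then Real.log n / n else 0)
      + 2 * (if ¬ n.Prime then Λ n / n else 0) := by
  have hL : 0 ≤ Λ n / n := div_nonneg vonMangoldt_nonneg (by positivity)
  have hc := abs_le.mp (ch_abs n)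
  by_cases hp : n.Prime
  · have hodd : n % 2 = 1 := by
      rcases hp.eq_two_or_odd with h | h
      · omega
      · exact h
    by_cases h1 : n % 4 = 1
    · rw [vonMangoldt_apply_prime hp, ch_eq]
      simp [hp, h1, hodd]
      linarith
    · rw [ch_eq]
      simp [hp, h1, hodd]
  · simp only [hp, false_and, if_false, not_false_eq_true, if_true]
    nlinarith

open ArithmeticFunction in
theorem window (z N : ℕ) (hz : 2 ≤ z) (hzN : z ≤ N) :
    Real.log N - Real.log z - 23.8 ≤ ∑ n ∈ Finset.Ioc z N, (1 + ch n) * (Λ n / n) := by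
  have h1 := mertens_lower N (by omega)
  have h2 := mertens_upper z (by omega)
  have h3 := abs_le.mp (chi_bound N (by omega))
  have h4 := abs_le.mp (chi_bound z hz)
  rw [← Finset.sum_Ioc_consecutive _ (Nat.zero_le z) hzN] at h1 h3
  have : ∑ n ∈ Finset.Ioc z N, (1 + ch n) * (Λ n / n)
      = ∑ n ∈ Finset.Ioc z N, Λ n / n + ∑ n ∈ Finset.Ioc z N, ch n * (Λ n / n) := by
    rw [← Finset.sum_add_distrib]
    exact Finset.sum_congr rfl fun n _ => by ring
  rw [this]
  linarith [h3.1, h4.2]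

open ArithmeticFunction in
theorem big_sum (N : ℕ) (hN : 2 ^ 108 ≤ N) :
    2 * (N : ℝ) ≤ ∑ p ∈ Finset.Ioc 0 N, if p.Prime ∧ p % 4 = 1 then (p : ℝ) else 0 := by
  by_contra! hS
  have hNR : (2 : ℝ) ^ 108 ≤ N := by exact_mod_cast hN
  obtain ⟨u, hu0, huN⟩ : ∃ u : ℝ, 0 ≤ u ∧ u ^ 12 = N :=
    ⟨(N : ℝ) ^ ((1 : ℝ) / 12), by positivity, by
      rw [← Real.rpow_natCast, ← Real.rpow_mul (by positivity)]; norm_num⟩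
  have hu : 512 ≤ u := by
    by_contra! h
    have : u ^ 12 < 512 ^ 12 := pow_lt_pow_left₀ h hu0 (by norm_num)
    rw [huN] at this
    norm_num at this hNR
    linarith
  have hup : 0 < u := by linarith
  set z := ⌊u ^ 8⌋₊ with hzdef
  have hz1 : (z : ℝ) ≤ u ^ 8 := Nat.floor_le (by positivity)
  have hz2 : u ^ 8 < z + 1 := Nat.lt_floor_add_one _
  have hz3 : 2 ≤ z := by
    apply Nat.le_floor
    push_cast
    calc (2 : ℝ) ≤ 512 ^ 8 := by norm_num
      _ ≤ u ^ 8 := by gcongr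
  have hzN : z ≤ N := by
    have : (z : ℝ) ≤ N := by
      rw [← huN]
      exact hz1.trans (pow_le_pow_right₀ (by linarith) (by norm_num))
    exact_mod_cast this
  have hlogu : 6.23 ≤ Real.log u := by
    have : Real.log (2 ^ 9) ≤ Real.log u := Real.log_le_log (by norm_num) (by linarith)
    rw [Real.log_pow] at this
    push_cast at this
    linarith [Real.log_two_gt_d9]
  have hlogN : Real.log N = 12 * Real.log u := by
    rw [← huN, Real.log_pow]; norm_num
  have hlogN' : Real.log N ≤ 12 * u := by
    rw [hlogN]; linarith [Real.log_le_sub_one_of_pos hup]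
  have hlogz : Real.log z ≤ 8 * Real.log u := by
    have : Real.log z ≤ Real.log (u ^ 8) := Real.log_le_log (by positivity) hz1
    rw [Real.log_pow] at this
    exact_mod_cast this
  have hw := window z N hz3 hzN
  have hgt : ∀ n ∈ Finset.Ioc z N, u ^ 8 < n := by
    intro n hn
    have : z + 1 ≤ n := (Finset.mem_Ioc.mp hn).1
    have : (z : ℝ) + 1 ≤ n := by exact_mod_cast this
    linarith
  -- primes
  have hP : ∑ n ∈ Finset.Ioc z N, (if n.Prime ∧ n % 4 = 1 then Real.log n / n else 0)
      ≤ 24 / u ^ 3 := by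
    have : ∀ n ∈ Finset.Ioc z N, (if n.Prime ∧ n % 4 = 1 then Real.log n / (n : ℝ) else 0)
        ≤ (12 / u ^ 15) * (if n.Prime ∧ n % 4 = 1 then (n : ℝ) else 0) := by
      intro n hn
      split_ifs with h
      · have h1 := hgt n hn
        have hn0 : (0 : ℝ) < n := by linarith [pow_pos hup 8]
        have h2 : Real.log n ≤ 12 * u := by
          refine le_trans (Real.log_le_log hn0 ?_) hlogN'
          exact_mod_cast (Finset.mem_Ioc.mp hn).2
        rw [div_le_iff₀ hn0]
        have h3 : u ^ 8 * u ^ 8 ≤ (n : ℝ) * n := by gcongr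
        calc Real.log n ≤ 12 * u := h2
          _ = 12 / u ^ 15 * (u ^ 8 * u ^ 8) := by field_simp
          _ ≤ 12 / u ^ 15 * (n * n) := by gcongr
          _ = _ := by ring
      · simp
    refine (Finset.sum_le_sum this).trans ?_
    rw [← Finset.mul_sum]
    have hle : ∑ n ∈ Finset.Ioc z N, (if n.Prime ∧ n % 4 = 1 then (n : ℝ) else 0) ≤ 2 * u ^ 12 := by
      rw [huN]
      refine le_trans ?_ hS.le
      apply Finset.sum_le_sum_of_subset_of_nonneg
      · exact Finset.Ioc_subset_Ioc_left (Nat.zero_le _)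
      · intro i _ _
        split_ifs <;> positivity
    calc _ ≤ 12 / u ^ 15 * (2 * u ^ 12) := by gcongr
      _ = 24 / u ^ 3 := by field_simp; norm_num
  have hQ : ∑ n ∈ Finset.Ioc z N, (if ¬ n.Prime then Λ n / n else 0) ≤ 24 / u := by
    have hN1 : (1 : ℝ) ≤ N := by linarith
    have h1 := Chebyshev.psi_sub_theta_le hN1
    rw [Chebyshev.psi_sub_theta_eq_sum_not_prime, Nat.floor_natCast, Finset.sum_filter] at h1
    have hsq : √(N : ℝ) = u ^ 6 := by
      rw [← huN, show u ^ 12 = (u ^ 6) ^ 2 by ring]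
      exact Real.sqrt_sq (by positivity)
    rw [hsq] at h1
    have : ∀ n ∈ Finset.Ioc z N, (if ¬ n.Prime then Λ n / (n : ℝ) else 0)
        ≤ (1 / u ^ 8) * (if ¬ n.Prime then Λ n else 0) := by
      intro n hn
      have h2 := hgt n hn
      split_ifs with h
      · simp
      · rw [div_eq_mul_one_div, mul_comm]
        exact mul_le_mul_of_nonneg_right
          (one_div_le_one_div_of_le (by positivity) h2.le) vonMangoldt_nonneg
    refine (Finset.sum_le_sum this).trans ?_
    rw [← Finset.mul_sum]
    have hle : ∑ n ∈ Finset.Ioc z N, (if ¬ n.Prime then Λ n else 0) ≤ 2 * u ^ 6 * (12 * u) := by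
      refine le_trans ?_ (h1.trans (by gcongr))
      apply Finset.sum_le_sum_of_subset_of_nonneg
      · exact Finset.Ioc_subset_Ioc_left (Nat.zero_le _)
      · intro i _ _
        split_ifs <;> simp
    calc _ ≤ 1 / u ^ 8 * (2 * u ^ 6 * (12 * u)) := by gcongr
      _ = 24 / u := by field_simp; norm_num
  have hW : ∑ n ∈ Finset.Ioc z N, (1 + ch n) * (Λ n / n) ≤ 2 * (24 / u ^ 3) + 2 * (24 / u) := by
    have := Finset.sum_le_sum (fun n (hn : n ∈ Finset.Ioc z N) =>
      weight_le n (by have := (Finset.mem_Ioc.mp hn).1; omega))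
    rw [Finset.sum_add_distrib, ← Finset.mul_sum, ← Finset.mul_sum] at this
    linarith
  have e1 : 24 / u ≤ 24 / 512 := by gcongr
  have e2 : 24 / u ^ 3 ≤ 24 / 512 ^ 3 := by gcongr
  norm_num at e1 e2
  linarith

/-- sum of the primes `≡ 1 mod 4` below `y` -/
def T41 (y : ℕ) : ℕ := ∑ p ∈ (Finset.range y).filter (fun p => p.Prime ∧ p % 4 = 1), p

theorem T41_big (y : ℕ) (hy : 2 ^ 108 < y) : y + 244 ≤ T41 y := by
  obtain ⟨N, rfl⟩ : ∃ N, y = N + 1 := ⟨y - 1, by omega⟩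
  have h := big_sum N (by omega)
  have e : ((T41 (N + 1) : ℕ) : ℝ)
      = ∑ p ∈ Finset.Ioc 0 N, if p.Prime ∧ p % 4 = 1 then (p : ℝ) else 0 := by
    unfold T41
    push_cast
    rw [← Finset.sum_filter]
    apply Finset.sum_congr _ (fun _ _ => rfl)
    ext p
    simp only [Finset.mem_filter, Finset.mem_range, Finset.mem_Ioc]
    constructor
    · rintro ⟨h1, h2⟩
      exact ⟨⟨h2.1.pos, by omega⟩, h2⟩
    · rintro ⟨h1, h2⟩
      exact ⟨by omega, h2⟩
  rw [← e] at h
  have : 2 * N ≤ T41 (N + 1) := by exact_mod_cast h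
  omega

theorem T41_mono {a b : ℕ} (h : a ≤ b) : T41 a ≤ T41 b := by
  unfold T41
  apply Finset.sum_le_sum_of_subset
  exact Finset.filter_subset_filter _ (Finset.range_subset_range.mpr h)

theorem T41_step (p y : ℕ) (hp : p.Prime) (h1 : p % 4 = 1) (h : p < y) : T41 p + p ≤ T41 y := by
  refine le_trans ?_ (T41_mono (Nat.succ_le_of_lt h))
  unfold T41
  rw [Nat.succ_eq_add_one, Finset.range_add_one, Finset.filter_insert, if_pos ⟨hp, h1⟩, Finset.sum_insert (by simp)]
  omega

theorem T41_base : 418 ≤ T41 97 := by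
  have : ({5, 13, 17, 29, 37, 41, 53, 61, 73, 89} : Finset ℕ) ⊆
      (Finset.range 97).filter (fun p => p.Prime ∧ p % 4 = 1) := by
    intro p hp
    simp only [Finset.mem_insert, Finset.mem_singleton] at hp
    rcases hp with h | h | h | h | h | h | h | h | h | h <;> subst h <;> norm_num
  exact le_trans (by decide) (Finset.sum_le_sum_of_subset (f := fun p => p) this)

/-- fast modular exponentiation with fuel -/
def pm (m : ℕ) : ℕ → ℕ → ℕ → ℕ
  | 0, _, _ => 1
  | f + 1, b, e => if e % 2 = 1 then b * pm m f (b * b % m) (e / 2) % m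
      else pm m f (b * b % m) (e / 2)

theorem pm_spec (m : ℕ) : ∀ f b e, e < 2 ^ f → ((pm m f b e : ℕ) : ZMod m) = (b : ZMod m) ^ e := by
  intro f
  induction f with
  | zero => intro b e he; simp at he; subst he; simp [pm]
  | succ f ih =>
    intro b e he
    have h2 : e / 2 < 2 ^ f := by rw [pow_succ] at he; omega
    have := ih (b * b % m) (e / 2) h2
    unfold pm
    split_ifs with h
    · rw [ZMod.natCast_mod, Nat.cast_mul, this, ZMod.natCast_mod]
      push_cast
      rw [← pow_two, ← pow_mul, ← pow_succ']
      congr 1; omega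
    · rw [this, ZMod.natCast_mod]
      push_cast
      rw [← pow_two, ← pow_mul]
      congr 1; omega

/-- Lucas certificate check for `2^a*3^b*5^c+1` -/
def chkp (a b c g : ℕ) : Bool :=
  let p := 2 ^ a * 3 ^ b * 5 ^ c + 1
  2 ≤ a && p < 2 ^ 120 && pm p 120 g (p - 1) == 1 &&
  ((p - 1) % 2 != 0 || pm p 120 g ((p - 1) / 2) % p != 1) &&
  ((p - 1) % 3 != 0 || pm p 120 g ((p - 1) / 3) % p != 1) &&
  ((p - 1) % 5 != 0 || pm p 120 g ((p - 1) / 5) % p != 1)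

theorem chkp_prime (a b c g : ℕ) (h : chkp a b c g = true) :
    (2 ^ a * 3 ^ b * 5 ^ c + 1).Prime ∧ (2 ^ a * 3 ^ b * 5 ^ c + 1) % 4 = 1 := by
  unfold chkp at h
  have hpos : 0 < 2 ^ a * 3 ^ b * 5 ^ c := by positivity
  have hdiv : ∀ q : ℕ, q.Prime → q ∣ 2 ^ a * 3 ^ b * 5 ^ c → q = 2 ∨ q = 3 ∨ q = 5 := by
    intro q hq hd
    rcases (Nat.Prime.dvd_mul hq).mp hd with hd | hd
    · rcases (Nat.Prime.dvd_mul hq).mp hd with hd | hd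
      · exact Or.inl ((Nat.prime_dvd_prime_iff_eq hq Nat.prime_two).mp (hq.dvd_of_dvd_pow hd))
      · exact Or.inr (Or.inl ((Nat.prime_dvd_prime_iff_eq hq Nat.prime_three).mp
          (hq.dvd_of_dvd_pow hd)))
    · exact Or.inr (Or.inr ((Nat.prime_dvd_prime_iff_eq hq Nat.prime_five).mp
          (hq.dvd_of_dvd_pow hd)))
  have h4 : 2 ≤ a → 4 ∣ 2 ^ a * 3 ^ b * 5 ^ c := fun h =>
    Dvd.dvd.mul_right (Dvd.dvd.mul_right (pow_dvd_pow 2 h) _) _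
  generalize 2 ^ a * 3 ^ b * 5 ^ c = k at *
  simp only [Nat.add_sub_cancel, Bool.and_eq_true, decide_eq_true_eq, beq_iff_eq, bne_iff_ne,
    Bool.or_eq_true] at h
  obtain ⟨⟨⟨⟨⟨h1, h2⟩, h3⟩, e2⟩, e3⟩, e5⟩ := h
  have h4 := h4 h1
  refine ⟨?_, by omega⟩
  have gen : ∀ q, q ∣ k → (k % q ≠ 0 ∨ pm (k + 1) 120 g (k / q) % (k + 1) ≠ 1) →
      ((g : ZMod (k + 1)) ^ (k / q)) ≠ 1 := by
    intro q hq h heq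
    rcases h with h | h
    · exact h (Nat.mod_eq_zero_of_dvd hq)
    · rw [← pm_spec _ 120 _ _ (lt_of_le_of_lt (Nat.div_le_self _ _) (by omega))] at heq
      apply h
      have : ((pm (k + 1) 120 g (k / q) : ℕ) : ZMod (k + 1)) = ((1 : ℕ) : ZMod (k + 1)) := by
        rw [heq]; simp
      rw [ZMod.natCast_eq_natCast_iff'] at this
      rw [this]
      exact Nat.mod_eq_of_lt (by omega)
  apply lucas_primality (k + 1) (g : ZMod (k + 1))
  · rw [Nat.add_sub_cancel, ← pm_spec _ 120 _ _ (by omega), h3]; simp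
  · intro q hq hd
    rw [Nat.add_sub_cancel] at hd ⊢
    rcases hdiv q hq hd with h | h | h <;> subst h
    · exact gen _ hd e2
    · exact gen _ hd e3
    · exact gen _ hd e5

/-- chain check -/
def chain : ℕ → List (ℕ × ℕ × ℕ × ℕ) → ℕ → Bool
  | B, [], E => E ≤ B
  | B, (a, b, c, g) :: l, E => chkp a b c g && 97 ≤ 2 ^ a * 3 ^ b * 5 ^ c + 1 &&
      2 ^ a * 3 ^ b * 5 ^ c + 1 ≤ B && chain (2 * (2 ^ a * 3 ^ b * 5 ^ c + 1)) l E

theorem chain_spec (l : List (ℕ × ℕ × ℕ × ℕ)) (E : ℕ) : ∀ B, chain B l E = true →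
    (∀ y, 97 ≤ y → y ≤ B → y + 244 ≤ T41 y) → ∀ y, 97 ≤ y → y ≤ E → y + 244 ≤ T41 y := by
  induction l with
  | nil =>
    intro B h hB y h1 h2
    simp [chain] at h
    exact hB y h1 (by omega)
  | cons x l ih =>
    obtain ⟨a, b, c, g⟩ := x
    intro B h hB
    simp only [chain, Bool.and_eq_true, decide_eq_true_eq] at h
    obtain ⟨⟨⟨h1, h2⟩, h3⟩, h4⟩ := h
    apply ih _ h4
    intro y hy1 hy2
    by_cases hy : y ≤ B
    · exact hB y hy1 hy
    obtain ⟨hp, hp4⟩ := chkp_prime a b c g h1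
    have := T41_step _ y hp hp4 (by omega)
    have := hB _ h2 h3
    omega

theorem T41_small : ∀ y, 97 ≤ y → y ≤ 2 ^ 108 → y + 244 ≤ T41 y := by
  apply chain_spec [(2, 3, 0, 6), (6, 1, 0, 5), (8, 0, 0, 3), (4, 3, 0, 5), (8, 1, 0, 11), (4, 4, 0, 10), (5,
    4, 0, 7), (2, 5, 1, 11), (3, 5, 1, 7), (4, 5, 1, 13), (4, 4, 2, 7), (12, 1, 1, 17), (9, 2,
    2, 23), (5, 8, 0, 10), (10, 4, 1, 13), (18, 1, 0, 10), (11, 6, 0, 7), (8, 7, 1, 17), (16,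
    4, 0, 5), (6, 8, 2, 37), (7, 8, 2, 13), (8, 8, 2, 11), (9, 8, 2, 13), (25, 0, 1, 3), (17,
    4, 2, 11), (13, 10, 0, 23), (3, 14, 2, 13), (26, 3, 0, 13), (19, 8, 0, 7), (20, 8, 0, 5),
    (10, 12, 2, 17), (29, 2, 1, 7), (26, 3, 2, 7), (19, 8, 2, 7), (20, 8, 2, 7), (20, 10, 1,
    11), (17, 11, 2, 17), (29, 4, 2, 17), (37, 1, 1, 7), (38, 1, 1, 7), (12, 18, 1, 11), (24,
    11, 1, 14), (40, 3, 0, 5), (33, 8, 0, 7), (34, 5, 2, 14), (7, 24, 1, 17), (31, 8, 2, 13),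
    (43, 1, 2, 11), (31, 12, 0, 41), (40, 4, 2, 7), (48, 1, 1, 19), (3, 30, 1, 13), (19, 19,
    2, 11), (50, 3, 0, 11), (5, 32, 0, 5), (14, 24, 2, 7), (3, 33, 1, 21), (8, 29, 2, 13),
    (15, 25, 2, 14), (19, 26, 0, 7), (4, 36, 0, 5), (5, 36, 0, 5), (6, 33, 2, 43), (2, 39, 0,
    10), (7, 35, 1, 13), (12, 31, 2, 7), (58, 4, 1, 7), (66, 1, 0, 10), (6, 38, 1, 11), (22,
    30, 0, 7), (12, 34, 2, 7), (31, 24, 1, 11), (20, 33, 0, 11), (40, 21, 0, 7), (49, 13, 2,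
    17), (56, 12, 0, 5), (52, 15, 0, 5), (29, 30, 0, 7), (45, 19, 1, 13), (34, 25, 2, 47),
    (38, 26, 0, 5), (28, 30, 2, 11), (5, 48, 0, 5), (25, 36, 0, 7), (30, 32, 1, 11), (65, 12,
    0, 7), (66, 9, 2, 11), (55, 18, 1, 31), (44, 27, 0, 5), (14, 45, 1, 13), (22, 42, 0, 5),
    (65, 14, 1, 13), (49, 23, 2, 14), (3, 54, 1, 7), (4, 54, 1, 22), (66, 14, 2, 17), (67, 14,
    2, 7), (14, 51, 0, 13), (7, 53, 2, 13), (57, 22, 2, 7), (15, 52, 0, 7), (19, 50, 0, 5),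
    (62, 22, 1, 23), (36, 39, 1, 7), (75, 15, 1, 7), (21, 48, 2, 7), (41, 36, 2, 7), (14, 55,
    1, 7), (86, 10, 1, 17), (75, 19, 0, 5), (38, 40, 2, 11), (42, 41, 0, 5), (73, 19, 2, 19)] (2 ^ 108) 174
  · decide +kernel
  · intro y h1 h2
    have := T41_mono h1
    have := T41_base
    omega

theorem T41_all (y : ℕ) (hy : 97 ≤ y) : y + 244 ≤ T41 y := by
  by_cases h : y ≤ 2 ^ 108
  · exact T41_small y hy h
  · exact T41_big y (by omega)

theorem inf41 : (Set.ofPred (fun p : ℕ => p.Prime ∧ p % 4 = 1)).Infinite := by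
  have := Nat.infinite_setOfPred_prime_and_eq_mod (q := 4) (a := 1) isUnit_one
  refine this.mono ?_
  rintro p ⟨h1, h2⟩
  refine ⟨h1, ?_⟩
  have : ((p : ℕ) : ZMod 4) = ((1 : ℕ) : ZMod 4) := by rw [h2]; simp
  rw [ZMod.natCast_eq_natCast_iff'] at this
  exact this

theorem S41_eq (n : ℕ) : T41 (q41 n) = S41 n := by
  unfold T41 S41 q41
  induction n with
  | zero =>
    rw [Finset.filter_eq_empty_iff.mpr]
    · simp
    · intro x hx hp
      have := Nat.count_nth_zero (fun p : ℕ => p.Prime ∧ p % 4 = 1)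
      rw [Nat.count_eq_card_filter_range, Finset.card_eq_zero, Finset.filter_eq_empty_iff] at this
      exact this hx hp
  | succ n ih =>
    rw [Nat.filter_range_nth_eq_insert_of_infinite inf41, Finset.sum_insert (by simp), ih,
      Finset.sum_range_succ, add_comm]

theorem q41_ge (n : ℕ) (hn : 10 ≤ n) : 97 ≤ q41 n := by
  by_contra! h
  have h1 := Nat.count_nth_of_infinite inf41 n
  have h2 := Nat.count_monotone (fun p : ℕ => p.Prime ∧ p % 4 = 1) (show q41 n + 1 ≤ 97 by omega)
  have h3 : Nat.count (fun p : ℕ => p.Prime ∧ p % 4 = 1) (q41 n + 1) = n + 1 := by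
    unfold q41
    rw [Nat.count_succ, if_pos (Nat.nth_mem_of_infinite inf41 n), h1]
  have h4 : Nat.count (fun p : ℕ => p.Prime ∧ p % 4 = 1) 97 = 10 := by
    simp [Nat.count_succ]; norm_num
  omega

/-- **Lemma 2 (a).**  If `n ≥ 10`, then `S_{4,1}(n) - q_{4,1}(n+1) ≥ 244`
(in `0`-indexed form `q_{4,1}(n+1) = q41 n`). -/
theorem stmt4 : ∀ n : ℕ, 10 ≤ n → (244 : ℤ) ≤ (S41 n : ℤ) - (q41 n : ℤ) := by
  intro n hn
  have h := T41_all _ (q41_ge n hn)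
  rw [S41_eq] at h
  omega
end

section
/- For every n ≥ 8, one has S_{4,3}(n) − q_{4,3}(n+1) ≥ 112, where q_{4,3}(1) < q_{4,3}(2) < ⋯ is the increasing enumeration of all primes congruent to 3 modulo 4 and S_{4,3}(n) = q_{4,3}(1) + ⋯ + q_{4,3}(n). -/
/-- `q43 k` is the `(k+1)`-st prime congruent to `3` modulo `4`, i.e. the increasing
enumeration `q43 0 = 3, q43 1 = 7, …` of the set `𝒫(4,3)` of primes `≡ 3 (mod 4)`
(this set is infinite by Dirichlet's theorem, so `Nat.nth` is its enumeration). -/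
noncomputable def q43 : ℕ → ℕ := Nat.nth (fun p => p.Prime ∧ p % 4 = 3)

/-- `S43 n` is the sum of the first `n` primes congruent to `3` modulo `4`. -/
noncomputable def S43 (n : ℕ) : ℕ := ∑ i ∈ Finset.range n, q43 i

abbrev P43 (p : ℕ) : Prop := p.Prime ∧ p % 4 = 3

lemma P43_inf : (Set.ofPred P43).Infinite := by
  have h := Nat.infinite_setOfPred_prime_and_eq_mod (q := 4) (a := (3 : ZMod 4)) (by decide)
  refine h.mono ?_
  rintro p ⟨hp, hm⟩
  refine ⟨hp, ?_⟩
  have : ((p : ℕ) : ZMod 4) = ((3 : ℕ) : ZMod 4) := by simpa using hm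
  rw [ZMod.natCast_eq_natCast_iff'] at this
  simpa using this

lemma q43_mem (n : ℕ) : P43 (q43 n) := Nat.nth_mem_of_infinite P43_inf n

lemma q43_mono : StrictMono q43 := Nat.nth_strictMono P43_inf

lemma sub_image (n : ℕ) (L : Finset ℕ) (h : ∀ p ∈ L, P43 p ∧ p < q43 n) :
    L ⊆ (Finset.range n).image q43 := by
  intro p hp
  obtain ⟨h1, h2⟩ := h p hp
  have h3 : p ∈ Set.range q43 := by
    have : Set.range q43 = Set.ofPred P43 := Nat.range_nth_of_infinite P43_inf
    rw [this]; exact h1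
  obtain ⟨i, rfl⟩ := h3
  exact Finset.mem_image.2 ⟨i, Finset.mem_range.2 (q43_mono.lt_iff_lt.1 h2), rfl⟩

lemma sum_le_S (n : ℕ) (L : Finset ℕ) (h : ∀ p ∈ L, P43 p ∧ p < q43 n) :
    ∑ p ∈ L, p ≤ S43 n := by
  have := Finset.sum_le_sum_of_subset (f := fun p : ℕ => p) (sub_image n L h)
  rwa [Finset.sum_image (fun a _ b _ hab => q43_mono.injective hab)] at this

lemma card_le_n (n : ℕ) (L : Finset ℕ) (h : ∀ p ∈ L, P43 p ∧ p < q43 n) :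
    L.card ≤ n := by
  have h1 := Finset.card_le_card (sub_image n L h)
  have h2 := Finset.card_image_le (s := Finset.range n) (f := q43)
  simp at h2
  omega

lemma q43_lower (n : ℕ) : 4 * n + 3 ≤ q43 n := by
  induction n with
  | zero => have := (q43_mem 0).2; omega
  | succ k ih =>
    have h1 := (q43_mem k).2
    have h2 := (q43_mem (k+1)).2
    have h3 : q43 k < q43 (k+1) := q43_mono (Nat.lt_succ_self k)
    omega

lemma S43_lower (n : ℕ) : 2 * n ^ 2 + n ≤ S43 n := by
  induction n with
  | zero => simp
  | succ k ih =>
    have h : S43 (k+1) = S43 k + q43 k := by simp [S43, Finset.sum_range_succ]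
    have := q43_lower k
    rw [h]; nlinarith

lemma count1 (N d : ℕ) (hd : d % 4 = 1) :
    ((Finset.range N).filter (fun k => d ∣ 4 * k + 3)).card ≤
      ((Finset.range N).filter (fun k => d ∣ 2 * k + 1)).card := by
  have key : ∀ k, d ∣ 4 * k + 3 → ∃ i, 4 * k + 3 = d * (4 * i + 3) := by
    rintro k ⟨e, he⟩
    have h4 : (d * e) % 4 = 3 := by omega
    rw [Nat.mul_mod, hd] at h4
    refine ⟨e / 4, ?_⟩
    rw [he]; congr 1; omega
  obtain ⟨c, rfl⟩ : ∃ c, d = 4 * c + 1 := ⟨d / 4, by omega⟩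
  apply Finset.card_le_card_of_injOn (fun k => k - c)
  · intro k hk
    simp only [Finset.coe_filter, Finset.mem_range, Set.mem_ofPred_eq] at hk ⊢
    obtain ⟨i, hi⟩ := key k hk.2
    refine ⟨by omega, ⟨2 * i + 1, ?_⟩⟩
    have : c ≤ k := by nlinarith
    obtain ⟨t, rfl⟩ := Nat.exists_eq_add_of_le this
    simp only [Nat.add_sub_cancel_left]
    nlinarith
  · intro k hk l hl hkl
    simp only [Finset.coe_filter, Finset.mem_range, Set.mem_ofPred_eq] at hk hl hkl
    obtain ⟨i, hi⟩ := key k hk.2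
    obtain ⟨j, hj⟩ := key l hl.2
    have : c ≤ k := by nlinarith
    have : c ≤ l := by nlinarith
    omega

lemma count3 (N d : ℕ) (hd : d % 4 = 3) :
    ((Finset.range N).filter (fun k => d ∣ 4 * k + 3)).card ≤
      ((Finset.range N).filter (fun k => d ∣ 2 * k + 1)).card + 1 := by
  have key : ∀ k, d ∣ 4 * k + 3 → k ≠ d / 4 → ∃ i, 4 * k + 3 = d * (4 * i + 5) := by
    rintro k ⟨e, he⟩ hne
    have h4 : (d * e) % 4 = 3 := by omega
    rw [Nat.mul_mod, hd] at h4
    have h1 : e % 4 = 1 := by omega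
    have h2 : e ≠ 1 := by
      rintro rfl
      omega
    refine ⟨e / 4 - 1, ?_⟩
    rw [he]; congr 1; omega
  have hc : (((Finset.range N).filter (fun k => d ∣ 4 * k + 3)).erase (d / 4)).card ≤
      ((Finset.range N).filter (fun k => d ∣ 2 * k + 1)).card := by
    obtain ⟨c, rfl⟩ : ∃ c, d = 4 * c + 3 := ⟨d / 4, by omega⟩
    apply Finset.card_le_card_of_injOn (fun k => k - (3 * c + 2))
    · intro k hk
      simp only [Finset.coe_erase, Finset.coe_filter, Finset.mem_range, Set.mem_ofPred_eq,
        Set.mem_sdiff, Set.mem_singleton_iff] at hk ⊢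
      obtain ⟨i, hi⟩ := key k hk.1.2 hk.2
      refine ⟨by omega, ⟨2 * i + 1, ?_⟩⟩
      have : 3 * c + 2 ≤ k := by nlinarith
      obtain ⟨t, rfl⟩ := Nat.exists_eq_add_of_le this
      simp only [Nat.add_sub_cancel_left]
      nlinarith
    · intro k hk l hl hkl
      simp only [Finset.coe_erase, Finset.coe_filter, Finset.mem_range, Set.mem_ofPred_eq,
        Set.mem_sdiff, Set.mem_singleton_iff] at hk hl hkl
      obtain ⟨i, hi⟩ := key k hk.1.2 hk.2
      obtain ⟨j, hj⟩ := key l hl.1.2 hl.2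
      have : 3 * c + 2 ≤ k := by nlinarith
      have : 3 * c + 2 ≤ l := by nlinarith
      omega
  have := Finset.pred_card_le_card_erase
    (s := (Finset.range N).filter (fun k => d ∣ 4 * k + 3)) (a := d / 4)
  omega

lemma fact_prod (N p : ℕ) (hp : p.Prime) (f : ℕ → ℕ) (hf : ∀ k < N, 0 < f k ∧ f k < 4 * N) :
    (∏ k ∈ Finset.range N, f k).factorization p =
      ∑ j ∈ Finset.Ico 1 (Nat.log p (4 * N) + 1),
        ((Finset.range N).filter (fun k => p ^ j ∣ f k)).card := by
  rw [Nat.factorization_prod (fun k hk => (hf k (Finset.mem_range.1 hk)).1.ne')]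
  rw [Finset.sum_apply']
  have : ∀ k ∈ Finset.range N, (f k).factorization p =
      ∑ j ∈ Finset.Ico 1 (Nat.log p (4 * N) + 1), if p ^ j ∣ f k then 1 else 0 := by
    intro k hk
    obtain ⟨h1, h2⟩ := hf k (Finset.mem_range.1 hk)
    rw [Nat.factorization_eq_card_pow_dvd_of_lt hp h1
      (b := Nat.log p (4 * N) + 1) (h2.trans (Nat.lt_pow_succ_log_self hp.one_lt _)),
      Finset.card_filter]
  rw [Finset.sum_congr rfl this, Finset.sum_comm]
  simp only [Finset.card_filter]

lemma key_bound (N : ℕ) :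
    2 ^ N ≤ (4 * N) ^ ((Finset.range (4 * N)).filter P43).card := by
  set P := (Finset.range (4 * N)).filter P43 with hP
  set A := ∏ k ∈ Finset.range N, (4 * k + 3) with hA
  set B := ∏ k ∈ Finset.range N, (2 * k + 1) with hB
  set M := ∏ p ∈ P, p ^ Nat.log p (4 * N) with hM
  have hA0 : A ≠ 0 := Finset.prod_ne_zero_iff.2 (fun k _ => by omega)
  have hB0 : B ≠ 0 := Finset.prod_ne_zero_iff.2 (fun k _ => by omega)
  have hPp : ∀ p ∈ P, P43 p ∧ p < 4 * N := by
    intro p hp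
    rw [hP, Finset.mem_filter, Finset.mem_range] at hp
    exact ⟨hp.2, hp.1⟩
  have hM0 : M ≠ 0 := Finset.prod_ne_zero_iff.2
    (fun p hp => pow_ne_zero _ (hPp p hp).1.1.ne_zero)
  have h1 : 2 ^ N * B ≤ A := by
    have : 2 ^ N = ∏ k ∈ Finset.range N, 2 := by simp
    rw [this, hB, hA, ← Finset.prod_mul_distrib]
    exact Finset.prod_le_prod' (fun k _ => by omega)
  have h3 : M ≤ (4 * N) ^ P.card := by
    rw [hM]
    apply Finset.prod_le_pow_card
    intro p hp
    exact Nat.pow_log_le_self p (by have := (hPp p hp).2; omega)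
  have h2 : A ∣ B * M := by
    rw [← Nat.factorization_prime_le_iff_dvd hA0 (mul_ne_zero hB0 hM0)]
    intro p hp
    rw [Nat.factorization_mul hB0 hM0, Finsupp.add_apply]
    have fA := fact_prod N p hp (fun k => 4 * k + 3) (fun k hk => by constructor <;> omega)
    have fB := fact_prod N p hp (fun k => 2 * k + 1) (fun k hk => by constructor <;> omega)
    rw [← hA] at fA
    rw [← hB] at fB
    by_cases hlt : p < 4 * N
    swap
    · have : A.factorization p = 0 := by
        apply Nat.factorization_eq_zero_of_not_dvd
        intro hd
        obtain ⟨k, hk, hk2⟩ := (hp.prime.dvd_finsetProd_iff _).1 hd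
        have := Nat.le_of_dvd (by omega) hk2
        rw [Finset.mem_range] at hk
        omega
      omega
    rcases hp.eq_two_or_odd with rfl | hodd
    · have : A.factorization 2 = 0 := by
        apply Nat.factorization_eq_zero_of_not_dvd
        intro hd
        obtain ⟨k, hk, hk2⟩ := (hp.prime.dvd_finsetProd_iff _).1 hd
        omega
      omega
    have h13 : p % 4 = 1 ∨ p % 4 = 3 := by omega
    rcases h13 with h | h
    · have : A.factorization p ≤ B.factorization p := by
        rw [fA, fB]
        apply Finset.sum_le_sum
        intro j _
        apply count1
        rw [Nat.pow_mod, h]; simp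
      omega
    · have hpP : p ∈ P := by
        rw [hP, Finset.mem_filter, Finset.mem_range]
        exact ⟨hlt, hp, h⟩
      have hMf : Nat.log p (4 * N) ≤ M.factorization p := by
        rw [← hp.pow_dvd_iff_le_factorization hM0]
        exact Finset.dvd_prod_of_mem (fun p => p ^ Nat.log p (4 * N)) hpP
      have : A.factorization p ≤ B.factorization p + Nat.log p (4 * N) := by
        rw [fA, fB]
        have e : Nat.log p (4 * N) = ∑ j ∈ Finset.Ico 1 (Nat.log p (4 * N) + 1), 1 := by simp
        nth_rewrite 3 [e]
        rw [← Finset.sum_add_distrib]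
        apply Finset.sum_le_sum
        intro j _
        have : (p ^ j) % 4 = 1 ∨ (p ^ j) % 4 = 3 := by
          have : (p ^ j) % 2 = 1 := by rw [Nat.pow_mod, hodd]; simp
          omega
        rcases this with h' | h'
        · exact (count1 N _ h').trans (Nat.le_succ _)
        · exact count3 N _ h'
      omega
  have h4 := Nat.le_of_dvd (Nat.pos_of_ne_zero (mul_ne_zero hB0 hM0)) h2
  have h5 : B * 2 ^ N ≤ B * (4 * N) ^ P.card := by
    calc B * 2 ^ N = 2 ^ N * B := mul_comm _ _
      _ ≤ B * M := h1.trans h4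
      _ ≤ _ := Nat.mul_le_mul_left _ h3
  exact Nat.le_of_mul_le_mul_left h5 (Nat.pos_of_ne_zero hB0)

lemma pow_aux (m : ℕ) (hm : 9 ≤ m) : 3 * (m + 3) ^ 2 ≤ 2 ^ m := by
  induction m, hm using Nat.le_induction with
  | base => norm_num
  | succ k hk ih => rw [pow_succ 2 k]; nlinarith

lemma large (n : ℕ) (hq : 2051 ≤ q43 n) : q43 n + 112 ≤ S43 n := by
  have hS := S43_lower n
  by_contra hcon
  have hmod := (q43_mem n).2
  obtain ⟨N, hN⟩ : ∃ N, q43 n = 4 * N + 3 := ⟨q43 n / 4, by omega⟩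
  have hcard : ((Finset.range (4 * N)).filter P43).card ≤ n := by
    apply card_le_n
    intro p hp
    rw [Finset.mem_filter, Finset.mem_range] at hp
    exact ⟨hp.2, by omega⟩
  have hb : 2 ^ N ≤ (4 * N) ^ n :=
    (key_bound N).trans (Nat.pow_le_pow_right (by omega) hcard)
  have hN1 : 512 ≤ N := by omega
  set m := Nat.log 2 N with hm
  have m1 : 2 ^ m ≤ N := Nat.pow_log_le_self 2 (by omega)
  have m2 : N < 2 ^ (m + 1) := Nat.lt_pow_succ_log_self (by norm_num) N
  have m3 : 9 ≤ m := by
    by_contra h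
    have : 2 ^ (m + 1) ≤ 2 ^ 9 := Nat.pow_le_pow_right (by norm_num) (by omega)
    omega
  have m4 := pow_aux m m3
  have h4 : 4 * N ≤ 2 ^ (m + 3) := by
    have : 2 ^ (m + 3) = 4 * 2 ^ (m + 1) := by ring
    omega
  have h5 : 2 ^ N ≤ 2 ^ ((m + 3) * n) := by
    rw [pow_mul]; exact hb.trans (Nat.pow_le_pow_left h4 n)
  have h6 : N ≤ (m + 3) * n := (Nat.pow_le_pow_iff_right (by norm_num)).1 h5
  have h7 : N ^ 2 ≤ (m + 3) ^ 2 * n ^ 2 := by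
    rw [← mul_pow]; exact Nat.pow_le_pow_left h6 2
  have h8 : n ^ 2 ≤ 2 * N + 57 := by omega
  have h9 : 3 * N ^ 2 ≤ N * (2 * N + 57) :=
    calc 3 * N ^ 2 ≤ 3 * ((m + 3) ^ 2 * n ^ 2) := by omega
      _ = (3 * (m + 3) ^ 2) * n ^ 2 := by ring
      _ ≤ N * (2 * N + 57) := Nat.mul_le_mul (m4.trans m1) h8
  nlinarith

lemma q43_ge (n : ℕ) (hn : 8 ≤ n) : 48 ≤ q43 n := by
  by_contra h
  have h1 : Nat.count P43 (q43 n) = n := Nat.count_nth_of_infinite P43_inf n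
  have h2 : Nat.count P43 (q43 n) ≤ Nat.count P43 47 := Nat.count_monotone P43 (by omega)
  have h3 : Nat.count P43 47 = 7 := by
    simp only [Nat.count_succ, Nat.count_zero, P43]
    norm_num
  omega

theorem stmt5 : ∀ n : ℕ, 8 ≤ n → (112 : ℤ) ≤ (S43 n : ℤ) - (q43 n : ℤ) := by
  intro n hn
  suffices h : q43 n + 112 ≤ S43 n by omega
  have h48 := q43_ge n hn
  by_cases c0 : 2051 ≤ q43 n
  · exact large n c0
  by_cases c1 : q43 n ≤ 72
  · have := sum_le_S n {3, 7, 11, 19, 23, 31, 43, 47} (by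
      simp only [Finset.mem_insert, Finset.mem_singleton]
      rintro p (rfl | rfl | rfl | rfl | rfl | rfl | rfl | rfl) <;>
        exact ⟨by norm_num [P43], by omega⟩)
    simp at this
    omega
  by_cases c2 : q43 n ≤ 143
  · have := sum_le_S n {3, 7, 11, 19, 23, 31, 43, 47, 71} (by
      simp only [Finset.mem_insert, Finset.mem_singleton]
      rintro p (rfl | rfl | rfl | rfl | rfl | rfl | rfl | rfl | rfl) <;>
        exact ⟨by norm_num [P43], by omega⟩)
    simp at this
    omega
  by_cases c3 : q43 n ≤ 282
  · have := sum_le_S n {3, 7, 11, 19, 23, 31, 43, 47, 71, 139} (by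
      simp only [Finset.mem_insert, Finset.mem_singleton]
      rintro p (rfl | rfl | rfl | rfl | rfl | rfl | rfl | rfl | rfl | rfl) <;>
        exact ⟨by norm_num [P43], by omega⟩)
    simp at this
    omega
  by_cases c4 : q43 n ≤ 553
  · have := sum_le_S n {3, 7, 11, 19, 23, 31, 43, 47, 71, 139, 271} (by
      simp only [Finset.mem_insert, Finset.mem_singleton]
      rintro p (rfl | rfl | rfl | rfl | rfl | rfl | rfl | rfl | rfl | rfl | rfl) <;>
        exact ⟨by norm_num [P43], by omega⟩)
    simp at this
    omega
  by_cases c5 : q43 n ≤ 1100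
  · have := sum_le_S n {3, 7, 11, 19, 23, 31, 43, 47, 71, 139, 271, 547} (by
      simp only [Finset.mem_insert, Finset.mem_singleton]
      rintro p (rfl | rfl | rfl | rfl | rfl | rfl | rfl | rfl | rfl | rfl | rfl | rfl) <;>
        exact ⟨by norm_num [P43], by omega⟩)
    simp at this
    omega
  · have := sum_le_S n {3, 7, 11, 19, 23, 31, 43, 47, 71, 139, 271, 547, 1091} (by
      simp only [Finset.mem_insert, Finset.mem_singleton]
      rintro p (rfl | rfl | rfl | rfl | rfl | rfl | rfl | rfl | rfl | rfl | rfl | rfl | rfl) <;>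
        exact ⟨by norm_num [P43], by omega⟩)
    simp at this
    omega
end

section
/- For every integer m ≥ 122, there exist k ≥ 1 and distinct prime numbers p₁, …, p_k, each congruent to 1 modulo 4, such that m = p₁ + ⋯ + p_k. -/
/-- every `m` in `[122, L]` is a sum of a subset of `A` -/
def RepS (A : Finset ℕ) (L : ℕ) : Prop :=
  ∀ m, 122 ≤ m → m ≤ L → ∃ T : Finset ℕ, T ⊆ A ∧ ∑ p ∈ T, p = m

theorem RepS.insert {A : Finset ℕ} {L q : ℕ} (h : RepS A L) (hq : q ∉ A) (hL : q + 121 ≤ L) :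
    RepS (insert q A) (L + q) := by
  intro m h1 h2
  by_cases hm : m ≤ L
  · obtain ⟨T, hT, hs⟩ := h m h1 hm
    exact ⟨T, hT.trans (Finset.subset_insert _ _), hs⟩
  · obtain ⟨T, hT, hs⟩ := h (m - q) (by omega) (by omega)
    refine ⟨Insert.insert q T, Finset.insert_subset_insert _ hT, ?_⟩
    rw [Finset.sum_insert (fun hh => hq (hT hh)), hs]
    omega

theorem RepS.union {A : Finset ℕ} {L : ℕ} (h : RepS A L) (U : Finset ℕ) (hd : Disjoint A U)
    (hL : ∀ q ∈ U, q + 121 ≤ L) : RepS (A ∪ U) (L + ∑ p ∈ U, p) := by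
  induction U using Finset.induction_on with
  | empty => simpa using h
  | insert q U hq ih =>
    have hd' := Finset.disjoint_insert_right.1 hd
    have h1 := ih hd'.2 (fun x hx => hL x (Finset.mem_insert_of_mem hx))
    have h2 := h1.insert (q := q) (by simp [hd'.1, hq])
      (le_add_right (hL q (Finset.mem_insert_self _ _)))
    rw [Finset.sum_insert hq, Finset.union_insert]
    convert h2 using 1
    ring

/-- primes `1 mod 4` below `y` -/
def PA (y : ℕ) : Finset ℕ := (Finset.range y).filter (fun p => p.Prime ∧ p % 4 = 1)

def PU (y : ℕ) : Finset ℕ := (Finset.Ico y (3 * y)).filter (fun p => p.Prime ∧ p % 4 = 1)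

theorem rep_step {y : ℕ} (h : RepS (PA y) (3 * y + 121)) (hc : 6 ≤ (PU y).card) :
    RepS (PA (3 * y)) (3 * (3 * y) + 121) := by
  have hd : Disjoint (PA y) (PU y) := by
    rw [Finset.disjoint_left]
    intro p hp hq
    simp only [PA, PU, Finset.mem_filter, Finset.mem_range, Finset.mem_Ico] at hp hq
    omega
  have h1 := h.union (PU y) hd (by
    intro q hq
    simp only [PU, Finset.mem_filter, Finset.mem_Ico] at hq
    omega)
  have h2 : 6 * y ≤ ∑ p ∈ PU y, p := by
    calc 6 * y ≤ (PU y).card * y := Nat.mul_le_mul_right _ hc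
      _ = (PU y).card • y := by simp
      _ ≤ _ := Finset.card_nsmul_le_sum _ _ _ (by
        intro q hq
        simp only [PU, Finset.mem_filter, Finset.mem_Ico] at hq
        omega)
  intro m hm1 hm2
  obtain ⟨T, hT, hs⟩ := h1 m hm1 (by omega)
  refine ⟨T, hT.trans ?_, hs⟩
  intro p hp
  simp only [PA, PU, Finset.mem_union, Finset.mem_filter, Finset.mem_range, Finset.mem_Ico] at hp ⊢
  rcases hp with hp | hp
  · exact ⟨by omega, hp.2⟩
  · exact ⟨hp.1.2, hp.2⟩

def srch : List ℕ → ℕ → Bool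
  | [], m => m == 0
  | p :: l, m => (Nat.ble p m && srch l (m - p)) || srch l m

theorem srch_sound (l : List ℕ) (hl : l.Nodup) (m : ℕ) (h : srch l m = true) :
    ∃ T : Finset ℕ, T ⊆ l.toFinset ∧ ∑ p ∈ T, p = m := by
  induction l generalizing m with
  | nil => exact ⟨∅, by simp, by simp [srch] at h; simp [h]⟩
  | cons p l ih =>
    have hl' := List.nodup_cons.1 hl
    simp only [srch, Bool.or_eq_true, Bool.and_eq_true, Nat.ble_eq] at h
    rcases h with ⟨h1, h2⟩ | h2
    · obtain ⟨T, hT, hs⟩ := ih hl'.2 _ h2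
      have hp : p ∉ T := fun hh => hl'.1 (by simpa using hT hh)
      refine ⟨Insert.insert p T, ?_, ?_⟩
      · rw [List.toFinset_cons]
        exact Finset.insert_subset_insert _ hT
      · rw [Finset.sum_insert hp, hs]
        omega
    · obtain ⟨T, hT, hs⟩ := ih hl'.2 _ h2
      refine ⟨T, ?_, hs⟩
      rw [List.toFinset_cons]
      exact hT.trans (Finset.subset_insert _ _)

theorem base0 : RepS [109,101,97,89,73,61,53,41,37,29,17,13,5].toFinset 603 := by
  intro m h1 h2
  apply srch_sound _ (by decide)
  have : ∀ m < 604, 122 ≤ m → srch [109,101,97,89,73,61,53,41,37,29,17,13,5] m = true := by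
    decide +kernel
  exact this m (by omega) h1

theorem base : RepS (PA 16384) (3 * 16384 + 121) := by
  have h := base0.union ∅ (by simp) (by simp)
  have h := h.insert (q := 461) (by decide) (by simp)
  have h := h.insert (q := 941) (by decide) (by simp)
  have h := h.insert (q := 1877) (by decide) (by simp)
  have h := h.insert (q := 3761) (by decide) (by simp)
  have h := h.insert (q := 7517) (by decide) (by simp)
  have h := h.insert (q := 15017) (by decide) (by simp)
  have h := h.insert (q := 16381) (by decide) (by simp)
  have h := h.insert (q := 16369) (by decide) (by simp)
  intro m hm1 hm2
  obtain ⟨T, hT, hs⟩ := h m hm1 (by simp; omega)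
  refine ⟨T, hT.trans ?_, hs⟩
  intro p hp
  simp only [Finset.union_empty, Finset.mem_insert, List.mem_toFinset, List.mem_cons,
    List.not_mem_nil, or_false] at hp
  simp only [PA, Finset.mem_filter, Finset.mem_range]
  rcases hp with h|h|h|h|h|h|h|h|h|h|h|h|h|h|h|h|h|h|h|h|h <;> subst h <;> norm_num

/-- the product `1 * 5 * 9 * ...` -/
def PP (n : ℕ) : ℕ := ∏ k ∈ Finset.range n, (4 * k + 1)

theorem PP_ne (n : ℕ) : PP n ≠ 0 := Finset.prod_ne_zero_iff.2 (by intros; omega)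

theorem PP_lower (n : ℕ) (hn : 1 ≤ n) : 4 ^ n * n.factorial ≤ 4 * n * PP n := by
  induction n, hn using Nat.le_induction with
  | base => simp [PP]
  | succ n hn ih =>
    have : PP (n + 1) = PP n * (4 * n + 1) := by simp [PP, Finset.prod_range_succ]
    rw [this, Nat.factorial_succ, pow_succ]
    calc 4 ^ n * 4 * ((n + 1) * n.factorial) = 4 * (n + 1) * (4 ^ n * n.factorial) := by ring
      _ ≤ 4 * (n + 1) * (4 * n * PP n) := Nat.mul_le_mul_left _ ih
      _ = 4 * (n + 1) * (PP n * (4 * n)) := by ring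
      _ ≤ _ := by gcongr; omega

theorem two_lower (n : ℕ) (hn : 1 ≤ n) :
    2 ^ n ≤ 2 ^ (n.factorial.factorization 2) * (2 * n) := by
  have h := Nat.sub_one_mul_factorization_factorial (n := n) Nat.prime_two
  have h2 := Nat.digit_sum_le 2 n
  have h3 : (Nat.digits 2 n).sum ≤ Nat.log 2 n + 1 := by
    have := List.sum_le_card_nsmul (Nat.digits 2 n) 1 (by
      intro x hx
      have := Nat.digits_lt_base (by norm_num) hx
      omega)
    rw [Nat.length_digits 2 n (by norm_num) (by omega)] at this
    simpa using this
  have h4 : 2 ^ (Nat.log 2 n) ≤ n := Nat.pow_log_le_self 2 (by omega)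
  calc 2 ^ n ≤ 2 ^ (n.factorial.factorization 2 + (Nat.log 2 n + 1)) :=
        Nat.pow_le_pow_right (by norm_num) (by omega)
    _ = 2 ^ (n.factorial.factorization 2) * (2 * 2 ^ Nat.log 2 n) := by ring
    _ ≤ _ := by gcongr

theorem count_le (n r : ℕ) (hr : 0 < r) (h4 : Nat.Coprime r 4) :
    ((Finset.range n).filter (fun k => r ∣ 4 * k + 1)).card ≤ n / r + 1 := by
  rcases Finset.eq_empty_or_nonempty ((Finset.range n).filter (fun k => r ∣ 4 * k + 1)) with h | h
  · simp [h]
  · obtain ⟨k0, hk0⟩ := h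
    have hk0 := (Finset.mem_filter.1 hk0).2
    have h1 := Nat.count_modEq_card n hr k0
    rw [Nat.count_eq_card_filter_range] at h1
    refine le_trans (Finset.card_le_card ?_) (le_of_eq_of_le h1 (by split_ifs <;> omega))
    intro k hk
    simp only [Finset.mem_filter] at hk ⊢
    refine ⟨hk.1, ?_⟩
    have h5 : 4 * k + 1 ≡ 4 * k0 + 1 [MOD r] :=
      ((Nat.modEq_zero_iff_dvd).2 hk.2).trans ((Nat.modEq_zero_iff_dvd).2 hk0).symm
    exact Nat.ModEq.cancel_left_of_coprime h4 (Nat.ModEq.add_right_cancel' 1 h5)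

theorem val_le (n p : ℕ) (hn : 1 ≤ n) (hp : p.Prime) (h2 : p ≠ 2) :
    (PP n).factorization p ≤ n.factorial.factorization p + Nat.log p (4 * n) := by
  set b := Nat.log p (4 * n) + 1 with hb
  have hlt : 4 * n < p ^ b := Nat.lt_pow_succ_log_self hp.one_lt _
  rw [Nat.factorization_factorial hp (n := n) (b := b)
    (Nat.lt_succ_of_le (Nat.log_mono_right (by omega)))]
  rw [PP, Nat.factorization_prod_apply (by intros; omega)]
  have hc : Nat.Coprime p 4 := by
    have : Nat.Coprime p (2 ^ 2) :=
      Nat.Coprime.pow_right 2 ((Nat.coprime_primes hp Nat.prime_two).2 h2)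
    simpa using this
  calc ∑ k ∈ Finset.range n, (4 * k + 1).factorization p
      = ∑ k ∈ Finset.range n, ∑ i ∈ Finset.Ico 1 b, if p ^ i ∣ 4 * k + 1 then 1 else 0 := by
        refine Finset.sum_congr rfl fun k hk => ?_
        have := Finset.mem_range.1 hk
        rw [Nat.factorization_eq_card_pow_dvd_of_lt hp (by omega) (b := b) (by omega)]
        simp
    _ = ∑ i ∈ Finset.Ico 1 b, ((Finset.range n).filter (fun k => p ^ i ∣ 4 * k + 1)).card := by
        rw [Finset.sum_comm]
        simp
    _ ≤ ∑ i ∈ Finset.Ico 1 b, (n / p ^ i + 1) :=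
        Finset.sum_le_sum fun i _ => count_le n _ (pow_pos hp.pos i) (hc.pow_left i)
    _ = _ := by
        rw [Finset.sum_add_distrib]
        simp [hb]

theorem val_zero (n p : ℕ) (h : ∀ k < n, ¬ p ∣ 4 * k + 1) : (PP n).factorization p = 0 := by
  rw [PP, Nat.factorization_prod_apply (by intros; omega)]
  exact Finset.sum_eq_zero fun k hk =>
    Nat.factorization_eq_zero_of_not_dvd (h k (Finset.mem_range.1 hk))

theorem fact_prod_pow (S : Finset ℕ) (hS : ∀ q ∈ S, q.Prime) (e : ℕ → ℕ) (p : ℕ) :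
    (∏ q ∈ S, q ^ e q).factorization p = if p ∈ S then e p else 0 := by
  rw [Nat.factorization_prod_apply (fun q hq => pow_ne_zero _ (hS q hq).ne_zero)]
  rw [← Finset.sum_ite_eq' S p e]
  refine Finset.sum_congr rfl fun q hq => ?_
  rw [(hS q hq).factorization_pow, Finsupp.single_apply]

theorem main_dvd (a : ℕ) (ha : 2 ≤ a) :
    PP (3 * a) * 2 ^ ((3 * a).factorial.factorization 2) ∣
      (3 * a).factorial *
      (∏ q ∈ (Finset.Icc 1 (Nat.sqrt (12 * a))).filter Nat.Prime, q ^ Nat.log q (12 * a)) *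
      (∏ q ∈ (Finset.range (4 * a + 1)).filter Nat.Prime, q ^ 1) * (∏ q ∈ PU (4 * a), q ^ 1) := by
  have hQ1 : ∀ q ∈ (Finset.Icc 1 (Nat.sqrt (12 * a))).filter Nat.Prime, q.Prime := by
    intro q hq; exact (Finset.mem_filter.1 hq).2
  have hQ2 : ∀ q ∈ (Finset.range (4 * a + 1)).filter Nat.Prime, q.Prime := by
    intro q hq; exact (Finset.mem_filter.1 hq).2
  have hQ3 : ∀ q ∈ PU (4 * a), q.Prime := by
    intro q hq; exact (Finset.mem_filter.1 hq).2.1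
  have e1 : (∏ q ∈ (Finset.Icc 1 (Nat.sqrt (12 * a))).filter Nat.Prime,
      q ^ Nat.log q (12 * a)) ≠ 0 :=
    Finset.prod_ne_zero_iff.2 fun q hq => pow_ne_zero _ (hQ1 q hq).ne_zero
  have e2 : (∏ q ∈ (Finset.range (4 * a + 1)).filter Nat.Prime, q ^ 1) ≠ 0 :=
    Finset.prod_ne_zero_iff.2 fun q hq => pow_ne_zero _ (hQ2 q hq).ne_zero
  have e3 : (∏ q ∈ PU (4 * a), q ^ 1) ≠ 0 :=
    Finset.prod_ne_zero_iff.2 fun q hq => pow_ne_zero _ (hQ3 q hq).ne_zero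
  have e0 := Nat.factorial_ne_zero (3 * a)
  have hP := PP_ne (3 * a)
  rw [← Nat.factorization_prime_le_iff_dvd (mul_ne_zero hP (by positivity))
    (mul_ne_zero (mul_ne_zero (mul_ne_zero e0 e1) e2) e3)]
  intro p hp
  rw [Nat.factorization_mul hP (by positivity),
    Nat.factorization_mul (mul_ne_zero (mul_ne_zero e0 e1) e2) e3,
    Nat.factorization_mul (mul_ne_zero e0 e1) e2, Nat.factorization_mul e0 e1]
  simp only [Finsupp.add_apply]
  rw [fact_prod_pow _ hQ1, fact_prod_pow _ hQ2 (fun _ => 1), fact_prod_pow _ hQ3 (fun _ => 1),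
    Nat.prime_two.factorization_pow, Finsupp.single_apply]
  by_cases h2 : p = 2
  · subst h2
    rw [val_zero _ _ (by intros; omega)]
    simp only [if_true]
    omega
  rw [if_neg (Ne.symm h2)]
  have hv := val_le (3 * a) p (by omega) hp h2
  rw [show 4 * (3 * a) = 12 * a by ring] at hv
  by_cases hs : p ≤ Nat.sqrt (12 * a)
  · rw [if_pos (Finset.mem_filter.2 ⟨Finset.mem_Icc.2 ⟨hp.pos, hs⟩, hp⟩)]
    omega
  have hlog : Nat.log p (12 * a) ≤ 1 := by
    have h3 : 12 * a < p ^ 2 := by rw [pow_two]; exact Nat.sqrt_lt.1 (by omega)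
    have := Nat.log_lt_of_lt_pow (by omega) h3
    omega
  by_cases h4 : p < 4 * a + 1
  · rw [if_pos (Finset.mem_filter.2 ⟨Finset.mem_range.2 h4, hp⟩)]
    omega
  by_cases h5 : p ∈ PU (4 * a)
  · simp only [h5, if_true]
    omega
  rw [val_zero]
  · omega
  intro k hk ⟨c, hc⟩
  apply h5
  have hc3 : c < 3 := by
    by_contra hcc
    have : p * 3 ≤ p * c := Nat.mul_le_mul_left _ (by omega)
    omega
  have : c = 1 := by
    interval_cases c <;> omega
  subst this
  simp only [PU, Finset.mem_filter, Finset.mem_Ico]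
  exact ⟨⟨by omega, by omega⟩, hp, by omega⟩

theorem pow28 (s : ℕ) (hs : 220 ≤ s) : (s + 1) ^ 28 ≤ 2 ^ s := by
  induction s, hs using Nat.le_induction with
  | base => norm_num
  | succ s hs ih =>
    have h : ((s + 1 + 1 : ℕ) : ℝ) ^ 28 ≤ 2 * ((s + 1 : ℕ) : ℝ) ^ 28 := by
      have hs' : (220 : ℝ) ≤ s := by exact_mod_cast hs
      have hb := one_add_mul_le_pow (a := -(1 / ((s : ℝ) + 2))) (by
        have : 1 / ((s : ℝ) + 2) ≤ 1 := by rw [div_le_one (by positivity)]; linarith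
        linarith) 28
      have h1 : 1 / ((s : ℝ) + 2) ≤ 1 / 56 := by
        apply one_div_le_one_div_of_le <;> linarith
      have h2 : (1 : ℝ) / 2 ≤ (1 + -(1 / ((s : ℝ) + 2))) ^ 28 := by
        refine le_trans ?_ hb
        push_cast
        linarith
      have h3 : 1 + -(1 / ((s : ℝ) + 2)) = (s + 1) / (s + 2) := by field_simp; ring
      rw [h3, div_pow, le_div_iff₀ (by positivity)] at h2
      push_cast
      rw [show (s : ℝ) + 1 + 1 = s + 2 by ring]
      linarith
    have h' : (s + 1 + 1) ^ 28 ≤ 2 * (s + 1) ^ 28 := by exact_mod_cast h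
    calc _ ≤ 2 * (s + 1) ^ 28 := h'
      _ ≤ 2 * 2 ^ s := by gcongr
      _ = _ := by ring

theorem pow_aux_s6 (x t : ℕ) : ((x * x) ^ t) ^ 14 = (x ^ 28) ^ t := by
  rw [← pow_two, ← pow_mul, ← pow_mul, ← pow_mul]
  congr 1
  ring

theorem final_ineq (a : ℕ) (ha : 4096 ≤ a) : (12 * a) ^ (Nat.sqrt (12 * a) + 7) < 2 ^ a := by
  set s := Nat.sqrt (12 * a) with hs
  have h1 : s * s ≤ 12 * a := Nat.sqrt_le _
  have h2 : 12 * a < (s + 1) * (s + 1) := Nat.lt_succ_sqrt (12 * a)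
  have h3 : 220 ≤ s := by rw [hs, Nat.le_sqrt]; omega
  have h4 := pow28 s h3
  have h5 : ((12 * a) ^ (s + 7)) ^ 14 < (2 ^ a) ^ 14 := by
    calc ((12 * a) ^ (s + 7)) ^ 14 < (((s + 1) * (s + 1)) ^ (s + 7)) ^ 14 := by
          gcongr
      _ = ((s + 1) ^ 28) ^ (s + 7) := by
          exact pow_aux_s6 _ _
      _ ≤ (2 ^ s) ^ (s + 7) := by gcongr
      _ = 2 ^ (s * (s + 7)) := by rw [pow_mul]
      _ ≤ 2 ^ (a * 14) := Nat.pow_le_pow_right (by norm_num) (by nlinarith)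
      _ = _ := by rw [pow_mul]
  exact lt_of_pow_lt_pow_left₀ 14 (by positivity) h5

theorem card_PU (a : ℕ) (ha : 4096 ≤ a) : 6 ≤ (PU (4 * a)).card := by
  by_contra hcon
  have hd := Nat.le_of_dvd ?_ (main_dvd a (by omega))
  swap
  · have e0 := Nat.factorial_pos (3 * a)
    refine Nat.mul_pos (Nat.mul_pos (Nat.mul_pos e0 ?_) ?_) ?_
    · exact Finset.prod_pos fun q hq => pow_pos (Finset.mem_filter.1 hq).2.pos _
    · exact Finset.prod_pos fun q hq => pow_pos (Finset.mem_filter.1 hq).2.pos _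
    · exact Finset.prod_pos fun q hq => pow_pos (Finset.mem_filter.1 hq).2.1.pos _
  set s := Nat.sqrt (12 * a) with hs
  have b1 : (∏ q ∈ (Finset.Icc 1 s).filter Nat.Prime, q ^ Nat.log q (12 * a)) ≤ (12 * a) ^ s := by
    calc _ ≤ (12 * a) ^ ((Finset.Icc 1 s).filter Nat.Prime).card :=
          Finset.prod_le_pow_card _ _ _ fun q hq => Nat.pow_log_le_self q (by omega)
      _ ≤ _ := Nat.pow_le_pow_right (by omega)
          ((Finset.card_filter_le _ _).trans (by simp))
  have b2 : (∏ q ∈ (Finset.range (4 * a + 1)).filter Nat.Prime, q ^ 1) ≤ 4 ^ (4 * a) := by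
    simpa [primorial] using primorial_le_four_pow (4 * a)
  have b3 : (∏ q ∈ PU (4 * a), q ^ 1) ≤ (12 * a) ^ 5 := by
    calc _ ≤ (12 * a) ^ (PU (4 * a)).card :=
          Finset.prod_le_pow_card _ _ _ fun q hq => by
            simp only [PU, Finset.mem_filter, Finset.mem_Ico] at hq
            rw [pow_one]
            omega
      _ ≤ _ := Nat.pow_le_pow_right (by omega) (by omega)
  have l1 := PP_lower (3 * a) (by omega)
  have l2 := two_lower (3 * a) (by omega)
  have fi := final_ineq a ha
  rw [← hs] at fi
  set F := (3 * a).factorial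
  set V := 2 ^ F.factorization 2
  have hF : 0 < F := Nat.factorial_pos _
  have key : F * (2 ^ (8 * a) * 2 ^ a) ≤ F * (2 ^ (8 * a) * (12 * a) ^ (s + 7)) := by
    calc F * (2 ^ (8 * a) * 2 ^ a) = (4 ^ (3 * a) * F) * 2 ^ (3 * a) := by
          rw [show (4 : ℕ) = 2 ^ 2 by norm_num, ← pow_mul, ← pow_add]
          rw [mul_comm (2 ^ _) F, mul_assoc, ← pow_add]
          ring_nf
      _ ≤ (4 * (3 * a) * PP (3 * a)) * (V * (2 * (3 * a))) := Nat.mul_le_mul l1 l2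
      _ = (72 * a ^ 2) * (PP (3 * a) * V) := by ring
      _ ≤ (12 * a) ^ 2 * (F * (12 * a) ^ s * 4 ^ (4 * a) * (12 * a) ^ 5) := by
          apply Nat.mul_le_mul
          · nlinarith
          · exact hd.trans (by gcongr)
      _ = _ := by
          rw [show (4 : ℕ) ^ (4 * a) = 2 ^ (8 * a) by
            rw [show (4 : ℕ) = 2 ^ 2 by norm_num, ← pow_mul]; ring_nf]
          rw [pow_add]
          ring
  have k2 := Nat.le_of_mul_le_mul_left key hF
  have k3 := Nat.le_of_mul_le_mul_left k2 (by positivity)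
  omega

theorem all_rep (k : ℕ) : RepS (PA (4 * (4096 * 3 ^ k))) (3 * (4 * (4096 * 3 ^ k)) + 121) := by
  induction k with
  | zero => exact base
  | succ k ih =>
    have h := rep_step ih (card_PU _ (by have := Nat.one_le_pow k 3 (by norm_num); omega))
    rw [show 4 * (4096 * 3 ^ (k + 1)) = 3 * (4 * (4096 * 3 ^ k)) by ring]
    exact h

/-- **Theorem 1 (a).**
For every integer `m ≥ 122`, there exist finitely many (at least one) distinct primes,
each congruent to `1` modulo `4`, whose sum is `m`. -/
theorem stmt6 (m : ℕ) (hm : 122 ≤ m) :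
    ∃ T : Finset ℕ, T.Nonempty ∧ (∀ p ∈ T, p.Prime ∧ p % 4 = 1) ∧ ∑ p ∈ T, p = m := by
  have hk : m < 3 ^ m := Nat.lt_pow_self (by norm_num)
  obtain ⟨T, hT, hs⟩ := all_rep m m hm (by omega)
  refine ⟨T, ?_, fun p hp => (Finset.mem_filter.1 (hT hp)).2, hs⟩
  rw [Finset.nonempty_iff_ne_empty]
  rintro rfl
  simp at hs
  omega
end

section
/- For every integer m ≥ 56, there exist ℓ ≥ 1 and distinct prime numbers q₁, …, q_ℓ, each congruent to 3 modulo 4, such that m = q₁ + ⋯ + q_ℓ. -/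
def P3 (n : ℕ) : Finset ℕ := (Finset.range (n+1)).filter (fun p => p.Prime ∧ p % 4 = 3)

lemma P3_succ_of (n : ℕ) (h : (n+1).Prime ∧ (n+1) % 4 = 3) :
    P3 (n+1) = insert (n+1) (P3 n) := by
  unfold P3
  rw [Finset.range_add_one (n := n+1), Finset.filter_insert, if_pos h]

lemma P3_succ_not (n : ℕ) (h : ¬ ((n+1).Prime ∧ (n+1) % 4 = 3)) :
    P3 (n+1) = P3 n := by
  unfold P3
  rw [Finset.range_add_one (n := n+1), Finset.filter_insert, if_neg h]

lemma P3_not_mem (n : ℕ) : n+1 ∉ P3 n := by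
  simp [P3]

lemma P3_mono {a b : ℕ} (h : a ≤ b) : P3 a ⊆ P3 b := by
  intro x hx
  simp only [P3, Finset.mem_filter, Finset.mem_range] at hx ⊢
  exact ⟨by omega, hx.2⟩

lemma P3_sum (n : ℕ) : 4 * (P3 n).card ≤ n + 1 ∧
    2 * (P3 n).card ^ 2 + (P3 n).card ≤ ∑ q ∈ P3 n, q := by
  induction n with
  | zero => decide
  | succ n ih =>
    by_cases h : (n+1).Prime ∧ (n+1) % 4 = 3
    · rw [P3_succ_of n h, Finset.card_insert_of_notMem (P3_not_mem n),
        Finset.sum_insert (P3_not_mem n)]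
      obtain ⟨h1, h2⟩ := ih
      have h3 := h.2
      constructor
      · omega
      · have : 4 * (P3 n).card + 3 ≤ n + 1 := by omega
        nlinarith
    · rw [P3_succ_not n h]
      exact ⟨by omega, ih.2⟩

def reach : List ℕ → ℕ → Bool
  | [], m => m == 0
  | a :: l, m => (Nat.ble a m && reach l (m - a)) || reach l m

lemma reach_spec (l : List ℕ) : ∀ m, l.Nodup → reach l m = true →
    ∃ T : Finset ℕ, T ⊆ l.toFinset ∧ ∑ q ∈ T, q = m := by
  induction l with
  | nil =>
    intro m _ h
    simp [reach] at h
    exact ⟨∅, by simp, by simp [h]⟩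
  | cons a l ih =>
    intro m hn h
    rw [List.nodup_cons] at hn
    simp only [reach, Bool.or_eq_true, Bool.and_eq_true, Nat.ble_eq] at h
    rcases h with ⟨h1, h2⟩ | h
    · obtain ⟨T, hT, hs⟩ := ih _ hn.2 h2
      have ha : a ∉ T := fun h => hn.1 (by simpa using hT h)
      refine ⟨insert a T, ?_, ?_⟩
      · rw [List.toFinset_cons]
        exact Finset.insert_subset_insert _ hT
      · rw [Finset.sum_insert ha, hs]; omega
    · obtain ⟨T, hT, hs⟩ := ih _ hn.2 h
      exact ⟨T, hT.trans (by rw [List.toFinset_cons]; exact Finset.subset_insert _ _), hs⟩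

lemma base_case (m : ℕ) (h1 : 56 ≤ m) (h2 : m ≤ 404) :
    ∃ T : Finset ℕ, T ⊆ P3 82 ∧ ∑ q ∈ T, q = m := by
  have key : ∀ i < 405, 56 ≤ i → reach [79,71,67,59,47,43,31,23,19,11,7,3] i = true := by
    decide +kernel
  obtain ⟨T, hT, hs⟩ := reach_spec _ m (by decide) (key m (by omega) h1)
  refine ⟨T, hT.trans ?_, hs⟩
  intro x hx
  simp only [List.mem_toFinset, List.mem_cons, List.not_mem_nil, or_false] at hx
  simp only [P3, Finset.mem_filter, Finset.mem_range]
  rcases hx with h|h|h|h|h|h|h|h|h|h|h|h <;> subst h <;> norm_num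

lemma sum82 : ∑ q ∈ P3 82, q = 460 := by decide +kernel

/-- multiples count -/
lemma count_le_s7 (N d : ℕ) :
    ((Finset.range N).filter (fun j => d ∣ 4*j+3)).card ≤
    ((Finset.range N).filter (fun j => d ∣ 2*j+1)).card +
      (if d % 4 = 3 ∧ d ≤ 4 * N then 1 else 0) := by
  have hodd : ∀ j b, 4*j+3 = d*b → (d % 4 = 1 ∧ b % 4 = 3) ∨ (d % 4 = 3 ∧ b % 4 = 1) := by
    intro j b h
    have h1 : (d * b) % 4 = 3 := by omega
    rw [Nat.mul_mod] at h1
    have hd : d % 4 < 4 := Nat.mod_lt _ (by norm_num)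
    have hb : b % 4 < 4 := Nat.mod_lt _ (by norm_num)
    generalize d % 4 = u at *
    generalize b % 4 = v at *
    interval_cases u <;> interval_cases v <;> simp_all
  by_cases hd3 : d % 4 = 3
  · -- j = (d b - 3)/4, b = 4i+1, i ≥ 1 goes to (2i-1) d = 2 j' + 1
    have hsub : (Finset.range N).filter (fun j => d ∣ 4*j+3) ⊆
        ((Finset.range N).filter (fun j => d ∣ 4*j+3 ∧ d < 4*j+3)) ∪
        (if d % 4 = 3 ∧ d ≤ 4 * N then {(d-3)/4} else ∅) := by
      intro j hj
      simp only [Finset.mem_filter, Finset.mem_range] at hj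
      obtain ⟨hj1, hj2⟩ := hj
      have hle := Nat.le_of_dvd (by omega) hj2
      rw [Finset.mem_union]
      rcases hle.lt_or_eq with h | h
      · left; simp; exact ⟨hj1, hj2, h⟩
      · right; rw [if_pos ⟨hd3, by omega⟩]; simp; omega
    refine (Finset.card_le_card hsub).trans ((Finset.card_union_le _ _).trans ?_)
    refine Nat.add_le_add ?_ (by split_ifs <;> simp)
    have hprop : ∀ j, d ∣ 4*j+3 → d < 4*j+3 → ∃ i, 4*j+3 = d*(4*i+5) := by
      rintro j ⟨b, hb⟩ hlt
      have : b % 4 = 1 := by rcases hodd j b hb with h | h <;> omega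
      have hb1 : b ≠ 1 := by rintro rfl; omega
      exact ⟨(b-5)/4, by rw [hb]; congr 1; omega⟩
    -- d(2i+1) = 2 j' + 1, 2(2j'+1) = d (4i+2) = 4j+3 - 3d
    refine Finset.card_le_card_of_injOn (fun j => (4*j+3-3*d-2)/4) ?_ ?_
    · intro j hj
      simp only [Finset.coe_filter, Finset.mem_range, Set.mem_ofPred_eq] at hj ⊢
      obtain ⟨i, hi⟩ := hprop j hj.2.1 hj.2.2
      have e : 4*j+3 = 3*d + 2*(d*(2*i+1)) := by rw [hi]; ring
      have o : d*(2*i+1) % 2 = 1 := by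
        rw [Nat.mul_mod]
        have : d % 2 = 1 := by omega
        have h2 : (2*i+1) % 2 = 1 := by omega
        rw [this, h2]
      refine ⟨by omega, ⟨2*i+1, ?_⟩⟩
      omega
    · intro j hj j' hj' h
      simp only [Finset.coe_filter, Finset.mem_range, Set.mem_ofPred_eq] at hj hj' h
      obtain ⟨i, hi⟩ := hprop j hj.2.1 hj.2.2
      obtain ⟨i', hi'⟩ := hprop j' hj'.2.1 hj'.2.2
      have e : 4*j+3 = 3*d + 2*(d*(2*i+1)) := by rw [hi]; ring
      have e' : 4*j'+3 = 3*d + 2*(d*(2*i'+1)) := by rw [hi']; ring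
      have p1 : 0 < d*(2*i+1) := Nat.mul_pos (by omega) (by omega)
      have p2 : 0 < d*(2*i'+1) := Nat.mul_pos (by omega) (by omega)
      omega
  · have hprop : ∀ j, d ∣ 4*j+3 → d % 4 = 1 ∧ ∃ i, 4*j+3 = d*(4*i+3) := by
      rintro j ⟨b, hb⟩
      have : d % 4 = 1 ∧ b % 4 = 3 := by rcases hodd j b hb with h | h <;> omega
      exact ⟨this.1, (b-3)/4, by rw [hb]; congr 1; omega⟩
    refine le_trans ?_ (Nat.le_add_right _ _)
    refine Finset.card_le_card_of_injOn (fun j => (4*j+3-d-2)/4) ?_ ?_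
    · intro j hj
      simp only [Finset.coe_filter, Finset.mem_range, Set.mem_ofPred_eq] at hj ⊢
      obtain ⟨hd, i, hi⟩ := hprop j hj.2
      have e : 4*j+3 = d + 2*(d*(2*i+1)) := by rw [hi]; ring
      have o : d*(2*i+1) % 2 = 1 := by
        rw [Nat.mul_mod]
        have : d % 2 = 1 := by omega
        have h2 : (2*i+1) % 2 = 1 := by omega
        rw [this, h2]
      refine ⟨by omega, ⟨2*i+1, ?_⟩⟩
      omega
    · intro j hj j' hj' h
      simp only [Finset.coe_filter, Finset.mem_range, Set.mem_ofPred_eq] at hj hj' h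
      obtain ⟨hd, i, hi⟩ := hprop j hj.2
      obtain ⟨_, i', hi'⟩ := hprop j' hj'.2
      have e : 4*j+3 = d + 2*(d*(2*i+1)) := by rw [hi]; ring
      have e' : 4*j'+3 = d + 2*(d*(2*i'+1)) := by rw [hi']; ring
      have p1 : 0 < d*(2*i+1) := Nat.mul_pos (by omega) (by omega)
      have p2 : 0 < d*(2*i'+1) := Nat.mul_pos (by omega) (by omega)
      omega

open ArithmeticFunction in
lemma log_sum (N : ℕ) (f : ℕ → ℕ) (hf : ∀ j < N, f j ≠ 0 ∧ f j ≤ 4 * N) :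
    ∑ j ∈ Finset.range N, Real.log (f j) =
    ∑ d ∈ Finset.range (4*N+1), vonMangoldt d *
      (((Finset.range N).filter (fun j => d ∣ f j)).card : ℝ) := by
  have : ∀ j ∈ Finset.range N, Real.log (f j) =
      ∑ d ∈ Finset.range (4*N+1), if d ∣ f j then vonMangoldt d else 0 := by
    intro j hj
    have h := hf j (Finset.mem_range.1 hj)
    rw [← vonMangoldt_sum, ← Finset.sum_filter]
    apply Finset.sum_congr _ (fun _ _ => rfl)
    ext d
    simp only [Nat.mem_divisors, Finset.mem_filter, Finset.mem_range]
    constructor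
    · rintro ⟨h1, h2⟩
      exact ⟨by have := Nat.le_of_dvd (by omega) h1; omega, h1⟩
    · rintro ⟨h1, h2⟩; exact ⟨h2, h.1⟩
  rw [Finset.sum_congr rfl this, Finset.sum_comm]
  apply Finset.sum_congr rfl
  intro d _
  rw [← Finset.sum_filter, Finset.sum_const, nsmul_eq_mul, mul_comm]

open ArithmeticFunction in
lemma psi_lower (N : ℕ) : (N : ℝ) * Real.log 2 ≤
    ∑ d ∈ (Finset.range (4*N+1)).filter (fun d => d % 4 = 3), vonMangoldt d := by
  have h1 := log_sum N (fun j => 4*j+3) (fun j hj => ⟨by omega, by omega⟩)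
  have h2 := log_sum N (fun j => 2*j+1) (fun j hj => ⟨by omega, by omega⟩)
  have h3 : ∑ j ∈ Finset.range N, (Real.log 2 + Real.log ((2*j+1 : ℕ) : ℝ)) ≤
      ∑ j ∈ Finset.range N, Real.log ((4*j+3 : ℕ) : ℝ) := by
    apply Finset.sum_le_sum
    intro j _
    rw [← Real.log_mul (by norm_num) (by positivity)]
    apply Real.log_le_log (by positivity)
    push_cast; linarith
  rw [Finset.sum_add_distrib, Finset.sum_const, Finset.card_range, nsmul_eq_mul, h1, h2] at h3
  have h4 : ∑ d ∈ Finset.range (4*N+1), vonMangoldt d *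
      (((Finset.range N).filter (fun j => d ∣ 4*j+3)).card : ℝ) ≤
      ∑ d ∈ Finset.range (4*N+1), (vonMangoldt d *
      (((Finset.range N).filter (fun j => d ∣ 2*j+1)).card : ℝ) +
      if d % 4 = 3 then vonMangoldt d else 0) := by
    apply Finset.sum_le_sum
    intro d hd
    have hd := Finset.mem_range.1 hd
    have hc := count_le_s7 N d
    have hc' : (((Finset.range N).filter (fun j => d ∣ 4*j+3)).card : ℝ) ≤
      (((Finset.range N).filter (fun j => d ∣ 2*j+1)).card : ℝ) +
        (if d % 4 = 3 then 1 else 0) := by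
      have : (d % 4 = 3 ∧ d ≤ 4 * N) ↔ d % 4 = 3 := by constructor <;> intro h <;> omega
      simp only [this] at hc
      exact_mod_cast hc
    have := mul_le_mul_of_nonneg_left hc' (vonMangoldt_nonneg (n := d))
    refine this.trans (le_of_eq ?_)
    split_ifs <;> ring
  rw [Finset.sum_add_distrib, ← Finset.sum_filter] at h4
  linarith

open ArithmeticFunction in
lemma psi_upper (n : ℕ) :
    ∑ d ∈ (Finset.range (n+1)).filter (fun d => d % 4 = 3), vonMangoldt d ≤
    ((P3 n).card : ℝ) * Real.log n := by
  have e : ∑ d ∈ (Finset.range (n+1)).filter (fun d => d % 4 = 3), vonMangoldt d =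
      ∑ d ∈ ((Finset.range (n+1)).filter (fun d => d % 4 = 3)).filter IsPrimePow,
        Real.log (d.minFac) := by
    rw [Finset.sum_filter (p := IsPrimePow)]
    apply Finset.sum_congr rfl
    intro d _
    rw [vonMangoldt_apply]
  have hmap : ∀ d ∈ ((Finset.range (n+1)).filter (fun d => d % 4 = 3)).filter IsPrimePow,
      d.minFac ∈ P3 n := by
    intro d hd
    simp only [Finset.mem_filter, Finset.mem_range] at hd
    obtain ⟨⟨h1, h2⟩, h3⟩ := hd
    have hp : d.minFac.Prime := Nat.minFac_prime (by omega)
    simp only [P3, Finset.mem_filter, Finset.mem_range]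
    refine ⟨by have := Nat.minFac_le (n := d) (by omega); omega, hp, ?_⟩
    obtain ⟨p, k, hpp, hk, rfl⟩ := (isPrimePow_nat_iff _).1 h3
    rw [Nat.pow_minFac hk.ne', hpp.minFac_eq] 
    rw [Nat.pow_mod] at h2
    have : p % 4 < 4 := Nat.mod_lt _ (by norm_num)
    generalize p % 4 = u at *
    interval_cases u
    · simp [hk.ne'] at h2
    · simp at h2
    · exfalso
      have : (2^k % 4) % 2 = 1 := by rw [h2]
      rw [Nat.mod_mod_of_dvd _ (by norm_num)] at this
      obtain ⟨k, rfl⟩ := Nat.exists_eq_succ_of_ne_zero hk.ne'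
      rw [pow_succ] at this; omega
    · rfl
  rw [e, ← Finset.sum_fiberwise_of_maps_to hmap, ← nsmul_eq_mul]
  apply Finset.sum_le_card_nsmul
  intro p hp
  have hpp : p.Prime ∧ p ≤ n := by
    simp only [P3, Finset.mem_filter, Finset.mem_range] at hp
    exact ⟨hp.2.1, by omega⟩
  have hpos : 0 ≤ Real.log p := Real.log_natCast_nonneg p
  calc _ = ∑ d ∈ (((Finset.range (n+1)).filter (fun d => d % 4 = 3)).filter
        IsPrimePow).filter (fun d => d.minFac = p), Real.log p := by
        apply Finset.sum_congr rfl
        intro d hd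
        rw [(Finset.mem_filter.1 hd).2]
    _ = ((((Finset.range (n+1)).filter (fun d => d % 4 = 3)).filter
        IsPrimePow).filter (fun d => d.minFac = p)).card * Real.log p := by
        rw [Finset.sum_const, nsmul_eq_mul]
    _ ≤ (Nat.log p n : ℝ) * Real.log p := by
        apply mul_le_mul_of_nonneg_right _ hpos
        have : (((Finset.range (n+1)).filter (fun d => d % 4 = 3)).filter
          IsPrimePow).filter (fun d => d.minFac = p) ⊆
          (Finset.Icc 1 (Nat.log p n)).image (fun k => p^k) := by
          intro d hd
          simp only [Finset.mem_filter, Finset.mem_range] at hd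
          obtain ⟨⟨⟨h1, h2⟩, h3⟩, h4⟩ := hd
          obtain ⟨q, k, hq, hk, rfl⟩ := (isPrimePow_nat_iff _).1 h3
          rw [Nat.pow_minFac hk.ne', hq.minFac_eq] at h4
          subst h4
          simp only [Finset.mem_image, Finset.mem_Icc]
          exact ⟨k, ⟨hk, Nat.le_log_of_pow_le hq.one_lt (by omega)⟩, rfl⟩
        have h := (Finset.card_le_card this).trans Finset.card_image_le
        simp at h
        exact_mod_cast h
    _ = Real.log ((p ^ Nat.log p n : ℕ) : ℝ) := by push_cast; rw [Real.log_pow]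
    _ ≤ Real.log n := by
        apply Real.log_le_log
        · exact_mod_cast pow_pos hpp.1.pos _
        · exact_mod_cast Nat.pow_log_le_self p (by have := hpp.1.pos; omega)

lemma pow_bound (N : ℕ) (hN : 0 < N) : 2 ^ N ≤ (4*N) ^ (P3 (4*N)).card := by
  have h := (psi_lower N).trans (psi_upper (4*N))
  rw [← Real.log_pow, ← Real.log_pow] at h
  have h' := (Real.log_le_log_iff (by positivity) (by positivity)).1 h
  exact_mod_cast h'

lemma two_pow_big (t : ℕ) (ht : 13 ≤ t) : 40 * (t+1)^2 ≤ 2^t := by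
  induction t, ht using Nat.le_induction with
  | base => norm_num
  | succ t ht ih =>
    have : 2^(t+1) = 2 * 2^t := by ring
    nlinarith

lemma pi_large (n : ℕ) (hn : 8192 ≤ n) : n + 112 ≤ 2 * (P3 n).card ^ 2 := by
  set k := (P3 n).card with hk
  by_contra! hlt
  have hN : 0 < n/4 := by omega
  have h1 := pow_bound (n/4) hN
  have h2 : (P3 (4*(n/4))).card ≤ k := Finset.card_le_card (P3_mono (by omega))
  set t := Nat.log 2 n with htdef
  have ht1 : 2^t ≤ n := Nat.pow_log_le_self 2 (by omega)
  have ht2 : n < 2^(t+1) := Nat.lt_pow_succ_log_self (by norm_num) n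
  have ht : 13 ≤ t := Nat.le_log_of_pow_le (by norm_num) (by omega)
  have h3 : 2^(n/4) ≤ 2^((t+1)*k) := by
    rw [pow_mul]
    calc _ ≤ _ := h1
      _ ≤ (4*(n/4))^k := Nat.pow_le_pow_right (by omega) h2
      _ ≤ _ := Nat.pow_le_pow_left (by omega) _
  have h4 : n/4 ≤ (t+1)*k := (Nat.pow_le_pow_iff_right (by norm_num)).1 h3
  have h5 := two_pow_big t ht
  have h6 : n ≤ 4*((t+1)*k) + 3 := by omega
  have h7 : n * n ≤ 32 * ((t+1)*k)^2 := by
    have : n ≤ 4*((t+1)*k) + 3 := h6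
    have h8 : 2000 ≤ (t+1)*k := by omega
    nlinarith
  have h9 : 32 * ((t+1)*k)^2 = 16 * (t+1)^2 * (2 * k^2) := by ring
  have h10 : 40 * (t+1)^2 ≤ n := h5.trans ht1
  have h11 : 40 * (t+1)^2 * (2*k^2) ≤ n * (n+112) := Nat.mul_le_mul h10 hlt.le
  nlinarith

lemma fast_card (n : ℕ) (hn : n < 1369) :
    ((List.range (n+1)).countP
      (fun p => Nat.beq (p % 4) 3 && Nat.beq (Nat.gcd p 200560490130) 1)) ≤ (P3 n).card := by
  rw [List.countP_eq_length_filter, ← List.toFinset_card_of_nodup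
    (List.Nodup.filter _ List.nodup_range)]
  apply Finset.card_le_card
  intro p hp
  simp only [List.mem_toFinset, List.mem_filter, List.mem_range, Bool.and_eq_true,
    Nat.beq_eq] at hp
  obtain ⟨h1, h2, h3⟩ := hp
  simp only [P3, Finset.mem_filter, Finset.mem_range]
  refine ⟨h1, ?_, h2⟩
  by_contra hnp
  have hle := Nat.minFac_sq_le_self (n := p) (by omega) hnp
  have hpr : p.minFac.Prime := Nat.minFac_prime (by omega)
  have hdv := Nat.minFac_dvd p
  have hlt : p.minFac < 37 := by nlinarith
  have hd : p.minFac ∣ 200560490130 := by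
    generalize p.minFac = u at *
    clear hdv hle
    interval_cases u <;> first | (exfalso; revert hpr; norm_num; done) | norm_num
  have := Nat.dvd_gcd hdv hd
  rw [h3] at this
  exact hpr.one_lt.ne' (Nat.dvd_one.1 this)

lemma card82 : 12 ≤ (P3 82).card := by decide +kernel

lemma pi_all (n : ℕ) (hn : 82 ≤ n) : n + 112 ≤ 2 * (P3 n).card ^ 2 := by
  have mk : ∀ a c : ℕ, c ≤ (P3 a).card → a ≤ n → n + 112 ≤ 2*c^2 →
      n + 112 ≤ 2 * (P3 n).card ^ 2 := by
    intro a c h1 h2 h3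
    have := h1.trans (Finset.card_le_card (P3_mono h2))
    have := Nat.pow_le_pow_left this 2
    omega
  by_cases h : n < 170
  · exact mk 82 12 card82 hn (by omega)
  by_cases h' : n < 330
  · exact mk 170 15 ((by decide +kernel : 15 ≤ _).trans (fast_card 170 (by norm_num))) (by omega) (by omega)
  by_cases h'' : n < 800
  · exact mk 330 25 ((by decide +kernel : 25 ≤ _).trans (fast_card 330 (by norm_num))) (by omega) (by omega)
  by_cases h3 : n < 5000
  · exact mk 800 52 ((by decide +kernel : 52 ≤ _).trans (fast_card 800 (by norm_num))) (by omega) (by omega)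
  by_cases h4 : n < 8192
  · exact mk 1300 65 ((by decide +kernel : 65 ≤ _).trans (fast_card 1300 (by norm_num))) (by omega) (by omega)
  exact pi_large n (by omega)

lemma main_ind (n : ℕ) (hn : 82 ≤ n) : ∀ m, 56 ≤ m → m + 56 ≤ ∑ q ∈ P3 n, q →
    ∃ T : Finset ℕ, T ⊆ P3 n ∧ ∑ q ∈ T, q = m := by
  induction n, hn using Nat.le_induction with
  | base =>
    intro m h1 h2
    rw [sum82] at h2
    exact base_case m h1 (by omega)
  | succ n hn ih =>
    intro m h1 h2
    by_cases h : (n+1).Prime ∧ (n+1) % 4 = 3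
    · rw [P3_succ_of n h] at h2 ⊢
      rw [Finset.sum_insert (P3_not_mem n)] at h2
      have a1 := pi_all n hn
      have a2 := (P3_sum n).2
      by_cases hm : m + 56 ≤ ∑ q ∈ P3 n, q
      · obtain ⟨T, hT, hs⟩ := ih m h1 hm
        exact ⟨T, hT.trans (Finset.subset_insert _ _), hs⟩
      · obtain ⟨T, hT, hs⟩ := ih (m - (n+1)) (by omega) (by omega)
        refine ⟨insert (n+1) T, Finset.insert_subset_insert _ hT, ?_⟩
        rw [Finset.sum_insert (fun h => P3_not_mem n (hT h)), hs]
        omega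
    · rw [P3_succ_not n h] at h2 ⊢
      exact ih m h1 h2

/-- **Theorem 1 (b).**
For every integer `m ≥ 56`, there exist finitely many (at least one) distinct primes,
each congruent to `3` modulo `4`, whose sum is `m`. -/
theorem stmt7 (m : ℕ) (hm : 56 ≤ m) :
    ∃ T : Finset ℕ, T.Nonempty ∧ (∀ q ∈ T, q.Prime ∧ q % 4 = 3) ∧ ∑ q ∈ T, q = m := by
  have a1 := pi_all (m+82) (by omega)
  have a2 := (P3_sum (m+82)).2
  obtain ⟨T, hT, hs⟩ := main_ind (m+82) (by omega) m hm (by omega)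
  refine ⟨T, ?_, ?_, hs⟩
  · rw [Finset.nonempty_iff_ne_empty]
    rintro rfl
    simp at hs; omega
  · intro q hq
    exact (Finset.mem_filter.1 (hT hq)).2
end

section
/- For every integer m ≥ 122, there exist k, ℓ ≥ 1, distinct primes p₁, …, p_k all congruent to 1 modulo 4, and distinct primes q₁, …, q_ℓ all congruent to 3 modulo 4, such that m = p₁ + ⋯ + p_k = q₁ + ⋯ + q_ℓ. -/
namespace MSum

def cl (a n : ℕ) : Finset ℕ := (Finset.range n).filter (fun p => p.Prime ∧ p % 4 = a)

def S (a n : ℕ) : ℕ := ∑ p ∈ cl a n, p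

lemma S_mono (a : ℕ) {m n : ℕ} (h : m ≤ n) : S a m ≤ S a n := by
  apply Finset.sum_le_sum_of_subset
  intro p hp
  simp only [cl, Finset.mem_filter, Finset.mem_range] at hp ⊢
  exact ⟨by omega, hp.2⟩

lemma cl_succ_of {a n : ℕ} (h : n.Prime ∧ n % 4 = a) : cl a (n + 1) = insert n (cl a n) := by
  simp [cl, Finset.range_add_one, Finset.filter_insert, h.1, h.2]

lemma cl_succ_not {a n : ℕ} (h : ¬ (n.Prime ∧ n % 4 = a)) : cl a (n + 1) = cl a n := by
  simp [cl, Finset.range_add_one, Finset.filter_insert, h]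

lemma not_mem_cl (a n : ℕ) : n ∉ cl a n := by simp [cl]

lemma S_succ_of {a n : ℕ} (h : n.Prime ∧ n % 4 = a) : S a (n + 1) = n + S a n := by
  rw [S, cl_succ_of h, Finset.sum_insert (not_mem_cl a n), S]

lemma S_succ_not {a n : ℕ} (h : ¬ (n.Prime ∧ n % 4 = a)) : S a (n + 1) = S a n := by
  rw [S, cl_succ_not h, S]

def Cov (a n : ℕ) : Prop := ∀ m, 122 ≤ m → m + 122 ≤ S a n → ∃ T ⊆ cl a n, ∑ p ∈ T, p = m

lemma cov_succ {a n : ℕ} (h : Cov a n) (hn : n + 243 ≤ S a n) : Cov a (n + 1) := by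
  intro m hm hm2
  by_cases hp : n.Prime ∧ n % 4 = a
  · rw [S_succ_of hp] at hm2
    rw [cl_succ_of hp]
    by_cases h1 : m + 122 ≤ S a n
    · obtain ⟨T, hT, hs⟩ := h m hm h1
      exact ⟨T, hT.trans (Finset.subset_insert _ _), hs⟩
    · obtain ⟨T, hT, hs⟩ := h (m - n) (by omega) (by omega)
      refine ⟨insert n T, Finset.insert_subset_insert _ hT, ?_⟩
      rw [Finset.sum_insert (fun hh => not_mem_cl a n (hT hh)), hs]
      omega
  · rw [S_succ_not hp] at hm2
    rw [cl_succ_not hp]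
    exact h m hm hm2

lemma cov_all {a n0 : ℕ} (h0 : Cov a n0) (hS : ∀ n, n0 ≤ n → n + 243 ≤ S a n) (n : ℕ)
    (hn : n0 ≤ n) : Cov a n := by
  induction n, hn using Nat.le_induction with
  | base => exact h0
  | succ k hk ih => exact cov_succ ih (hS k hk)

lemma finish {a n0 : ℕ} (h0 : Cov a n0) (hS : ∀ n, n0 ≤ n → n + 243 ≤ S a n) (m : ℕ)
    (hm : 122 ≤ m) : ∃ T : Finset ℕ, T.Nonempty ∧ (∀ p ∈ T, p.Prime ∧ p % 4 = a) ∧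
      ∑ p ∈ T, p = m := by
  have h1 := hS (n0 + m) (by omega)
  obtain ⟨T, hT, hs⟩ := cov_all h0 hS (n0 + m) (by omega) m hm (by omega)
  refine ⟨T, ?_, fun p hp => ?_, hs⟩
  · rw [Finset.nonempty_iff_ne_empty]
    rintro rfl
    simp at hs
    omega
  · have := hT hp
    simp only [cl, Finset.mem_filter] at this
    exact this.2

/-- bit mask of subset sums -/
def mask : List ℕ → ℕ
  | [] => 1
  | p :: L => mask L ||| (mask L <<< p)

lemma mask_spec (L : List ℕ) (hL : L.Nodup) (m : ℕ) (h : (mask L).testBit m = true) :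
    ∃ T ⊆ L.toFinset, ∑ p ∈ T, p = m := by
  induction L generalizing m with
  | nil =>
    refine ⟨∅, by simp, ?_⟩
    cases m with
    | zero => simp
    | succ k => simp [mask, Nat.testBit_succ] at h
  | cons p L ih =>
    simp only [mask, Nat.testBit_or, Nat.testBit_shiftLeft, Bool.or_eq_true,
      Bool.and_eq_true, decide_eq_true_eq] at h
    rw [List.nodup_cons] at hL
    rcases h with h | ⟨h1, h⟩
    · obtain ⟨T, hT, hs⟩ := ih hL.2 m h
      exact ⟨T, hT.trans (by simp), hs⟩
    · obtain ⟨T, hT, hs⟩ := ih hL.2 _ h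
      refine ⟨insert p T, by simpa using Finset.insert_subset_insert p hT, ?_⟩
      rw [Finset.sum_insert (fun hh => hL.1 (by simpa using hT hh)), hs]
      omega

lemma cov_of_list {a n : ℕ} (L : List ℕ) (hL : L.Nodup) (hc : cl a n = L.toFinset) (s : ℕ)
    (hs : S a n = s) (h : ∀ m ∈ List.range (s - 121), m < 122 ∨ (mask L).testBit m = true) :
    Cov a n := by
  intro m h1 h2
  rw [hs] at h2
  rcases h m (by simp; omega) with h3 | h3
  · omega
  · rw [hc]
    exact mask_spec L hL m h3

def L1 : List ℕ := [5, 13, 17, 29, 37, 41, 53, 61, 73, 89, 97, 101, 109]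
def L3 : List ℕ := [3, 7, 11, 19, 23, 31, 43, 47, 59, 67, 71, 79, 83, 103, 107]

lemma cl1 : cl 1 110 = L1.toFinset := by decide +kernel
lemma cl3 : cl 3 110 = L3.toFinset := by decide +kernel
lemma S1 : S 1 110 = 725 := by rw [S, cl1]; decide +kernel
lemma S3 : S 3 110 = 753 := by rw [S, cl3]; decide +kernel
lemma cov1 : Cov 1 110 := cov_of_list L1 (by decide) cl1 725 S1 (by decide +kernel)
lemma cov3 : Cov 3 110 := cov_of_list L3 (by decide) cl3 753 S3 (by decide +kernel)

/-- modular power -/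
def pw (m : ℕ) : ℕ → ℕ → ℕ → ℕ
  | 0, _, _ => 1
  | k + 1, b, e =>
    if e % 2 = 1 then b * pw m k (b * b % m) (e / 2) % m else pw m k (b * b % m) (e / 2)

lemma pw_spec (m k b e : ℕ) (he : e < 2 ^ k) : ((pw m k b e : ℕ) : ZMod m) = (b : ZMod m) ^ e := by
  induction k generalizing b e with
  | zero => simp at he; simp [pw, he]
  | succ k ih =>
    have h2 : e / 2 < 2 ^ k := by rw [pow_succ] at he; omega
    have key := ih (b * b % m) (e / 2) h2
    rw [ZMod.natCast_mod, Nat.cast_mul, ← pow_two (b : ZMod m), ← pow_mul] at key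
    rw [pw]
    split_ifs with h
    · rw [ZMod.natCast_mod, Nat.cast_mul, key, ← pow_succ']
      congr 1; omega
    · rw [key]
      congr 1; omega

def val (t : ℕ × ℕ × ℕ × ℕ × ℕ) : ℕ := 2 ^ t.1 * 3 ^ t.2.1 * 5 ^ t.2.2.1 * 7 ^ t.2.2.2.1

def okq (n g q : ℕ) : Bool := n % q != 0 || pw (n + 1) 120 g (n / q) % (n + 1) != 1

def okp (n g : ℕ) : Bool :=
  decide (n < 2 ^ 120) && decide (1 < n) && (pw (n + 1) 120 g n % (n + 1) == 1) &&
    okq n g 2 && okq n g 3 && okq n g 5 && okq n g 7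

lemma okq_spec {n g q : ℕ} (hn : n < 2 ^ 120) (h1 : 1 < n) (h : okq n g q = true) (hq : q ∣ n) :
    (g : ZMod (n + 1)) ^ (n / q) ≠ 1 := by
  intro h2
  rw [← pw_spec (n + 1) 120 g (n / q) ((Nat.div_le_self _ _).trans_lt hn)] at h2
  have h3 : ((pw (n + 1) 120 g (n / q) : ℕ) : ZMod (n + 1)) = ((1 : ℕ) : ZMod (n + 1)) := by
    simpa using h2
  rw [ZMod.natCast_eq_natCast_iff', Nat.mod_eq_of_lt (show 1 < n + 1 by omega)] at h3
  simp [okq, Nat.mod_eq_zero_of_dvd hq, h3] at h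

lemma okp_spec (t : ℕ × ℕ × ℕ × ℕ × ℕ) (h : okp (val t) t.2.2.2.2 = true) :
    (val t + 1).Prime := by
  simp only [okp, Bool.and_eq_true, decide_eq_true_eq, beq_iff_eq] at h
  obtain ⟨⟨⟨⟨⟨⟨h1, h2⟩, h3⟩, q2⟩, q3⟩, q5⟩, q7⟩ := h
  refine lucas_primality _ (t.2.2.2.2 : ZMod (val t + 1)) ?_ ?_
  · rw [Nat.add_sub_cancel, ← pw_spec _ 120 _ _ h1]
    have : ((pw (val t + 1) 120 t.2.2.2.2 (val t) : ℕ) : ZMod (val t + 1))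
        = ((1 : ℕ) : ZMod (val t + 1)) := by
      rw [ZMod.natCast_eq_natCast_iff', h3, Nat.mod_eq_of_lt (by omega)]
    simpa using this
  · intro q hq hd
    rw [Nat.add_sub_cancel] at hd ⊢
    have hd' := hd
    rw [val, hq.dvd_mul, hq.dvd_mul, hq.dvd_mul] at hd'
    have aux : ∀ r k : ℕ, r.Prime → q ∣ r ^ k → q = r := fun r k hr hk =>
      (Nat.prime_dvd_prime_iff_eq hq hr).1 (hq.dvd_of_dvd_pow hk)
    rcases hd' with ((hd' | hd') | hd') | hd'
    · obtain rfl := aux _ _ (by norm_num) hd'; exact okq_spec h1 h2 q2 hd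
    · obtain rfl := aux _ _ (by norm_num) hd'; exact okq_spec h1 h2 q3 hd
    · obtain rfl := aux _ _ (by norm_num) hd'; exact okq_spec h1 h2 q5 hd
    · obtain rfl := aux _ _ (by norm_num) hd'; exact okq_spec h1 h2 q7 hd

def chain (a : ℕ) : ℕ → List (ℕ × ℕ × ℕ × ℕ × ℕ) → Bool
  | c, [] => decide (2 ^ 106 < c)
  | c, t :: L => decide (110 ≤ val t + 1) && decide ((val t + 1) % 4 = a) &&
      decide (val t + 1 ≤ c) && okp (val t) t.2.2.2.2 && chain a (2 * (val t + 1)) L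

lemma chain_spec (a : ℕ) (L : List (ℕ × ℕ × ℕ × ℕ × ℕ)) (c : ℕ) (h : chain a c L = true)
    (hc : ∀ n, 110 ≤ n → n ≤ c → n + 243 ≤ S a n) :
    ∀ n, 110 ≤ n → n ≤ 2 ^ 106 → n + 243 ≤ S a n := by
  induction L generalizing c with
  | nil =>
    simp only [chain, decide_eq_true_eq] at h
    intro n h1 h2
    exact hc n h1 (h2.trans h.le)
  | cons t L ih =>
    simp only [chain, Bool.and_eq_true, decide_eq_true_eq] at h
    obtain ⟨⟨⟨⟨h0, h1⟩, h2⟩, h3⟩, h4⟩ := h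
    have hp := okp_spec t h3
    refine ih _ h4 fun n hn hn2 => ?_
    by_cases hlt : n ≤ val t + 1
    · exact hc n hn (hlt.trans h2)
    · have e1 := hc _ h0 h2
      have e2 := S_succ_of ⟨hp, h1⟩
      have e3 := S_mono a (show val t + 1 + 1 ≤ n by omega)
      omega

def tab1 : List (ℕ × ℕ × ℕ × ℕ × ℕ) :=
  [(6,0,0,1,3), (8,1,0,0,11), (2,0,0,3,2), (7,1,0,1,19), (2,5,1,0,11), (3,5,1,0,7), (4,5,1,0,13), 
(8,1,0,2,5), (2,6,2,0,2), (2,1,1,4,2), (13,0,1,1,11), (2,2,6,0,14), (3,2,6,0,7), (3,2,4,2,13), 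
(5,9,0,1,5), (5,7,3,0,14), (6,7,3,0,11), (2,11,0,2,11), (5,5,2,3,22), (16,4,2,0,7), 
(17,4,2,0,11), (2,2,3,6,10), (8,3,5,2,11), (25,2,0,1,5), (4,3,10,0,13), (10,1,8,1,37), 
(6,5,5,3,11), (2,12,6,0,6), (8,2,1,8,11), (19,4,5,0,17), (25,2,3,1,11), (15,1,6,3,17), 
(6,7,5,4,11), (7,4,1,9,13), (13,5,3,5,11), (9,17,3,0,7), (7,1,14,1,17), (15,5,1,7,19), 
(16,5,1,7,11), (17,5,1,7,11), (17,6,8,1,17), (19,13,4,0,7), (5,18,1,5,17), (11,19,3,1,13), 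
(21,3,4,6,17), (11,2,7,8,17), (13,9,3,7,22), (20,17,1,2,13), (29,2,9,1,13), (4,9,13,3,13), 
(21,8,8,2,34), (33,6,1,5,41), (7,6,9,8,11), (3,7,2,15,19), (5,25,5,2,11), (15,9,6,7,11), 
(16,9,6,7,29), (13,23,3,3,19), (14,23,3,3,26), (45,7,1,3,11), (5,22,6,5,13), (12,30,4,0,7), 
(25,1,15,3,13), (28,4,0,13,10), (4,18,0,14,11), (5,18,0,14,11), (25,4,5,11,22), (2,2,30,0,2), 
(6,1,4,21,11), (48,5,9,0,17), (2,12,16,7,2), (4,8,5,18,19), (5,19,12,6,29), (6,19,12,6,37), 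
(19,24,1,8,46), (33,2,8,10,23), (31,26,5,0,7), (2,5,25,6,2), (9,13,23,1,23), (12,16,8,11,13), 
(27,1,11,12,13), (49,1,8,7,23), (8,9,17,10,19), (3,46,4,2,39), (17,24,11,4,38), (28,4,1,20,13), 
(35,23,6,3,13), (92,0,0,1,3), (10,1,0,30,17), (10,16,18,7,29), (12,23,14,6,11), (65,6,2,7,38), 
(34,5,8,14,11), (44,0,16,7,6), (9,5,16,17,34), (67,0,13,2,13), (65,13,3,4,11), (28,4,11,16,19), 
(87,6,4,0,14), (37,19,5,10,11)]
def tab3 : List (ℕ × ℕ × ℕ × ℕ × ℕ) :=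
  [(1,3,0,1,2), (1,1,3,0,3), (1,1,1,2,6), (1,3,0,2,3), (1,4,2,0,10), (1,1,2,2,6), (1,1,0,4,19), 
(1,4,2,1,6), (1,6,1,1,3), (1,0,3,3,14), (1,0,1,5,7), (1,8,2,0,2), (1,5,2,2,7), (1,0,7,1,7), 
(1,2,6,1,6), (1,4,5,1,6), (1,5,1,4,3), (1,2,1,6,3), (1,5,3,3,7), (1,5,1,5,12), (1,10,4,0,2), 
(1,5,3,4,3), (1,8,5,1,3), (1,10,4,1,6), (1,5,3,5,2), (1,6,5,3,3), (1,1,10,2,3), (1,1,8,4,3), 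
(1,11,4,2,14), (1,1,4,8,12), (1,11,0,6,5), (1,19,1,1,3), (1,9,1,7,7), (1,22,1,0,3), (1,12,1,6,7), 
(1,20,2,1,13), (1,2,5,9,7), (1,6,5,7,3), (1,6,3,9,3), (1,14,4,4,3), (1,3,1,13,2), (1,4,14,2,3), 
(1,9,11,2,3), (1,1,12,6,12), (1,0,7,11,7), (1,3,9,8,3), (1,11,10,3,3), (1,13,3,8,3), 
(1,8,2,12,2), (1,24,6,0,14), (1,1,10,10,14), (1,2,17,4,3), (1,7,14,4,6), (1,7,12,6,14), 
(1,5,15,5,22), (1,8,17,2,2), (1,5,11,9,2), (1,3,14,8,14), (1,3,12,10,3), (1,7,0,18,11), 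
(1,19,14,0,7), (1,3,6,16,11), (1,1,9,15,2), (1,12,14,5,3), (1,2,14,11,3), (1,3,21,5,2), 
(1,15,12,6,11), (1,9,2,18,3), (1,4,1,22,12), (1,2,4,21,3), (1,4,26,2,7), (1,28,4,7,3), 
(1,28,2,9,3), (1,18,2,15,11), (1,16,5,14,7), (1,4,16,12,3), (1,20,20,0,3), (1,10,20,6,2), 
(1,37,2,6,3), (1,32,1,10,7), (1,38,7,2,3), (1,8,17,11,3), (1,13,14,11,2), (1,10,8,18,2), 
(1,29,16,1,2), (1,11,19,9,23), (1,21,15,7,2), (1,23,8,12,7), (1,29,14,4,7), (1,0,33,5,7), 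
(1,5,1,29,3), (1,24,9,12,3), (1,35,14,2,6), (1,14,7,20,3), (1,12,10,19,3), (1,27,5,15,2), 
(1,30,7,12,15), (1,33,9,9,10), (1,31,12,8,6), (1,2,31,9,3), (1,39,11,5,2), (1,3,36,5,12), 
(1,8,4,29,3), (1,27,12,12,6), (1,25,15,11,7)]

lemma small1 : ∀ n, 110 ≤ n → n ≤ 2 ^ 106 → n + 243 ≤ S 1 n :=
  chain_spec 1 tab1 482 (by decide +kernel) fun n h1 h2 => by
    have := S_mono 1 h1
    rw [S1] at this
    omega

lemma small3 : ∀ n, 110 ≤ n → n ≤ 2 ^ 106 → n + 243 ≤ S 3 n :=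
  chain_spec 3 tab3 482 (by decide +kernel) fun n h1 h2 => by
    have := S_mono 3 h1
    rw [S3] at this
    omega


section

noncomputable def X (n : ℕ) : ℝ := if n % 4 = 1 ∨ n % 4 = 2 then 1 else 0

noncomputable def chi (n : ℕ) : ℝ := if n % 4 = 1 then 1 else if n % 4 = 3 then -1 else 0

lemma X_nonneg (n : ℕ) : 0 ≤ X n := by unfold X; split_ifs <;> norm_num
lemma X_le (n : ℕ) : X n ≤ 1 := by unfold X; split_ifs <;> norm_num
lemma X_succ (n : ℕ) : X (n + 1) = X n + chi (n + 1) := by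
  have : n % 4 = 0 ∨ n % 4 = 1 ∨ n % 4 = 2 ∨ n % 4 = 3 := by omega
  rcases this with h | h | h | h <;> simp [X, chi, Nat.add_mod, h]

lemma chi_mul (m n : ℕ) : chi (m * n) = chi m * chi n := by
  have h1 : m % 4 = 0 ∨ m % 4 = 1 ∨ m % 4 = 2 ∨ m % 4 = 3 := by omega
  have h2 : n % 4 = 0 ∨ n % 4 = 1 ∨ n % 4 = 2 ∨ n % 4 = 3 := by omega
  rcases h1 with h | h | h | h <;> rcases h2 with h' | h' | h' | h' <;>
    simp [chi, Nat.mul_mod, h, h']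

lemma abs_chi_le (n : ℕ) : |chi n| ≤ 1 := by
  unfold chi; split_ifs <;> norm_num

lemma alt (f : ℕ → ℝ) (a b : ℕ) (hab : a ≤ b) (hf : ∀ n, a < n → f (n + 1) ≤ f n)
    (h0 : ∀ n, a < n → 0 ≤ f n) : |∑ n ∈ Finset.Ioc a b, chi n * f n| ≤ f (a + 1) := by
  have key : 0 ≤ ∑ n ∈ Finset.Ioc a b, chi n * f n - X b * f (b + 1) + X a * f (a + 1) ∧
      ∑ n ∈ Finset.Ioc a b, chi n * f n - X b * f (b + 1) + X a * f (a + 1)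
        ≤ f (a + 1) - f (b + 1) := by
    induction b, hab using Nat.le_induction with
    | base => simp
    | succ b hb ih =>
      rw [← Finset.insert_Ioc_right_eq_Ioc_add_one (by omega), Finset.sum_insert (by simp), X_succ]
      have h1 := hf (b + 1) (by omega)
      have hx := X_nonneg (b + 1)
      have hx' := X_le (b + 1)
      rw [X_succ] at hx hx'
      constructor <;> nlinarith [mul_nonneg hx (sub_nonneg.2 h1),
        mul_nonneg (sub_nonneg.2 hx') (sub_nonneg.2 h1)]
  have hb := h0 (b + 1) (by omega)
  have ha := h0 (a + 1) (by omega)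
  have := mul_nonneg (X_nonneg b) hb
  have := mul_nonneg (X_nonneg a) ha
  have := mul_nonneg (sub_nonneg.2 (X_le b)) hb
  have := mul_nonneg (sub_nonneg.2 (X_le a)) ha
  rw [abs_le]
  constructor <;> nlinarith

noncomputable def G (N : ℕ) : ℝ := ∑ n ∈ Finset.Ioc 0 N, chi n * (1 / (n : ℝ))

lemma G_diff {k N : ℕ} (h : k ≤ N) : |G N - G k| ≤ 1 / ((k : ℝ) + 1) := by
  have h1 := alt (fun n => 1 / (n : ℝ)) k N h (fun n hn => by
      have : (0 : ℝ) < n := by exact_mod_cast (by omega)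
      apply one_div_le_one_div_of_le this; push_cast; linarith) (fun n hn => by positivity)
  have h2 : G N - G k = ∑ n ∈ Finset.Ioc k N, chi n * (1 / (n : ℝ)) := by
    rw [G, G, ← Finset.sum_Ioc_consecutive _ (Nat.zero_le k) h]; ring
  rw [h2]
  simpa using h1

lemma G_ge {N : ℕ} (h : 2 ≤ N) : 2 / 3 ≤ G N := by
  have h1 := (abs_le.1 (G_diff h)).1
  have h2 : G 2 = 1 := by
    have : Finset.Ioc 0 2 = {1, 2} := by decide
    simp [G, this, chi]
  rw [h2] at h1
  norm_num at h1
  linarith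

lemma log_sum {N : ℕ} (h : 2 ≤ N) :
    |∑ n ∈ Finset.Ioc 0 N, chi n * (Real.log n / n)| ≤ 2 / 3 := by
  rw [← Finset.sum_Ioc_consecutive _ (Nat.zero_le 2) h]
  have h2 : ∑ n ∈ Finset.Ioc 0 2, chi n * (Real.log n / n) = 0 := by
    have : Finset.Ioc 0 2 = {1, 2} := by decide
    simp [this, chi]
  rw [h2, zero_add]
  refine (alt (fun n => Real.log n / n) 2 N h (fun n hn => ?_) (fun n hn => ?_)).trans ?_
  · have h3 : Real.exp 1 ≤ (n : ℝ) := by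
      have : (3 : ℝ) ≤ n := by exact_mod_cast hn
      linarith [Real.exp_one_lt_d9]
    exact Real.log_div_self_antitoneOn h3 (show Real.exp 1 ≤ ((n + 1 : ℕ) : ℝ) by
      push_cast; linarith) (by push_cast; linarith)
  · exact div_nonneg (Real.log_natCast_nonneg n) (by positivity)
  · have := Real.log_le_sub_one_of_pos (show (0 : ℝ) < 3 by norm_num)
    norm_num
    linarith

open ArithmeticFunction in
noncomputable def fA : ArithmeticFunction ℝ := ⟨fun n => chi n * (vonMangoldt n / n), by simp⟩

open ArithmeticFunction in
noncomputable def gA : ArithmeticFunction ℝ := ⟨fun n => chi n * (1 / n), by simp⟩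

lemma fA_mul_gA (n : ℕ) : (fA * gA) n = chi n * (Real.log n / n) := by
  rw [ArithmeticFunction.mul_apply, ← ArithmeticFunction.vonMangoldt_sum,
    ← Nat.map_div_right_divisors, Finset.sum_map, Finset.sum_div, Finset.mul_sum]
  apply Finset.sum_congr rfl
  intro d hd
  obtain ⟨⟨e, rfl⟩, h0⟩ := Nat.mem_divisors.1 hd
  have hd0 : d ≠ 0 := by rintro rfl; simp at h0
  have he0 : e ≠ 0 := by rintro rfl; simp at h0
  have hd1 : (d : ℝ) ≠ 0 := by exact_mod_cast hd0
  have he1 : (e : ℝ) ≠ 0 := by exact_mod_cast he0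
  change chi d * (ArithmeticFunction.vonMangoldt d / d) *
    (chi (d * e / d) * (1 / ((d * e / d : ℕ) : ℝ))) = _
  rw [Nat.mul_div_cancel_left _ (Nat.pos_of_ne_zero hd0), chi_mul]
  push_cast
  field_simp

noncomputable def B : ℝ := Real.log 4 + 4

lemma psi_le' (N : ℕ) : ∑ n ∈ Finset.Ioc 0 N, ArithmeticFunction.vonMangoldt n ≤ B * N := by
  have := Chebyshev.psi_le_const_mul_self (x := N) (by positivity)
  simpa [Chebyshev.psi, B] using this

noncomputable def Q (N : ℕ) : ℝ :=
  ∑ n ∈ Finset.Ioc 0 N, chi n * (ArithmeticFunction.vonMangoldt n / n)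

lemma Q_bound {N : ℕ} (h : 2 ≤ N) : |Q N| ≤ 1 + 3 / 2 * B := by
  have hN : (0 : ℝ) < N := by exact_mod_cast (by omega)
  have e1 : ∑ n ∈ Finset.Ioc 0 N, chi n * (Real.log n / n) =
      ∑ n ∈ Finset.Ioc 0 N, fA n * G (N / n) := by
    simp_rw [← fA_mul_gA]
    rw [ArithmeticFunction.sum_Ioc_mul_eq_sum_sum]
    rfl
  have e2 : G N * Q N = ∑ n ∈ Finset.Ioc 0 N, chi n * (Real.log n / n) +
      ∑ n ∈ Finset.Ioc 0 N, fA n * (G N - G (N / n)) := by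
    rw [e1, Q, Finset.mul_sum, ← Finset.sum_add_distrib]
    apply Finset.sum_congr rfl
    intro n _
    simp only [fA, ArithmeticFunction.coe_mk]
    ring
  have e3 : |∑ n ∈ Finset.Ioc 0 N, fA n * (G N - G (N / n))| ≤ B := by
    refine (Finset.abs_sum_le_sum_abs _ _).trans ?_
    have : ∑ n ∈ Finset.Ioc 0 N, |fA n * (G N - G (N / n))| ≤
        ∑ n ∈ Finset.Ioc 0 N, ArithmeticFunction.vonMangoldt n / N := by
      apply Finset.sum_le_sum
      intro n hn
      rw [Finset.mem_Ioc] at hn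
      have hn0 : (0 : ℝ) < n := by exact_mod_cast hn.1
      have hL : 0 ≤ ArithmeticFunction.vonMangoldt n := ArithmeticFunction.vonMangoldt_nonneg
      have a1 := G_diff (Nat.div_le_self N n)
      have a2 : 1 / (((N / n : ℕ) : ℝ) + 1) ≤ n / N := by
        rw [div_le_div_iff₀ (by positivity) hN]
        have : N < n * (N / n + 1) := by
          have := Nat.lt_mul_div_succ N hn.1
          simpa using this
        have : (N : ℝ) < n * ((N / n : ℕ) + 1) := by exact_mod_cast this
        linarith
      have a3 : |fA n| ≤ ArithmeticFunction.vonMangoldt n / n := by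
        simp only [fA, ArithmeticFunction.coe_mk, abs_mul]
        rw [abs_of_nonneg (div_nonneg hL hn0.le)]
        have := mul_le_mul_of_nonneg_right (abs_chi_le n) (div_nonneg hL hn0.le)
        linarith
      rw [abs_mul]
      calc _ ≤ ArithmeticFunction.vonMangoldt n / n * (n / N) :=
            mul_le_mul a3 (a1.trans a2) (abs_nonneg _) (div_nonneg hL hn0.le)
        _ = _ := by field_simp
    refine this.trans ?_
    rw [← Finset.sum_div, div_le_iff₀ hN]
    exact psi_le' N
  have e4 := log_sum h
  have e5 := G_ge h
  have e6 : G N * |Q N| ≤ 2 / 3 + B := by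
    rw [← abs_of_nonneg (show 0 ≤ G N by linarith), ← abs_mul, e2]
    exact (abs_add_le _ _).trans (add_le_add e4 e3)
  nlinarith [abs_nonneg (Q N)]

noncomputable def M (N : ℕ) : ℝ := ∑ n ∈ Finset.Ioc 0 N, ArithmeticFunction.vonMangoldt n / n

lemma log_fact (N : ℕ) : Real.log (N.factorial) =
    ∑ n ∈ Finset.Ioc 0 N, ArithmeticFunction.vonMangoldt n * ((N / n : ℕ) : ℝ) := by
  rw [← ArithmeticFunction.sum_Ioc_mul_zeta_eq_sum, ArithmeticFunction.vonMangoldt_mul_zeta]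
  induction N with
  | zero => simp
  | succ k ih =>
    rw [← Finset.insert_Ioc_right_eq_Ioc_add_one (by omega), Finset.sum_insert (by simp), ← ih,
      Nat.factorial_succ, Nat.cast_mul, Real.log_mul (by positivity) (by positivity)]
    simp

lemma M_bounds {N : ℕ} (h : 1 ≤ N) : Real.log N - 1 ≤ M N ∧ M N ≤ Real.log N + B := by
  have hN : (0 : ℝ) < N := by exact_mod_cast h
  have hlf := log_fact N
  constructor
  · have h1 : N * Real.log N - N ≤ Real.log N.factorial := by
      have := Stirling.le_log_factorial_stirling (n := N) (by omega)
      have h2 := Real.log_natCast_nonneg N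
      have h3 : 0 ≤ Real.log (2 * Real.pi) := Real.log_nonneg (by linarith [Real.pi_gt_three])
      linarith
    have h2 : Real.log N.factorial ≤ N * M N := by
      rw [hlf, M, Finset.mul_sum]
      apply Finset.sum_le_sum
      intro n hn
      have hL : 0 ≤ ArithmeticFunction.vonMangoldt n := ArithmeticFunction.vonMangoldt_nonneg
      have : ((N / n : ℕ) : ℝ) ≤ N / n := Nat.cast_div_le
      calc _ ≤ ArithmeticFunction.vonMangoldt n * (N / n) := mul_le_mul_of_nonneg_left this hL
        _ = _ := by ring
    have : N * (Real.log N - 1) ≤ N * M N := by linarith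
    exact le_of_mul_le_mul_left this hN
  · have h1 : Real.log N.factorial ≤ N * Real.log N := by
      rw [← Real.log_pow]
      apply Real.log_le_log (by positivity)
      exact_mod_cast Nat.factorial_le_pow N
    have h2 : N * M N ≤ Real.log N.factorial + B * N := by
      have : N * M N ≤ Real.log N.factorial +
          ∑ n ∈ Finset.Ioc 0 N, ArithmeticFunction.vonMangoldt n := by
        rw [hlf, M, Finset.mul_sum, ← Finset.sum_add_distrib]
        apply Finset.sum_le_sum
        intro n hn
        rw [Finset.mem_Ioc] at hn
        have hn0 : (0 : ℝ) < n := by exact_mod_cast hn.1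
        have hL : 0 ≤ ArithmeticFunction.vonMangoldt n := ArithmeticFunction.vonMangoldt_nonneg
        have a2 : (N : ℝ) / n ≤ (N / n : ℕ) + 1 := by
          rw [div_le_iff₀ hn0]
          have : N < n * (N / n + 1) := by
            have := Nat.lt_mul_div_succ N hn.1
            simpa using this
          have : (N : ℝ) < n * ((N / n : ℕ) + 1) := by exact_mod_cast this
          linarith
        calc _ = ArithmeticFunction.vonMangoldt n * (N / n) := by ring
          _ ≤ ArithmeticFunction.vonMangoldt n * ((N / n : ℕ) + 1) :=
            mul_le_mul_of_nonneg_left a2 hL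
          _ = _ := by ring
      linarith [psi_le' N]
    have : N * M N ≤ N * (Real.log N + B) := by linarith
    exact le_of_mul_le_mul_left this hN

/-- prime powers -/
lemma tele (N : ℕ) : ∑ n ∈ Finset.Ioc 1 N, Real.log n / (n * (n - 1)) ≤ 2 := by
  have key : ∀ N : ℕ, 1 ≤ N → ∑ n ∈ Finset.Ioc 1 N, Real.log n / (n * (n - 1))
      ≤ 2 - (Real.log N + 2) / N := by
    intro N hN
    induction N, hN using Nat.le_induction with
    | base => simp
    | succ k hk ih =>
      rw [← Finset.insert_Ioc_right_eq_Ioc_add_one (by omega), Finset.sum_insert (by simp)]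
      have hk0 : (1 : ℝ) ≤ k := by exact_mod_cast hk
      have hl : Real.log ((k : ℝ) + 1) - Real.log k ≤ 1 / k := by
        rw [← Real.log_div (by positivity) (by positivity)]
        have := Real.log_le_sub_one_of_pos (show (0 : ℝ) < (k + 1) / k by positivity)
        have e : ((k : ℝ) + 1) / k - 1 = 1 / k := by field_simp; ring
        linarith
      have goal2 : Real.log ((k : ℝ) + 1) / ((k + 1) * k) + (Real.log ((k : ℝ) + 1) + 2) / (k + 1)
          ≤ (Real.log k + 2) / k := by
        rw [div_add_div _ _ (by positivity) (by positivity),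
          div_le_div_iff₀ (by positivity) (by positivity)]
        have h3 : k * (Real.log ((k : ℝ) + 1) - Real.log k) ≤ 1 := by
          have := mul_le_mul_of_nonneg_left hl (show (0 : ℝ) ≤ k by linarith)
          have e : (k : ℝ) * (1 / k) = 1 := by field_simp
          linarith
        have h4 : Real.log ((k : ℝ) + 1) - Real.log k ≤ 1 :=
          hl.trans (by rw [div_le_one (by linarith)]; exact hk0)
        have h5 : 0 ≤ (k : ℝ) * (k + 1) * (2 - k * (Real.log ((k : ℝ) + 1) - Real.log k)
          - (Real.log ((k : ℝ) + 1) - Real.log k)) := by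
          apply mul_nonneg (by positivity); linarith
        nlinarith [h5]
      push_cast
      rw [add_sub_cancel_right]
      linarith
  rcases Nat.eq_zero_or_pos N with rfl | h
  · simp
  · refine (key N h).trans ?_
    have : 0 ≤ (Real.log N + 2) / N := div_nonneg (by linarith [Real.log_natCast_nonneg N])
      (by positivity)
    linarith

lemma nonprime (N : ℕ) :
    ∑ n ∈ (Finset.Ioc 0 N).filter (fun n => ¬ n.Prime), ArithmeticFunction.vonMangoldt n / n
      ≤ 2 := by
  have h1 : ∑ n ∈ (Finset.Ioc 0 N).filter (fun n => ¬ n.Prime),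
      ArithmeticFunction.vonMangoldt n / n =
      ∑ n ∈ (Finset.Ioc 0 N).filter (fun n => ¬ n.Prime ∧ IsPrimePow n),
      ArithmeticFunction.vonMangoldt n / n := by
    symm
    apply Finset.sum_subset
    · intro n hn
      simp only [Finset.mem_filter] at hn ⊢
      exact ⟨hn.1, hn.2.1⟩
    · intro n hn hn2
      simp only [Finset.mem_filter] at hn hn2
      have : ¬ IsPrimePow n := fun h => hn2 ⟨hn.1, hn.2, h⟩
      simp [ArithmeticFunction.vonMangoldt_apply, this]
  rw [h1]
  set P := (Finset.Ioc 1 N).filter Nat.Prime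
  have h2 : (Finset.Ioc 0 N).filter (fun n => ¬ n.Prime ∧ IsPrimePow n) ⊆
      (P ×ˢ Finset.Ico 2 (N + 2)).image (fun x => x.1 ^ x.2) := by
    intro n hn
    simp only [Finset.mem_filter, Finset.mem_Ioc] at hn
    obtain ⟨⟨h0, hN⟩, hnp, hpp⟩ := hn
    obtain ⟨p, k, hp, hk, rfl⟩ := (isPrimePow_nat_iff _).1 hpp
    have hk1 : k ≠ 1 := by rintro rfl; simp [hp] at hnp
    have hkk : k < p ^ k := Nat.lt_pow_self hp.one_lt
    have hpk : p ≤ p ^ k := Nat.le_self_pow (by omega) p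
    simp only [P, Finset.mem_filter, Finset.mem_Ioc, Finset.mem_image,
      Finset.mem_Ico, Finset.mem_product]
    exact ⟨(p, k), ⟨⟨⟨hp.one_lt, by omega⟩, hp⟩, ⟨by omega, by omega⟩⟩, rfl⟩
  have nn : ∀ n : ℕ, 0 ≤ ArithmeticFunction.vonMangoldt n / n := fun n =>
    div_nonneg ArithmeticFunction.vonMangoldt_nonneg (by positivity)
  refine (Finset.sum_le_sum_of_subset_of_nonneg h2 (fun n _ _ => nn n)).trans ?_
  rw [Finset.sum_image]
  · rw [Finset.sum_product]
    refine le_trans ?_ (tele N)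
    rw [Finset.sum_filter]
    apply Finset.sum_le_sum
    intro p hp
    rw [Finset.mem_Ioc] at hp
    have hp1 : (1 : ℝ) < p := by exact_mod_cast hp.1
    have hlog : 0 ≤ Real.log p := Real.log_natCast_nonneg p
    split_ifs with hpr
    · have e1 : ∑ k ∈ Finset.Ico 2 (N + 2),
          ArithmeticFunction.vonMangoldt (p ^ k) / ((p ^ k : ℕ) : ℝ) =
          Real.log p * ∑ k ∈ Finset.Ico 2 (N + 2), ((p : ℝ)⁻¹) ^ k := by
        rw [Finset.mul_sum]
        apply Finset.sum_congr rfl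
        intro k hk
        rw [Finset.mem_Ico] at hk
        rw [ArithmeticFunction.vonMangoldt_apply_pow (by omega),
          ArithmeticFunction.vonMangoldt_apply_prime hpr]
        push_cast
        rw [inv_pow, div_eq_mul_inv]
      have e2 := geom_sum_Ico_le_of_lt_one (m := 2) (n := N + 2) (x := (p : ℝ)⁻¹)
        (by positivity) (inv_lt_one_of_one_lt₀ hp1)
      simp only
      rw [e1]
      refine (mul_le_mul_of_nonneg_left e2 hlog).trans (le_of_eq ?_)
      have : (p : ℝ) - 1 ≠ 0 := by linarith
      have : 1 - (p : ℝ)⁻¹ ≠ 0 := by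
        have := inv_lt_one_of_one_lt₀ hp1
        linarith
      field_simp
    · exact div_nonneg hlog (mul_nonneg (by linarith) (by linarith))
  · rintro ⟨p, k⟩ h ⟨q, l⟩ h' heq
    simp only [P, Finset.coe_product, Set.mem_prod, Finset.mem_coe, Finset.mem_filter,
      Finset.mem_Ico] at h h' heq
    have := Nat.Prime.pow_inj' h.1.2 h'.1.2 (by omega) (by omega) heq
    exact Prod.ext this.1 this.2

lemma class_sum {a z y : ℕ} (ha : a = 1 ∨ a = 3) (hz : 2 ≤ z) (hzy : z ≤ y) :
    (Real.log y - Real.log z) / 2 - 7 / 2 - 2 * B ≤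
      ∑ p ∈ (Finset.Ioc z y).filter (fun p => p.Prime ∧ p % 4 = a), Real.log p / p := by
  have key : ∀ σ : ℝ, ((σ = 1 ∧ a = 1) ∨ (σ = -1 ∧ a = 3)) →
      ((M y - M z) + σ * (Q y - Q z)) / 2 ≤
      ∑ p ∈ (Finset.Ioc z y).filter (fun p => p.Prime ∧ p % 4 = a), Real.log p / p + 2 := by
    intro σ hσ
    have eM : M y - M z = ∑ n ∈ Finset.Ioc z y, ArithmeticFunction.vonMangoldt n / n := by
      rw [M, M, ← Finset.sum_Ioc_consecutive _ (Nat.zero_le z) hzy]; ring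
    have eQ : Q y - Q z =
        ∑ n ∈ Finset.Ioc z y, chi n * (ArithmeticFunction.vonMangoldt n / n) := by
      rw [Q, Q, ← Finset.sum_Ioc_consecutive _ (Nat.zero_le z) hzy]; ring
    have h2 : ∑ n ∈ (Finset.Ioc z y).filter (fun n => ¬ n.Prime),
        ArithmeticFunction.vonMangoldt n / n ≤ 2 := by
      refine le_trans ?_ (nonprime y)
      apply Finset.sum_le_sum_of_subset_of_nonneg
      · apply Finset.filter_subset_filter
        exact Finset.Ioc_subset_Ioc_left (Nat.zero_le z)
      · intro n _ _
        exact div_nonneg ArithmeticFunction.vonMangoldt_nonneg (by positivity)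
    refine le_trans ?_ (add_le_add_right h2 _)
    rw [eM, eQ, Finset.mul_sum, ← Finset.sum_add_distrib, Finset.sum_div, Finset.sum_filter,
      Finset.sum_filter, ← Finset.sum_add_distrib]
    apply Finset.sum_le_sum
    intro n hn
    rw [Finset.mem_Ioc] at hn
    have hL : 0 ≤ ArithmeticFunction.vonMangoldt n / n :=
      div_nonneg ArithmeticFunction.vonMangoldt_nonneg (by positivity)
    by_cases hp : n.Prime
    · have hodd := hp.eq_two_or_odd
      have h4 : n % 4 = 1 ∨ n % 4 = 3 := by omega
      rw [ArithmeticFunction.vonMangoldt_apply_prime hp]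
      rcases hσ with ⟨rfl, rfl⟩ | ⟨rfl, rfl⟩ <;> rcases h4 with h4 | h4 <;>
        simp [hp, h4, chi]
    · have hc := abs_le.1 (abs_chi_le n)
      simp only [hp, not_false_eq_true, if_true, false_and, if_false, zero_add]
      rcases hσ with ⟨rfl, rfl⟩ | ⟨rfl, rfl⟩ <;> nlinarith
  have hMy := M_bounds (show 1 ≤ y by omega)
  have hMz := M_bounds (show 1 ≤ z by omega)
  have hQy := abs_le.1 (Q_bound (show 2 ≤ y by omega))
  have hQz := abs_le.1 (Q_bound hz)
  rcases ha with h | h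
  · have := key 1 (Or.inl ⟨rfl, h⟩)
    linarith
  · have := key (-1) (Or.inr ⟨rfl, h⟩)
    linarith

lemma large_aux {a s : ℕ} (ha : a = 1 ∨ a = 3) (hs : 2 ^ 53 ≤ s) :
    (s + 1) ^ 2 + 243 ≤ S a (s ^ 2 + 1) := by
  have hs' : (2 : ℝ) ^ 53 ≤ s := by exact_mod_cast hs
  have hs0 : (0 : ℝ) < s := lt_of_lt_of_le (by positivity) hs'
  have hc := class_sum ha (z := 6 * s) (y := s ^ 2) (by omega) (by nlinarith)
  set A := ∑ p ∈ (Finset.Ioc (6 * s) (s ^ 2)).filter (fun p => p.Prime ∧ p % 4 = a),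
    Real.log p / p with hA
  have hlog : 53 * Real.log 2 ≤ Real.log s := by
    have := Real.log_le_log (by positivity) hs'
    rwa [Real.log_pow] at this
  have h6 : Real.log 6 ≤ 3 * Real.log 2 := by
    have := Real.log_le_log (by norm_num) (show (6 : ℝ) ≤ 2 ^ 3 by norm_num)
    rwa [Real.log_pow] at this
  have h4 : Real.log 4 = 2 * Real.log 2 := by
    rw [show (4 : ℝ) = 2 ^ 2 by norm_num, Real.log_pow]; norm_num
  have l1 := Real.log_two_gt_d9
  have l2 := Real.log_two_lt_d9
  have hlp : 0 < Real.log s := by linarith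
  push_cast at hc
  rw [Real.log_pow, Real.log_mul (by norm_num) hs0.ne', B, h4] at hc
  push_cast at hc
  have hA1 : Real.log s / 16 ≤ A := by linarith
  have hA2 : A ≤ (S a (s ^ 2 + 1) : ℝ) * (2 * Real.log s / (36 * s ^ 2)) := by
    have e : A ≤ ∑ p ∈ (Finset.Ioc (6 * s) (s ^ 2)).filter (fun p => p.Prime ∧ p % 4 = a),
        (p : ℝ) * (2 * Real.log s / (36 * s ^ 2)) := by
      rw [hA]
      apply Finset.sum_le_sum
      intro p hp
      simp only [Finset.mem_filter, Finset.mem_Ioc] at hp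
      have hp1 : 6 * (s : ℝ) ≤ p := by exact_mod_cast hp.1.1.le
      have hp2 : (p : ℝ) ≤ s ^ 2 := by exact_mod_cast hp.1.2
      have hp0 : (0 : ℝ) < p := by linarith
      have hl : Real.log p ≤ 2 * Real.log s := by
        have := Real.log_le_log hp0 hp2
        rw [Real.log_pow] at this
        exact_mod_cast this
      have hsq : 36 * (s : ℝ) ^ 2 ≤ p ^ 2 := by nlinarith
      rw [mul_div_assoc', div_le_div_iff₀ hp0 (by positivity)]
      calc Real.log p * (36 * (s : ℝ) ^ 2) ≤ (2 * Real.log s) * p ^ 2 :=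
            mul_le_mul hl hsq (by positivity) (by positivity)
        _ = _ := by ring
    refine e.trans ?_
    rw [← Finset.sum_mul]
    apply mul_le_mul_of_nonneg_right _ (by positivity)
    rw [← Nat.cast_sum, S]
    norm_cast
    apply Finset.sum_le_sum_of_subset
    intro p hp
    simp only [cl, Finset.mem_filter, Finset.mem_Ioc, Finset.mem_range] at hp ⊢
    exact ⟨by omega, hp.2⟩
  have h3 := hA1.trans hA2
  rw [mul_div_assoc', div_le_div_iff₀ (by norm_num) (by positivity)] at h3
  have h5 : 9 / 8 * (s : ℝ) ^ 2 ≤ S a (s ^ 2 + 1) := by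
    have : Real.log s * (36 * (s : ℝ) ^ 2) ≤ Real.log s * (32 * S a (s ^ 2 + 1)) := by linarith
    have := le_of_mul_le_mul_left this hlp
    linarith
  have h7 : ((s : ℝ) + 1) ^ 2 + 243 ≤ S a (s ^ 2 + 1) := by
    refine le_trans ?_ h5
    have hs2 : (1000 : ℝ) ≤ s := le_trans (by norm_num) hs'
    nlinarith
  exact_mod_cast h7

lemma large {a n : ℕ} (ha : a = 1 ∨ a = 3) (hn : 2 ^ 106 < n) : n + 243 ≤ S a n := by
  have h1 : 2 ^ 53 ≤ (n - 1).sqrt := by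
    rw [Nat.le_sqrt]
    omega
  have h2 := large_aux ha h1
  have h3 := Nat.sqrt_le' (n - 1)
  have h4 := Nat.lt_succ_sqrt' (n - 1)
  have h5 := S_mono a (show (n - 1).sqrt ^ 2 + 1 ≤ n by omega)
  rw [Nat.succ_eq_add_one] at h4
  omega

end

end MSum

/-- **Corollary 1.**
For every integer `m ≥ 122`, there are a nonempty finite set of distinct primes all
congruent to `1` modulo `4` and a nonempty finite set of distinct primes all congruent
to `3` modulo `4`, each summing to `m`. -/
theorem stmt8 (m : ℕ) (hm : 122 ≤ m) :
    ∃ T₁ T₂ : Finset ℕ, T₁.Nonempty ∧ T₂.Nonempty ∧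
      (∀ p ∈ T₁, p.Prime ∧ p % 4 = 1) ∧ (∀ q ∈ T₂, q.Prime ∧ q % 4 = 3) ∧
      ∑ p ∈ T₁, p = m ∧ ∑ q ∈ T₂, q = m := by
  obtain ⟨T₁, h1, h2, h3⟩ := MSum.finish MSum.cov1 (fun n hn => by
    by_cases h : n ≤ 2 ^ 106
    · exact MSum.small1 n hn h
    · exact MSum.large (Or.inl rfl) (by omega)) m hm
  obtain ⟨T₂, h4, h5, h6⟩ := MSum.finish MSum.cov3 (fun n hn => by
    by_cases h : n ≤ 2 ^ 106
    · exact MSum.small3 n hn h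
    · exact MSum.large (Or.inr rfl) (by omega)) m hm
  exact ⟨T₁, T₂, h1, h4, h2, h5, h3, h6⟩
end
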